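/- arXiv:1903.01174 — 4 statements merged into one kernel-verified Lean document; each statement's English description precedes it below -/
import Mathlib

section
/- Let U ⊆ ℂ be an open set and let F : U → ℝ be a C^∞-smooth function. Suppose there exist functions A, B, C, D holomorphic on U such that F_{zz} = A·(F_z)³ + B·(F_z)² + C·F_z + D holds at every point of U (where F is viewed as a ℂ-valued function via ℝ ⊆ ℂ). Then F is real-analytic on U. -/
open Complex

/-- The Wirtinger derivative `g_z = (1/2)(∂g/∂x - i ∂g/∂y)` of a function `g : ℂ → ℂ`,
computed from the real Fréchet derivative. -/
noncomputable def wirtingerZ (g : ℂ → ℂ) : ℂ → ℂ :=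
  fun z => (1 / 2 : ℂ) * (fderiv ℝ g z 1 - Complex.I * fderiv ℝ g z Complex.I)

/-- The conjugate Wirtinger derivative `g_z̄ = (1/2)(∂g/∂x + i ∂g/∂y)`. -/
noncomputable def wirtingerZbar (g : ℂ → ℂ) : ℂ → ℂ :=
  fun z => (1 / 2 : ℂ) * (fderiv ℝ g z 1 + Complex.I * fderiv ℝ g z Complex.I)

open scoped ContDiff Topology
open Set Filter

/-- Fréchet derivative in terms of the Wirtinger derivatives. -/
lemma fderiv_eq_wirtinger (g : ℂ → ℂ) (z v : ℂ) :
    fderiv ℝ g z v = wirtingerZ g z * v + wirtingerZbar g z * (starRingEnd ℂ) v := by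
  have hv : v = v.re • (1 : ℂ) + v.im • Complex.I := by
    apply Complex.ext <;> simp
  conv_lhs => rw [hv]
  rw [map_add, map_smul, map_smul]
  unfold wirtingerZ wirtingerZbar
  have h1 : (starRingEnd ℂ) v = (v.re : ℂ) - v.im * Complex.I := by
    apply Complex.ext <;> simp
  have h2 : v = (v.re : ℂ) + v.im * Complex.I := by
    apply Complex.ext <;> simp
  rw [h1]
  conv_rhs => enter [1, 2]; rw [h2]
  simp only [Complex.real_smul]
  linear_combination (v.im : ℂ) * (fderiv ℝ g z Complex.I) * (Complex.I_sq)

lemma wZbar_add {f g : ℂ → ℂ} {z : ℂ} (hf : DifferentiableAt ℝ f z)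
    (hg : DifferentiableAt ℝ g z) :
    wirtingerZbar (fun w => f w + g w) z = wirtingerZbar f z + wirtingerZbar g z := by
  unfold wirtingerZbar
  rw [fderiv_fun_add hf hg]
  simp only [add_apply]
  ring

lemma wZbar_mul {f g : ℂ → ℂ} {z : ℂ} (hf : DifferentiableAt ℝ f z)
    (hg : DifferentiableAt ℝ g z) :
    wirtingerZbar (fun w => f w * g w) z
      = f z * wirtingerZbar g z + g z * wirtingerZbar f z := by
  unfold wirtingerZbar
  rw [fderiv_fun_mul hf hg]
  simp only [add_apply, smul_apply, smul_eq_mul]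
  ring

lemma wZbar_hol {f : ℂ → ℂ} {z : ℂ} (hf : DifferentiableAt ℂ f z) :
    wirtingerZbar f z = 0 := by
  unfold wirtingerZbar
  rw [hf.fderiv_restrictScalars ℝ]
  simp only [ContinuousLinearMap.coe_restrictScalars']
  have : fderiv ℂ f z Complex.I = Complex.I * fderiv ℂ f z 1 := by
    rw [← smul_eq_mul, ← map_smul]; simp
  rw [this]
  linear_combination (1 / 2 : ℂ) * (fderiv ℂ f z 1) * (Complex.I_sq)

lemma fderiv_conj (f : ℂ → ℂ) (z v : ℂ) (hf : DifferentiableAt ℝ f z) :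
    fderiv ℝ (fun w => (starRingEnd ℂ) (f w)) z v = (starRingEnd ℂ) (fderiv ℝ f z v) := by
  have h := (Complex.conjCLE.toContinuousLinearMap.hasFDerivAt (x := f z)).comp z hf.hasFDerivAt
  have h2 : HasFDerivAt (fun w => (starRingEnd ℂ) (f w)) _ z := h
  rw [h2.fderiv]
  simp

lemma wZ_conj {f : ℂ → ℂ} {z : ℂ} (hf : DifferentiableAt ℝ f z) :
    wirtingerZ (fun w => (starRingEnd ℂ) (f w)) z = (starRingEnd ℂ) (wirtingerZbar f z) := by
  unfold wirtingerZ wirtingerZbar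
  rw [fderiv_conj f z _ hf, fderiv_conj f z _ hf]
  have h2 : (starRingEnd ℂ) 2 = 2 := map_ofNat _ 2
  simp [sub_eq_add_neg, h2]

lemma wZbar_conj {f : ℂ → ℂ} {z : ℂ} (hf : DifferentiableAt ℝ f z) :
    wirtingerZbar (fun w => (starRingEnd ℂ) (f w)) z = (starRingEnd ℂ) (wirtingerZ f z) := by
  unfold wirtingerZ wirtingerZbar
  rw [fderiv_conj f z _ hf, fderiv_conj f z _ hf]
  have h2 : (starRingEnd ℂ) 2 = 2 := map_ofNat _ 2
  simp [sub_eq_add_neg, h2]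

lemma wZ_congr {f g : ℂ → ℂ} {z : ℂ} (h : f =ᶠ[𝓝 z] g) : wirtingerZ f z = wirtingerZ g z := by
  unfold wirtingerZ; rw [h.fderiv_eq]

lemma wZbar_congr {f g : ℂ → ℂ} {z : ℂ} (h : f =ᶠ[𝓝 z] g) :
    wirtingerZbar f z = wirtingerZbar g z := by
  unfold wirtingerZbar; rw [h.fderiv_eq]

lemma contDiffAt_fderiv_apply' {f : ℂ → ℂ} {z : ℂ} (hf : ContDiffAt ℝ (⊤ : ℕ∞) f z) (v : ℂ) :
    ContDiffAt ℝ (⊤ : ℕ∞) (fun w => fderiv ℝ f w v) z :=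
  (hf.fderiv_right (m := (⊤ : ℕ∞)) (by simp)).clm_apply contDiffAt_const

lemma contDiffAt_wZ {f : ℂ → ℂ} {z : ℂ} (hf : ContDiffAt ℝ (⊤ : ℕ∞) f z) :
    ContDiffAt ℝ (⊤ : ℕ∞) (wirtingerZ f) z := by
  unfold wirtingerZ
  exact contDiffAt_const.mul ((contDiffAt_fderiv_apply' hf 1).sub
    (contDiffAt_const.mul (contDiffAt_fderiv_apply' hf Complex.I)))

lemma contDiffAt_wZbar {f : ℂ → ℂ} {z : ℂ} (hf : ContDiffAt ℝ (⊤ : ℕ∞) f z) :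
    ContDiffAt ℝ (⊤ : ℕ∞) (wirtingerZbar f) z := by
  unfold wirtingerZbar
  exact contDiffAt_const.mul ((contDiffAt_fderiv_apply' hf 1).add
    (contDiffAt_const.mul (contDiffAt_fderiv_apply' hf Complex.I)))

lemma fderiv_wZ {f : ℂ → ℂ} {z : ℂ} (hf : ContDiffAt ℝ (⊤ : ℕ∞) f z) (v : ℂ) :
    fderiv ℝ (wirtingerZ f) z v = (1 / 2 : ℂ) * (fderiv ℝ (fderiv ℝ f) z v 1
      - Complex.I * fderiv ℝ (fderiv ℝ f) z v Complex.I) := by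
  have hd : DifferentiableAt ℝ (fderiv ℝ f) z :=
    (hf.fderiv_right (m := (⊤ : ℕ∞)) (by simp)).differentiableAt (by simp)
  have h1 := hd.hasFDerivAt.clm_apply (hasFDerivAt_const (1 : ℂ) z)
  have h2 := hd.hasFDerivAt.clm_apply (hasFDerivAt_const (Complex.I : ℂ) z)
  have h3 : HasFDerivAt (wirtingerZ f) _ z := (h1.sub (h2.const_mul Complex.I)).const_mul (1/2 : ℂ)
  rw [h3.fderiv]
  simp
  try ring

lemma fderiv_wZbar {f : ℂ → ℂ} {z : ℂ} (hf : ContDiffAt ℝ (⊤ : ℕ∞) f z) (v : ℂ) :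
    fderiv ℝ (wirtingerZbar f) z v = (1 / 2 : ℂ) * (fderiv ℝ (fderiv ℝ f) z v 1
      + Complex.I * fderiv ℝ (fderiv ℝ f) z v Complex.I) := by
  have hd : DifferentiableAt ℝ (fderiv ℝ f) z :=
    (hf.fderiv_right (m := (⊤ : ℕ∞)) (by simp)).differentiableAt (by simp)
  have h1 := hd.hasFDerivAt.clm_apply (hasFDerivAt_const (1 : ℂ) z)
  have h2 := hd.hasFDerivAt.clm_apply (hasFDerivAt_const (Complex.I : ℂ) z)
  have h3 : HasFDerivAt (wirtingerZbar f) _ z :=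
    (h1.add (h2.const_mul Complex.I)).const_mul (1/2 : ℂ)
  rw [h3.fderiv]
  simp
  try ring

lemma wZ_wZbar_comm {f : ℂ → ℂ} {z : ℂ} (hf : ContDiffAt ℝ (⊤ : ℕ∞) f z) :
    wirtingerZ (wirtingerZbar f) z = wirtingerZbar (wirtingerZ f) z := by
  have hs : fderiv ℝ (fderiv ℝ f) z 1 Complex.I = fderiv ℝ (fderiv ℝ f) z Complex.I 1 :=
    (hf.isSymmSndFDerivAt (by simp; exact WithTop.coe_le_coe.2 le_top)) _ _
  unfold wirtingerZ
  conv_lhs => rw [fderiv_wZbar hf, fderiv_wZbar hf]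
  have e := fun v => fderiv_wZ hf v
  unfold wirtingerZ at e
  unfold wirtingerZbar
  rw [e, e, hs]
  ring

/-- The space of curves. -/
abbrev CurveSp := C(unitInterval, ℂ)

/-- Volterra operator. -/
noncomputable def volterra : CurveSp →L[ℝ] CurveSp :=
  LinearMap.mkContinuous
    { toFun := fun f =>
        ⟨fun t => ∫ s in (0:ℝ)..t, f (projIcc 0 1 zero_le_one s), by
          have hc : Continuous (fun s : ℝ => f (projIcc 0 1 zero_le_one s)) :=
            f.continuous.comp continuous_projIcc
          exact (intervalIntegral.continuous_primitive
            (fun a b => hc.intervalIntegrable a b) 0).comp continuous_subtype_val⟩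
      map_add' := by
        intro f g
        have hc : ∀ f : CurveSp, Continuous (fun s : ℝ => f (projIcc 0 1 zero_le_one s)) :=
            fun f => f.continuous.comp continuous_projIcc
        ext t
        exact intervalIntegral.integral_add ((hc f).intervalIntegrable _ _)
          ((hc g).intervalIntegrable _ _)
      map_smul' := by
        intro c f
        ext t
        exact intervalIntegral.integral_smul c _ }
    1 (by
      intro f
      rw [one_mul]
      refine (ContinuousMap.norm_le _ (norm_nonneg _)).2 fun t => ?_
      have := intervalIntegral.norm_integral_le_of_norm_le_const (a := (0:ℝ)) (b := (t:ℝ))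
        (f := fun s => f (projIcc 0 1 zero_le_one s)) (C := ‖f‖)
        (fun s _ => f.norm_coe_le_norm _)
      refine this.trans ?_
      have ht := t.2
      rw [sub_zero, abs_of_nonneg ht.1]
      exact mul_le_of_le_one_right (norm_nonneg _) ht.2)

lemma volterra_apply (f : CurveSp) (t : unitInterval) :
    volterra f t = ∫ s in (0:ℝ)..t, f (projIcc 0 1 zero_le_one s) := rfl

/-- Fundamental theorem of calculus for curves. -/
lemma volterra_ftc (g : ℝ → ℂ) (f : CurveSp)
    (h : ∀ t : unitInterval, HasDerivAt g (f t) t) (t : unitInterval) :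
    volterra f t = g t - g 0 := by
  rw [volterra_apply]
  apply intervalIntegral.integral_eq_sub_of_hasDerivAt
  · intro s hs
    rw [uIcc_of_le t.2.1] at hs
    have hs' : s ∈ Icc (0:ℝ) 1 := ⟨hs.1, hs.2.trans t.2.2⟩
    rw [projIcc_of_mem zero_le_one hs']
    exact h ⟨s, hs'⟩
  · exact (f.continuous.comp continuous_projIcc).intervalIntegrable _ _

/-- Analytic implicit function theorem for integral equations. -/
lemma implicit_aux {X : Type*} [NormedAddCommGroup X] [NormedSpace ℝ X] [CompleteSpace X]
    (V : X →L[ℝ] X) (N : ℂ × X → X) (u0 : X) (hN : ContDiffAt ℝ ω N (0, u0))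
    (hN0 : ∀ u, N (0, u) = 0) :
    ∃ ψ : ℂ → X, ContDiffAt ℝ ω ψ 0 ∧
      ∀ᶠ v in 𝓝 ((0 : ℂ), u0), v.2 - V (N v) = u0 → ψ v.1 = v.2 := by
  set G : ℂ × X → X := fun v => v.2 - V (N v) with hG
  have hGc : ContDiffAt ℝ ω G (0, u0) :=
    contDiffAt_snd.sub (V.contDiff.contDiffAt.comp _ hN)
  have hinv : (fderiv ℝ G (0, u0) ∘L .inr ℝ ℂ X) = ContinuousLinearMap.id ℝ X := by
    have h1 : HasFDerivAt G (fderiv ℝ G (0, u0)) (ContinuousLinearMap.inr ℝ ℂ X u0) :=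
      (hGc.differentiableAt (by simp)).hasFDerivAt
    have h2 := h1.comp u0 (ContinuousLinearMap.inr ℝ ℂ X).hasFDerivAt
    have h3 : G ∘ (ContinuousLinearMap.inr ℝ ℂ X) = fun u => u := by
      funext u
      simp [hG, hN0]
    rw [h3] at h2
    exact h2.unique (hasFDerivAt_id u0)
  have hI : (fderiv ℝ G (0, u0) ∘L .inr ℝ ℂ X).IsInvertible := by
    rw [hinv]
    exact ⟨ContinuousLinearEquiv.refl ℝ X, rfl⟩
  have hne : (ω : WithTop ℕ∞) ≠ 0 := by simp
  refine ⟨hGc.implicitFunction hne hI, hGc.contDiffAt_implicitFunction hne hI, ?_⟩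
  filter_upwards [hGc.eventually_apply_eq_iff_implicitFunction hne hI] with v hv h
  apply hv.1
  have : G (0, u0) = u0 := by simp [hG, hN0]
  rw [this]
  exact h

/-- Lift of a holomorphic function to curves. -/
lemma curve_lift {A : ℂ → ℂ} {z0 : ℂ} (hA : AnalyticAt ℂ A z0) :
    ∃ Ah : ℂ → CurveSp, ContDiffAt ℝ ω Ah 0 ∧
      ∀ᶠ h in 𝓝 (0:ℂ), ∀ t : unitInterval, Ah h t = A (z0 + (t:ℝ) * h) := by
  obtain ⟨q, ρ, hq⟩ := hA
  let T : CurveSp := ⟨fun t => ((t:ℝ):ℂ), by fun_prop⟩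
  have hT : ‖T‖ ≤ 1 := by
    refine (ContinuousMap.norm_le _ zero_le_one).2 fun t => ?_
    simp only [T, ContinuousMap.coe_mk, Complex.norm_real, Real.norm_eq_abs]
    rw [abs_of_nonneg t.2.1]; exact t.2.2
  let P : FormalMultilinearSeries ℂ ℂ CurveSp := fun n =>
    ContinuousMultilinearMap.mkPiRing ℂ (Fin n) (q.coeff n • T ^ n)
  have hnorm : ∀ n, ‖P n‖ ≤ ‖q n‖ := by
    intro n
    simp only [P, ContinuousMultilinearMap.norm_mkPiRing]
    rw [norm_smul, FormalMultilinearSeries.norm_apply_eq_norm_coef]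
    refine mul_le_of_le_one_right (norm_nonneg _) ?_
    exact (norm_pow_le _ _).trans (pow_le_one₀ (norm_nonneg _) hT)
  have hrad : q.radius ≤ P.radius := by
    apply FormalMultilinearSeries.radius_le_of_le
    exact hnorm
  have hpos : 0 < P.radius := hq.r_pos.trans_le (hq.r_le.trans hrad)
  have hP := P.hasFPowerSeriesOnBall hpos
  refine ⟨P.sum, (hP.analyticAt.restrictScalars (𝕜 := ℝ)).contDiffAt, ?_⟩
  have hb : Metric.eball (0:ℂ) ρ ∈ 𝓝 (0:ℂ) := Metric.eball_mem_nhds _ hq.r_pos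
  filter_upwards [hb] with h hh t
  have hh' : h ∈ Metric.eball (0:ℂ) P.radius :=
    Metric.eball_subset_eball (hq.r_le.trans hrad) hh
  have s1 := hP.hasSum hh'
  have s2 := s1.mapL (ContinuousMap.evalCLM ℂ t)
  have hth : ((t:ℝ):ℂ) * h ∈ Metric.eball (0:ℂ) ρ := by
    rw [mem_eball_zero_iff] at hh ⊢
    refine lt_of_le_of_lt ?_ hh
    rw [← ofReal_norm, ← ofReal_norm]
    apply ENNReal.ofReal_le_ofReal
    rw [norm_mul, Complex.norm_real, Real.norm_eq_abs, abs_of_nonneg t.2.1]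
    exact mul_le_of_le_one_left (norm_nonneg _) t.2.2
  have s3 := hq.hasSum hth
  rw [zero_add] at s2
  refine s2.unique ?_
  have e : (fun n => (ContinuousMap.evalCLM ℂ t) ((P n) fun _ => h))
      = fun n => (q n) fun _ => ((t:ℝ):ℂ) * h := by
    funext n
    simp [P, T, mul_pow]
    ring
  rw [e]
  exact s3

lemma ray_hasDerivAt {g : ℂ → ℂ} {z0 h : ℂ} {t : ℝ}
    (hg : DifferentiableAt ℝ g (z0 + t * h)) :
    HasDerivAt (fun s : ℝ => g (z0 + s * h))
      (wirtingerZ g (z0 + t * h) * h + wirtingerZbar g (z0 + t * h) * (starRingEnd ℂ) h) t := by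
  have h1 : HasDerivAt (fun s : ℝ => z0 + s * h) h t := by
    simpa using ((Complex.ofRealCLM.hasDerivAt (x := t)).mul_const h).const_add z0
  have h2 := hg.hasFDerivAt.comp_hasDerivAt t h1
  rwa [fderiv_eq_wirtinger] at h2

lemma ray_mem {z0 h : ℂ} {ρ : ℝ} (hh : ‖h‖ < ρ) (t : unitInterval) :
    z0 + ((t:ℝ):ℂ) * h ∈ Metric.ball z0 ρ := by
  rw [Metric.mem_ball, dist_eq_norm, add_sub_cancel_left, norm_mul, Complex.norm_real,
    Real.norm_eq_abs, abs_of_nonneg t.2.1]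
  exact (mul_le_of_le_one_left (norm_nonneg _) t.2.2).trans_lt hh

/-- The curve `t ↦ g (z0 + t h)`. -/
noncomputable def rayCurve (g : ℂ → ℂ) (z0 h : ℂ) {ρ : ℝ} (hh : ‖h‖ < ρ)
    (hg : ContinuousOn g (Metric.ball z0 ρ)) : CurveSp :=
  ⟨fun t => g (z0 + ((t:ℝ):ℂ) * h),
    hg.comp_continuous (by fun_prop) (fun t => ray_mem hh t)⟩

lemma system_analytic {z0 : ℂ} {ρ : ℝ} (hρ : 0 < ρ) {p r A B C D : ℂ → ℂ}
    (hA : AnalyticAt ℂ A z0) (hB : AnalyticAt ℂ B z0)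
    (hC : AnalyticAt ℂ C z0) (hD : AnalyticAt ℂ D z0)
    (hp : ∀ z ∈ Metric.ball z0 ρ, DifferentiableAt ℝ p z)
    (hr : ∀ z ∈ Metric.ball z0 ρ, DifferentiableAt ℝ r z)
    (e1 : ∀ z ∈ Metric.ball z0 ρ, wirtingerZ p z = A z * p z ^ 3 + B z * p z ^ 2 + C z * p z + D z)
    (e2 : ∀ z ∈ Metric.ball z0 ρ, wirtingerZbar p z = r z)
    (e3 : ∀ z ∈ Metric.ball z0 ρ,
      wirtingerZ r z = (3 * A z * p z ^ 2 + 2 * B z * p z + C z) * r z)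
    (e4 : ∀ z ∈ Metric.ball z0 ρ, wirtingerZbar r z =
      (starRingEnd ℂ) (3 * A z * p z ^ 2 + 2 * B z * p z + C z) * r z) :
    ∃ ψ : ℂ → CurveSp, ContDiffAt ℝ ω ψ 0 ∧
      ∀ᶠ h in 𝓝 (0:ℂ), ∀ t : unitInterval, ψ h t = p (z0 + (t:ℝ) * h) := by
  obtain ⟨Ah, cA, eA⟩ := curve_lift hA
  obtain ⟨Bh, cB, eB⟩ := curve_lift hB
  obtain ⟨Ch, cC, eC⟩ := curve_lift hC
  obtain ⟨Dh, cD, eD⟩ := curve_lift hD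
  let Qh : ℂ × (CurveSp × CurveSp) → CurveSp := fun v =>
    (3:ℝ) • (Ah v.1 * v.2.1 ^ 2) + (2:ℝ) • (Bh v.1 * v.2.1) + Ch v.1
  let Ph : ℂ × (CurveSp × CurveSp) → CurveSp := fun v =>
    Ah v.1 * v.2.1 ^ 3 + Bh v.1 * v.2.1 ^ 2 + Ch v.1 * v.2.1 + Dh v.1
  let K : ℂ →L[ℝ] CurveSp :=
    (ContinuousLinearMap.toSpanSingleton ℂ (1 : CurveSp)).restrictScalars ℝ
  have hK : ∀ c t, K c t = c := by intro c t; simp [K]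
  let N : ℂ × (CurveSp × CurveSp) → CurveSp × CurveSp := fun v =>
    (K v.1 * Ph v + K (Complex.conjCLE v.1) * v.2.2,
      (K v.1 * Qh v + K (Complex.conjCLE v.1) * starL' ℝ (Qh v)) * v.2.2)
  let V : CurveSp × CurveSp →L[ℝ] CurveSp × CurveSp := volterra.prodMap volterra
  let u0 : CurveSp × CurveSp := (ContinuousMap.const _ (p z0), ContinuousMap.const _ (r z0))
  have hf1 : ContDiffAt ℝ ω (fun v : ℂ × (CurveSp × CurveSp) => v.1) (0, u0) := contDiffAt_fst
  have lift : ∀ G : ℂ → CurveSp, ContDiffAt ℝ ω G 0 →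
      ContDiffAt ℝ ω (fun v : ℂ × (CurveSp × CurveSp) => G v.1) (0, u0) := by
    intro G hG
    exact ContDiffAt.comp (0, u0) hG contDiffAt_fst
  have kA := lift _ cA
  have kB := lift _ cB
  have kC := lift _ cC
  have kD := lift _ cD
  have k1 : ContDiffAt ℝ ω (fun v : ℂ × (CurveSp × CurveSp) => v.2.1) (0, u0) := by fun_prop
  have k2 : ContDiffAt ℝ ω (fun v : ℂ × (CurveSp × CurveSp) => v.2.2) (0, u0) := by fun_prop
  have kQ : ContDiffAt ℝ ω Qh (0, u0) :=
    (((kA.mul (k1.pow 2)).const_smul (3:ℝ)).add ((kB.mul k1).const_smul (2:ℝ))).add kC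
  have kP : ContDiffAt ℝ ω Ph (0, u0) :=
    (((kA.mul (k1.pow 3)).add (kB.mul (k1.pow 2))).add (kC.mul k1)).add kD
  have kK := lift _ K.contDiff.contDiffAt
  have kK' := lift (fun c => K (Complex.conjCLE c))
    (K.contDiff.comp Complex.conjCLE.contDiff).contDiffAt
  have kS : ContDiffAt ℝ ω (fun v => starL' ℝ (Qh v)) (0, u0) :=
    ContDiffAt.comp (0, u0) (starL' ℝ : CurveSp ≃L[ℝ] CurveSp).contDiff.contDiffAt kQ
  have hN : ContDiffAt ℝ ω N (0, u0) :=
    ((kK.mul kP).add (kK'.mul k2)).prodMk (((kK.mul kQ).add (kK'.mul kS)).mul k2)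
  have hN0 : ∀ u, N (0, u) = 0 := by
    intro u; simp [N]
  obtain ⟨ψ, hψ, hev⟩ := implicit_aux V N u0 hN hN0
  refine ⟨fun h => (ψ h).1, hψ.fst, ?_⟩
  obtain ⟨ε, hε, hball⟩ := Metric.eventually_nhds_iff.1 hev
  have z0mem : z0 ∈ Metric.ball z0 ρ := Metric.mem_ball_self hρ
  obtain ⟨δ1, hδ1, hd1⟩ := Metric.continuousAt_iff.1 (hp z0 z0mem).continuousAt (ε/2) (by positivity)
  obtain ⟨δ2, hδ2, hd2⟩ := Metric.continuousAt_iff.1 (hr z0 z0mem).continuousAt (ε/2) (by positivity)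
  have hpc : ContinuousOn p (Metric.ball z0 ρ) := fun z hz => (hp z hz).continuousAt.continuousWithinAt
  have hrc : ContinuousOn r (Metric.ball z0 ρ) := fun z hz => (hr z hz).continuousAt.continuousWithinAt
  filter_upwards [eA, eB, eC, eD, Metric.ball_mem_nhds (0:ℂ) hρ, Metric.ball_mem_nhds (0:ℂ) hδ1,
    Metric.ball_mem_nhds (0:ℂ) hδ2, Metric.ball_mem_nhds (0:ℂ) hε]
    with h eA eB eC eD m0 m1 m2 m3
  rw [mem_ball_zero_iff] at m0 m1 m2 m3
  let ph := rayCurve p z0 h m0 hpc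
  let rh := rayCurve r z0 h m0 hrc
  have key : ψ h = (ph, rh) := by
    refine hball (y := (h, (ph, rh))) ?_ ?_
    · rw [Prod.dist_eq, Prod.dist_eq]
      refine max_lt (by simpa using m3) (max_lt ?_ ?_)
      · refine lt_of_le_of_lt ((ContinuousMap.dist_le (by positivity)).2 fun t => ?_) (half_lt_self hε)
        exact (hd1 (ray_mem m1 t)).le
      · refine lt_of_le_of_lt ((ContinuousMap.dist_le (by positivity)).2 fun t => ?_) (half_lt_self hε)
        exact (hd2 (ray_mem m2 t)).le
    · have v1 : volterra (N (h, (ph, rh))).1 = ph - ContinuousMap.const _ (p z0) := by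
        ext t
        rw [volterra_ftc (fun s : ℝ => p (z0 + s * h))]
        · simp [ph, rayCurve]
        · intro t
          convert ray_hasDerivAt (hp _ (ray_mem m0 t)) using 1
          rw [e1 _ (ray_mem m0 t), e2 _ (ray_mem m0 t)]
          simp [N, Ph, hK, eA, eB, eC, eD, ph, rh, rayCurve]
          ring
      have v2 : volterra (N (h, (ph, rh))).2 = rh - ContinuousMap.const _ (r z0) := by
        ext t
        rw [volterra_ftc (fun s : ℝ => r (z0 + s * h))]
        · simp [rh, rayCurve]
        · intro t
          convert ray_hasDerivAt (hr _ (ray_mem m0 t)) using 1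
          rw [e3 _ (ray_mem m0 t), e4 _ (ray_mem m0 t)]
          have c2 : (starRingEnd ℂ) 2 = 2 := map_ofNat _ 2
          have c3 : (starRingEnd ℂ) 3 = 3 := map_ofNat _ 3
          simp [N, Qh, hK, eA, eB, eC, eD, ph, rh, rayCurve, c2, c3]
          ring
      change (ph, rh) - (volterra (N (h, (ph, rh))).1, volterra (N (h, (ph, rh))).2) = u0
      rw [v1, v2]
      simp [u0]
  intro t
  rw [key]
  rfl

/-- Every `C^∞`-smooth real-valued function `F` on an open set `U ⊆ ℂ` satisfying the zero
CR-curvature equation `F_zz = A (F_z)³ + B (F_z)² + C F_z + D`, with `A, B, C, D`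
holomorphic on `U`, is real-analytic on `U`.  (Theorem 1.1, analytic content.) -/
theorem smooth_rigid_spherical_graphing_function_is_real_analytic
    (U : Set ℂ) (hU : IsOpen U)
    (F : ℂ → ℝ) (hF : ContDiffOn ℝ (⊤ : ℕ∞) F U)
    (A B C D : ℂ → ℂ)
    (hA : DifferentiableOn ℂ A U) (hB : DifferentiableOn ℂ B U)
    (hC : DifferentiableOn ℂ C U) (hD : DifferentiableOn ℂ D U)
    (heq : ∀ z ∈ U,
      wirtingerZ (wirtingerZ (fun w => (F w : ℂ))) z =
        A z * (wirtingerZ (fun w => (F w : ℂ)) z) ^ 3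
          + B z * (wirtingerZ (fun w => (F w : ℂ)) z) ^ 2
          + C z * wirtingerZ (fun w => (F w : ℂ)) z + D z) :
    AnalyticOnNhd ℝ F U := by
  intro z0 hz0
  set f : ℂ → ℂ := fun w => (F w : ℂ) with hf
  have cf : ∀ z ∈ U, ContDiffAt ℝ (⊤ : ℕ∞) f z := fun z hz =>
    Complex.ofRealCLM.contDiff.contDiffAt.comp z (hF.contDiffAt (hU.mem_nhds hz))
  have df : ∀ z ∈ U, DifferentiableAt ℝ f z := fun z hz => (cf z hz).differentiableAt (by simp)
  set p := wirtingerZ f with hp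
  have cp : ∀ z ∈ U, ContDiffAt ℝ (⊤ : ℕ∞) p z := fun z hz => contDiffAt_wZ (cf z hz)
  have dp : ∀ z ∈ U, DifferentiableAt ℝ p z := fun z hz => (cp z hz).differentiableAt (by simp)
  set r := wirtingerZbar p with hr
  have cr : ∀ z ∈ U, ContDiffAt ℝ (⊤ : ℕ∞) r z := fun z hz => contDiffAt_wZbar (cp z hz)
  have dr : ∀ z ∈ U, DifferentiableAt ℝ r z := fun z hz => (cr z hz).differentiableAt (by simp)
  have fconj : (fun w => (starRingEnd ℂ) (f w)) = f := by funext w; simp [hf]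
  have fbar : ∀ z ∈ U, wirtingerZbar f z = (starRingEnd ℂ) (p z) := by
    intro z hz
    rw [← wZbar_conj (df z hz), fconj]
  have rreal : ∀ z ∈ U, (starRingEnd ℂ) (r z) = r z := by
    intro z hz
    rw [hr, ← wZ_conj (dp z hz), ← wZ_wZbar_comm (cf z hz)]
    apply wZ_congr
    filter_upwards [hU.mem_nhds hz] with w hw
    rw [fbar w hw]
  have e3 : ∀ z ∈ U, wirtingerZ r z = (3 * A z * p z ^ 2 + 2 * B z * p z + C z) * r z := by
    intro z hz
    have aA := hA.differentiableAt (hU.mem_nhds hz)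
    have aB := hB.differentiableAt (hU.mem_nhds hz)
    have aC := hC.differentiableAt (hU.mem_nhds hz)
    have aD := hD.differentiableAt (hU.mem_nhds hz)
    have bA := aA.restrictScalars ℝ
    have bB := aB.restrictScalars ℝ
    have bC := aC.restrictScalars ℝ
    have bD := aD.restrictScalars ℝ
    have bp := dp z hz
    rw [hr, wZ_wZbar_comm (cp z hz)]
    have hc : wirtingerZ p =ᶠ[𝓝 z] fun w =>
        A w * (p w * (p w * p w)) + B w * (p w * p w) + C w * p w + D w := by
      filter_upwards [hU.mem_nhds hz] with w hw
      rw [heq w hw]; ring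
    rw [wZbar_congr hc, wZbar_add (by fun_prop) bD, wZbar_add (by fun_prop) (by fun_prop),
      wZbar_add (by fun_prop) (by fun_prop), wZbar_mul bA (by fun_prop), wZbar_mul bB (by fun_prop),
      wZbar_mul bC bp, wZbar_mul bp (by fun_prop), wZbar_mul bp bp,
      wZbar_hol aA, wZbar_hol aB, wZbar_hol aC, wZbar_hol aD]
    ring
  have e4 : ∀ z ∈ U, wirtingerZbar r z =
      (starRingEnd ℂ) (3 * A z * p z ^ 2 + 2 * B z * p z + C z) * r z := by
    intro z hz
    have : wirtingerZbar r z = wirtingerZbar (fun w => (starRingEnd ℂ) (r w)) z := by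
      apply wZbar_congr
      filter_upwards [hU.mem_nhds hz] with w hw
      rw [rreal w hw]
    rw [this, wZbar_conj (dr z hz), e3 z hz, map_mul, rreal z hz]
  obtain ⟨ρ, hρ, hsub⟩ := Metric.isOpen_iff.1 hU z0 hz0
  obtain ⟨ψ, cψ, eψ⟩ := system_analytic hρ
    (hA.analyticAt (hU.mem_nhds hz0)) (hB.analyticAt (hU.mem_nhds hz0))
    (hC.analyticAt (hU.mem_nhds hz0)) (hD.analyticAt (hU.mem_nhds hz0))
    (fun z hz => dp z (hsub hz)) (fun z hz => dr z (hsub hz))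
    (fun z hz => heq z (hsub hz)) (fun z _ => rfl)
    (fun z hz => e3 z (hsub hz)) (fun z hz => e4 z (hsub hz))
  let L : CurveSp →L[ℝ] ℂ := (ContinuousMap.evalCLM ℝ (1 : unitInterval)).comp volterra
  let Φ : ℂ → ℝ := fun h => F z0 + 2 * Complex.reCLM (L (ψ h) * h)
  have cΦ : ContDiffAt ℝ ω Φ 0 := by
    have c1 : ContDiffAt ℝ ω (fun h => L (ψ h)) 0 := L.contDiff.contDiffAt.comp 0 cψ
    have c2 : ContDiffAt ℝ ω (fun h => L (ψ h) * h) 0 := c1.mul contDiffAt_id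
    exact contDiffAt_const.add (contDiffAt_const.mul (Complex.reCLM.contDiff.contDiffAt.comp 0 c2))
  have hΦ : ∀ᶠ h in 𝓝 (0:ℂ), F (z0 + h) = Φ h := by
    filter_upwards [eψ, Metric.ball_mem_nhds (0:ℂ) hρ] with h eh m0
    rw [mem_ball_zero_iff] at m0
    let W : CurveSp := ContinuousMap.const _ h * ψ h
    have hW : volterra W 1 = h * volterra (ψ h) 1 := by
      rw [volterra_apply, volterra_apply, ← intervalIntegral.integral_const_mul]
      rfl
    have hS := volterra_ftc (fun s : ℝ => f (z0 + s * h)) (W + starL' ℝ W) (by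
      intro t
      convert ray_hasDerivAt (df _ (hsub (ray_mem m0 t))) using 1
      rw [fbar _ (hsub (ray_mem m0 t))]
      simp [W, eh]
      ring) 1
    have hst : volterra (starL' ℝ W) 1 = (starRingEnd ℂ) (volterra W 1) := by
      rw [volterra_apply, volterra_apply]
      exact (Complex.conjCLE.toContinuousLinearMap.intervalIntegral_comp_comm
        ((W.continuous.comp continuous_projIcc).intervalIntegrable _ _))
    rw [map_add, ContinuousMap.add_apply, hst, hW, Complex.add_conj] at hS
    have := congrArg Complex.re hS
    simp [hf] at this
    simp [Φ, L]
    linarith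
  have hfin : ContDiffAt ℝ ω F z0 := by
    have c3 : ContDiffAt ℝ ω (fun z => Φ (z - z0)) z0 := by
      have : ContDiffAt ℝ ω Φ (z0 - z0) := by simpa using cΦ
      exact ContDiffAt.comp (g := Φ) (f := fun z => z - z0) z0 this (contDiffAt_id.sub contDiffAt_const)
    refine c3.congr_of_eventuallyEq ?_
    have ht : Tendsto (fun z => z - z0) (𝓝 z0) (𝓝 0) := by
      have : ContinuousAt (fun z : ℂ => z - z0) z0 := by fun_prop
      simpa [ContinuousAt] using this
    filter_upwards [ht.eventually hΦ] with z hz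
    rw [← hz]; simp
  exact hfin.analyticAt
end

section
/- Let U ⊆ ℂ be an open set, let A, B, C, D be functions holomorphic on U, and let f : U → ℂ be a C^∞-smooth function satisfying f_z = A·f³ + B·f² + C·f + D at every point of U. Then f is real-analytic on U. -/
open Complex

open Topology Filter in
theorem lift_analytic {A : ℂ → ℂ} {z0 : ℂ} (hA : AnalyticAt ℂ A z0) :
    ∃ α : C(unitInterval, ℂ) → C(unitInterval, ℂ), AnalyticAt ℂ α 0 ∧
      ∀ᶠ h in 𝓝 (0 : C(unitInterval, ℂ)), ∀ s, α h s = A (z0 + h s) := by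
  obtain ⟨p, r, hp⟩ := hA
  let q := FormalMultilinearSeries.ofScalars C(unitInterval, ℂ) p.coeff
  have hrad : p.radius ≤ q.radius := by
    apply FormalMultilinearSeries.radius_le_of_le
    intro n
    simp only [q]
    rw [FormalMultilinearSeries.ofScalars_norm, FormalMultilinearSeries.norm_apply_eq_norm_coef]
  have hrq : r ≤ q.radius := hp.r_le.trans hrad
  have hq := (q.hasFPowerSeriesOnBall (hp.r_pos.trans_le hrq)).mono hp.r_pos hrq
  refine ⟨q.sum, hq.analyticAt, ?_⟩
  have hb : Metric.eball (0 : C(unitInterval, ℂ)) r ∈ 𝓝 0 := Metric.eball_mem_nhds _ hp.r_pos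
  filter_upwards [hb] with h hh s
  have h1 := hq.hasSum hh
  rw [zero_add] at h1
  have h2 := h1.map (ContinuousMap.evalCLM ℂ s) (ContinuousMap.evalCLM ℂ s).continuous
  have hs : h s ∈ Metric.eball (0:ℂ) r := by
    rw [Metric.mem_eball, edist_zero_right] at hh ⊢
    refine lt_of_le_of_lt ?_ hh
    rw [← ofReal_norm, ← ofReal_norm]
    exact ENNReal.ofReal_le_ofReal (h.norm_coe_le_norm s)
  have h3 := hp.hasSum hs
  refine h2.unique ?_
  have h5 : (ContinuousMap.evalCLM ℂ s ∘ fun n => q n fun _ => h) = fun n => p n fun _ => h s := by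
    funext n
    have h4 : (q n fun _ => h) = p.coeff n • h ^ n :=
      FormalMultilinearSeries.ofScalars_apply_eq _ h n
    simp [h4, mul_comm]
  rw [h5]
  exact h3

noncomputable def volt : C(unitInterval, ℂ) →L[ℂ] C(unitInterval, ℂ) :=
  LinearMap.mkContinuous
    { toFun := fun u => ⟨fun s => ∫ x in (0:ℝ)..s, Set.IccExtend zero_le_one u x, by
        have hc : Continuous (Set.IccExtend (zero_le_one (α := ℝ)) u) := u.continuous.Icc_extend'
        exact (intervalIntegral.continuous_primitive
          (fun a b => hc.intervalIntegrable a b) 0).comp continuous_subtype_val⟩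
      map_add' := by
        intro u v
        ext s
        have hu : Continuous (Set.IccExtend (zero_le_one (α := ℝ)) u) := u.continuous.Icc_extend'
        have hv : Continuous (Set.IccExtend (zero_le_one (α := ℝ)) v) := v.continuous.Icc_extend'
        exact intervalIntegral.integral_add (hu.intervalIntegrable _ _) (hv.intervalIntegrable _ _)
      map_smul' := by
        intro c u
        ext s
        exact intervalIntegral.integral_const_mul c _ } 1 (by
    intro u
    rw [one_mul, ContinuousMap.norm_le _ (norm_nonneg _)]
    intro s
    refine (intervalIntegral.norm_integral_le_of_norm_le_const (C := ‖u‖) ?_).trans ?_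
    · intro x _
      exact u.norm_coe_le_norm _
    · have := s.2.1
      have := s.2.2
      rw [sub_zero, abs_of_nonneg s.2.1]
      exact mul_le_of_le_one_right (norm_nonneg _) s.2.2)

theorem volt_apply (u : C(unitInterval, ℂ)) (s : unitInterval) :
    volt u s = ∫ x in (0:ℝ)..s, Set.IccExtend zero_le_one u x := rfl

open Topology in
theorem antihol {F : ℂ → ℂ} {z0 : ℂ}
    (h : ∀ᶠ z in 𝓝 z0, DifferentiableAt ℝ F z ∧ wirtingerZ F z = 0) :
    AnalyticAt ℝ F z0 := by
  have h1 : AnalyticAt ℂ (fun z => Complex.conjCLE (F z)) z0 := by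
    rw [Complex.analyticAt_iff_eventually_differentiableAt]
    filter_upwards [h] with z ⟨hd, hw⟩
    rw [differentiableAt_complex_iff_differentiableAt_real]
    have h2 := (Complex.conjCLE : ℂ ≃L[ℝ] ℂ).hasFDerivAt.comp z hd.hasFDerivAt
    refine ⟨h2.differentiableAt, ?_⟩
    have h3 : fderiv ℝ (fun z => Complex.conjCLE (F z)) z = _ := h2.fderiv
    rw [h3]
    have hw' : fderiv ℝ F z 1 = Complex.I * fderiv ℝ F z Complex.I := by
      have h5 : (1 / 2 : ℂ) * (fderiv ℝ F z 1 - Complex.I * fderiv ℝ F z Complex.I) = 0 := hw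
      rcases mul_eq_zero.1 h5 with h6 | h6
      · norm_num at h6
      · exact sub_eq_zero.1 h6
    simp only [ContinuousLinearMap.comp_apply, ContinuousLinearEquiv.coe_coe, hw']
    simp only [Complex.conjCLE_apply, map_mul, Complex.conj_I, smul_eq_mul]
    rw [neg_mul, mul_neg, ← mul_assoc, Complex.I_mul_I]
    ring
  have h2 : AnalyticAt ℝ (fun z => Complex.conjCLE (F z)) z0 := h1.restrictScalars
  have h3 : AnalyticAt ℝ (fun z => Complex.conjCLE (Complex.conjCLE (F z))) z0 :=
    AnalyticAt.fun_comp (g := fun w => Complex.conjCLE w)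
      ((Complex.conjCLE : ℂ ≃L[ℝ] ℂ).toContinuousLinearMap.analyticAt _) h2
  simpa using h3

theorem zsm (w : C(unitInterval, ℂ)) : (0:ℂ) • w = 0 := by
  ext s
  simp

noncomputable def mulI (r : unitInterval) : C(unitInterval, unitInterval) :=
  ⟨fun s => r * s, by fun_prop⟩

theorem volt_scale (w : C(unitInterval, ℂ)) (r s : unitInterval) :
    volt w (r * s) = (r : ℝ) * volt (w.comp (mulI r)) s := by
  rw [volt_apply, volt_apply]
  have h1 := intervalIntegral.smul_integral_comp_mul_left
    (a := 0) (b := (s:ℝ)) (Set.IccExtend (zero_le_one (α := ℝ)) w) (r:ℝ)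
  rw [mul_zero] at h1
  rw [Set.Icc.coe_mul, ← h1, Complex.real_smul]
  congr 1
  apply intervalIntegral.integral_congr
  intro x hx
  rw [Set.uIcc_of_le s.2.1] at hx
  have hx' : x ∈ Set.Icc (0:ℝ) 1 := ⟨hx.1, hx.2.trans s.2.2⟩
  have hrx : (r:ℝ) * x ∈ Set.Icc (0:ℝ) 1 :=
    ⟨mul_nonneg r.2.1 hx.1, mul_le_one₀ r.2.2 hx.1 hx'.2⟩
  simp only
  rw [Set.IccExtend_of_mem _ _ hx', Set.IccExtend_of_mem _ _ hrx]
  rfl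

noncomputable def iotaI : C(unitInterval, ℂ) := ⟨fun s => ((s:ℝ):ℂ), by fun_prop⟩

open Topology Filter ContDiff in
theorem ode {P : ℂ × ℂ → ℂ} {z0 c0 : ℂ} (hP : AnalyticAt ℂ P (z0, c0))
    {N : C(unitInterval, ℂ) × C(unitInterval, ℂ) → C(unitInterval, ℂ)}
    (hN : AnalyticAt ℂ N (0, c0 • 1))
    (hNP : ∀ᶠ q in 𝓝 ((0 : C(unitInterval, ℂ)), c0 • (1 : C(unitInterval, ℂ))),
      ∀ s, N q s = P (z0 + q.1 s, q.2 s)) :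
    ∃ ψ : ℂ × ℂ → ℂ, AnalyticAt ℂ ψ (z0, c0) ∧ ∀ᶠ p in 𝓝 (z0, c0),
      HasDerivAt (fun z => ψ (z, p.2)) (P (p.1, ψ p)) p.1 ∧ ψ (z0, p.2) = p.2 := by
  let G : (ℂ × ℂ) × C(unitInterval, ℂ) → C(unitInterval, ℂ) := fun v =>
    v.2 - v.1.2 • 1 - (v.1.1 - z0) • volt (N ((v.1.1 - z0) • iotaI, v.2))
  let u0 : (ℂ × ℂ) × C(unitInterval, ℂ) := ((z0, c0), c0 • 1)
  have hN1 : ContDiffAt ℂ ω (fun v : (ℂ × ℂ) × C(unitInterval, ℂ) =>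
      N ((v.1.1 - z0) • iotaI, v.2)) u0 := by
    apply ContDiffAt.comp u0 (g := N) (f := fun v : (ℂ × ℂ) × C(unitInterval, ℂ) =>
      ((v.1.1 - z0) • iotaI, v.2))
    · have : ((u0.1.1 - z0) • iotaI, u0.2) = (0, c0 • (1 : C(unitInterval, ℂ))) := by
        simp only [u0, sub_self, zsm]
      rw [this]
      exact hN.contDiffAt
    · fun_prop
  have hGc : ContDiffAt ℂ ω G u0 := by
    have h2 : ContDiffAt ℂ ω (fun v : (ℂ × ℂ) × C(unitInterval, ℂ) =>
        volt (N ((v.1.1 - z0) • iotaI, v.2))) u0 := volt.contDiff.contDiffAt.comp u0 hN1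
    refine ContDiffAt.sub (by fun_prop) (ContDiffAt.smul (f := fun v : (ℂ × ℂ) × C(unitInterval, ℂ) => v.1.1 - z0)
      (by fun_prop) h2)
  have hG : AnalyticAt ℂ G u0 := hGc.analyticAt
  have hG0 : G u0 = 0 := by simp only [G, u0, sub_self, zsm]
  have hinv : fderiv ℂ G u0 ∘L .inr ℂ (ℂ × ℂ) C(unitInterval, ℂ) = .id ℂ _ := by
    have h1 := hG.differentiableAt.hasFDerivAt.comp (c0 • 1 : C(unitInterval, ℂ))
      (hasFDerivAt_prodMk_right (𝕜 := ℂ) (z0, c0) (c0 • 1 : C(unitInterval, ℂ)))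
    have h2 : HasFDerivAt (G ∘ fun u : C(unitInterval, ℂ) => ((z0, c0), u))
        (.id ℂ _) (c0 • 1 : C(unitInterval, ℂ)) := by
      have : (G ∘ fun u : C(unitInterval, ℂ) => ((z0, c0), u)) = fun u => u - c0 • 1 := by
        funext u
        simp only [G, Function.comp_apply, sub_self, zsm, sub_zero]
      rw [this]
      exact (hasFDerivAt_id _).sub_const _
    exact h1.unique h2
  have hinv' : (fderiv ℂ G u0 ∘L .inr ℂ (ℂ × ℂ) C(unitInterval, ℂ)).IsInvertible := by
    rw [hinv]
    exact ⟨ContinuousLinearEquiv.refl ℂ _, rfl⟩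
  have hω : (ω : ℕ∞ω) ≠ 0 := by simp
  obtain ⟨u, hu⟩ : ∃ u, u = hGc.implicitFunction hω hinv' := ⟨_, rfl⟩
  have huC : AnalyticAt ℂ u (z0, c0) := by
    rw [hu]; exact (hGc.contDiffAt_implicitFunction hω hinv').analyticAt
  have hu0 : u (z0, c0) = c0 • 1 := by
    rw [hu]; exact hGc.implicitFunction_apply_self hω hinv'
  have huE : ∀ᶠ p in 𝓝 (z0, c0), G (p, u p) = 0 := by
    rw [hu, ← hG0]; exact hGc.eventually_apply_implicitFunction hω hinv'
  have huU : ∀ᶠ v in 𝓝 u0, G v = 0 ↔ u v.1 = v.2 := by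
    rw [hu, ← hG0]; exact hGc.eventually_apply_eq_iff_implicitFunction hω hinv'
  have hGd : ∀ (p : ℂ × ℂ) (w : C(unitInterval, ℂ)), G (p, w) = 0 ↔ ∀ s, w s =
      p.2 + (p.1 - z0) * volt (N ((p.1 - z0) • iotaI, w)) s := by
    intro p w
    rw [ContinuousMap.ext_iff]
    refine forall_congr' fun s => ?_
    have : G (p, w) s = w s - p.2 - (p.1 - z0) * volt (N ((p.1 - z0) • iotaI, w)) s := by
      simp [G]
    rw [this, ContinuousMap.zero_apply, sub_sub, sub_eq_zero]
  clear_value G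
  obtain ⟨ε1, hε1, huU⟩ := Metric.eventually_nhds_iff.1 huU
  obtain ⟨ε2, hε2, hNP⟩ := Metric.eventually_nhds_iff.1 hNP
  have hcl : ∀ᶠ p in 𝓝 (z0, c0), dist (u p) (c0 • 1) < min ε1 ε2 := by
    have := huC.continuousAt
    rw [Metric.continuousAt_iff'] at this
    rw [hu0] at this
    exact this _ (lt_min hε1 hε2)
  have hψan : ∀ᶠ p in 𝓝 (z0, c0), AnalyticAt ℂ (fun p => u p 1) p := by
    filter_upwards [huC.eventually_analyticAt] with p hp
    have h1 : AnalyticAt ℂ (fun w : C(unitInterval, ℂ) => w 1) (u p) :=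
      (ContinuousMap.evalCLM ℂ (1 : unitInterval) : C(unitInterval, ℂ) →L[ℂ] ℂ).analyticAt _
    exact AnalyticAt.fun_comp (g := fun w : C(unitInterval, ℂ) => w 1) h1 hp
  have hPan : ∀ᶠ p in 𝓝 (z0, c0), AnalyticAt ℂ P (p.1, u p 1) := by
    have h1 : ContinuousAt (fun p : ℂ × ℂ => (p.1, u p 1)) (z0, c0) :=
      continuousAt_fst.prodMk hψan.self_of_nhds.continuousAt
    have h2 : (fun p : ℂ × ℂ => (p.1, u p 1)) (z0, c0) = (z0, c0) := by
      simp [hu0]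
    have h3 := hP.eventually_analyticAt
    rw [← h2] at h3
    exact h1.eventually h3
  obtain ⟨δ1, hδ1, hall⟩ := Metric.eventually_nhds_iff.1
    (huE.and (hcl.and (hψan.and hPan)))
  obtain ⟨δ, hδdef⟩ : ∃ δ, δ = min δ1 (min ε1 ε2) := ⟨_, rfl⟩
  have hδ : 0 < δ := hδdef ▸ lt_min hδ1 (lt_min hε1 hε2)
  have hδδ : δ ≤ δ1 := hδdef ▸ min_le_left _ _
  have hδε1 : δ ≤ ε1 := hδdef ▸ (min_le_right _ _).trans (min_le_left _ _)
  have hδε2 : δ ≤ ε2 := hδdef ▸ (min_le_right _ _).trans (min_le_right _ _)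
  have hall' : ∀ z c : ℂ, dist z z0 < δ → dist c c0 < δ →
      G ((z, c), u (z, c)) = 0 ∧ dist (u (z, c)) (c0 • 1) < min ε1 ε2 ∧
      AnalyticAt ℂ (fun p => u p 1) (z, c) ∧ AnalyticAt ℂ P (z, u (z, c) 1) := by
    intro z c hz hc
    apply hall
    rw [Prod.dist_eq]
    exact max_lt (hz.trans_le hδδ) (hc.trans_le hδδ)
  have hNP' : ∀ (z : ℂ) (w : C(unitInterval, ℂ)), dist z z0 < δ → dist w (c0 • 1) < min ε1 ε2 →
      ∀ s, N ((z - z0) • iotaI, w) s = P (z0 + (z - z0) * (s:ℝ), w s) := by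
    intro z w hz hw s
    have := @hNP ((z - z0) • iotaI, w) (by
      rw [Prod.dist_eq]
      refine max_lt ?_ (hw.trans_le (min_le_right _ _))
      rw [dist_zero_right]
      refine lt_of_le_of_lt ?_ (hz.trans_le hδε2)
      rw [ContinuousMap.norm_le _ dist_nonneg]
      intro x
      have hx : ((z - z0) • iotaI) x = (z - z0) * ((x:ℝ):ℂ) := by simp [iotaI]
      rw [hx, norm_mul, dist_eq_norm, Complex.norm_real, Real.norm_of_nonneg x.2.1]
      exact mul_le_of_le_one_right (norm_nonneg _) x.2.2) s
    rw [this]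
    simp [iotaI]
  have hscale : ∀ z c : ℂ, dist z z0 < δ → dist c c0 < δ → ∀ r : unitInterval,
      dist (z0 + (z - z0) * (r:ℝ)) z0 < δ ∧
      u (z, c) r = u (z0 + (z - z0) * (r:ℝ), c) 1 := by
    intro z c hz hc r
    obtain ⟨hg, hd, -, -⟩ := hall' z c hz hc
    have hzr : dist (z0 + (z - z0) * (r:ℝ)) z0 < δ := by
      refine lt_of_le_of_lt ?_ hz
      rw [dist_eq_norm, dist_eq_norm, add_sub_cancel_left, norm_mul, Complex.norm_real,
        Real.norm_of_nonneg r.2.1]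
      exact mul_le_of_le_one_right (norm_nonneg _) r.2.2
    refine ⟨hzr, ?_⟩
    obtain ⟨v, hv⟩ : ∃ v, v = (u (z, c)).comp (mulI r) := ⟨_, rfl⟩
    have hvs : ∀ s, v s = u (z, c) (r * s) := by intro s; rw [hv]; rfl
    have hvd : dist v (c0 • 1) < min ε1 ε2 := by
      refine lt_of_le_of_lt ?_ hd
      rw [ContinuousMap.dist_le dist_nonneg]
      intro s
      rw [hvs]
      exact ContinuousMap.dist_apply_le_dist (f := u (z, c)) (g := c0 • 1) (r * s)
    have hGv : G ((z0 + (z - z0) * (r:ℝ), c), v) = 0 := by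
      rw [hGd]
      intro s
      rw [hvs, (hGd _ _).1 hg (r * s), volt_scale]
      have : (N ((z - z0) • iotaI, u (z, c))).comp (mulI r) =
          N ((z0 + (z - z0) * (r:ℝ) - z0) • iotaI, v) := by
        ext t
        rw [hNP' _ _ hzr hvd, hvs]
        have h1 : (N ((z - z0) • iotaI, u (z, c))).comp (mulI r) t =
          N ((z - z0) • iotaI, u (z, c)) (r * t) := rfl
        rw [h1, hNP' _ _ hz hd]
        congr 2
        push_cast
        ring
      simp only
      rw [this]
      ring
    have h3 := (@huU ((z0 + (z - z0) * (r:ℝ), c), v) (by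
      rw [Prod.dist_eq, Prod.dist_eq]
      exact max_lt (max_lt (hzr.trans_le hδε1) (hc.trans_le hδε1))
        (hvd.trans_le (min_le_left _ _)))).1 hGv
    simp only at h3
    rw [h3, hvs, mul_one]
  have hint : ∀ z c : ℂ, dist z z0 < δ → dist c c0 < δ → u (z, c) 1 = c + ∫ x in (0:ℝ)..1,
      (z - z0) * P (z0 + (z - z0) * (x:ℝ), u (z0 + (z - z0) * (x:ℝ), c) 1) := by
    intro z c hz hc
    obtain ⟨hg, hd, -, -⟩ := hall' z c hz hc
    rw [(hGd _ _).1 hg 1, volt_apply, intervalIntegral.integral_const_mul]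
    simp only
    congr 2
    apply intervalIntegral.integral_congr
    intro x hx
    rw [Set.Icc.coe_one, Set.uIcc_of_le zero_le_one] at hx
    simp only
    rw [Set.IccExtend_of_mem _ _ hx, hNP' _ _ hz hd, (hscale z c hz hc ⟨x, hx⟩).2]
  refine ⟨fun p => u p 1, hψan.self_of_nhds, ?_⟩
  rw [Metric.eventually_nhds_iff]
  refine ⟨δ, hδ, ?_⟩
  rintro ⟨z, c⟩ hp
  rw [Prod.dist_eq] at hp
  have hz : dist z z0 < δ := (le_max_left _ _).trans_lt hp
  have hc : dist c c0 < δ := (le_max_right _ _).trans_lt hp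
  have hqd : DifferentiableOn ℂ (fun z => P (z, u (z, c) 1)) (Metric.ball z0 δ) := by
    intro y hy
    obtain ⟨-, -, h1, h2⟩ := hall' y c hy hc
    have h3 : DifferentiableAt ℂ (fun z => u (z, c) 1) y :=
      DifferentiableAt.comp y (g := fun p : ℂ × ℂ => u p 1) (f := fun z => (z, c))
        h1.differentiableAt (by fun_prop)
    exact (DifferentiableAt.comp y (g := P) (f := fun z => (z, u (z, c) 1))
        h2.differentiableAt (differentiableAt_id.prodMk h3)).differentiableWithinAt
  obtain ⟨Q, hQ⟩ := hqd.isExactOn_ball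
  have hQQ : ∀ y ∈ Metric.ball z0 δ, u (y, c) 1 = c + (Q y - Q z0) := by
    intro y hy
    rw [hint y c hy hc]
    congr 1
    have hmem : ∀ x ∈ Set.uIcc (0:ℝ) 1, z0 + (y - z0) * (x:ℝ) ∈ Metric.ball z0 δ := by
      intro x hx
      rw [Set.uIcc_of_le zero_le_one] at hx
      exact (hscale y c hy hc ⟨x, hx⟩).1
    have hline : ∀ x : ℝ, HasDerivAt (fun x : ℝ => z0 + (y - z0) * (x:ℂ)) (y - z0) x := by
      intro x
      have := ((Complex.ofRealCLM.hasDerivAt (x := x)).const_mul (y - z0)).const_add z0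
      simpa using this
    have := intervalIntegral.integral_eq_sub_of_hasDerivAt
      (f := fun x : ℝ => Q (z0 + (y - z0) * (x:ℂ))) (a := 0) (b := 1)
      (f' := fun x : ℝ => (y - z0) * P (z0 + (y - z0) * (x:ℝ), u (z0 + (y - z0) * (x:ℝ), c) 1))
      (by
        intro x hx
        have h1 := (hQ _ (hmem x hx)).comp x (hline x)
        rw [mul_comm]
        exact h1)
      (by
        apply ContinuousOn.intervalIntegrable
        apply ContinuousOn.mul continuousOn_const
        exact hqd.continuousOn.comp (f := fun x : ℝ => z0 + (y - z0) * (x:ℂ))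
          (by fun_prop) hmem)
    rw [this]
    simp
  constructor
  · have h1 : HasDerivAt (fun y => c + (Q y - Q z0)) (P (z, u (z, c) 1)) z :=
      ((hQ z hz).sub_const _).const_add _
    refine h1.congr_of_eventuallyEq ?_
    filter_upwards [Metric.isOpen_ball.mem_nhds hz] with y hy
    exact hQQ y hy
  · have := hQQ z0 (Metric.mem_ball_self hδ)
    simpa using this

open Topology Filter ContDiff in
theorem local_main {A B C D f : ℂ → ℂ} {z0 : ℂ}
    (hA : AnalyticAt ℂ A z0) (hB : AnalyticAt ℂ B z0)
    (hC : AnalyticAt ℂ C z0) (hD : AnalyticAt ℂ D z0)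
    (hf : ContDiffAt ℝ (⊤ : ℕ∞) f z0)
    (heq : ∀ᶠ z in 𝓝 z0,
      wirtingerZ f z = A z * (f z) ^ 3 + B z * (f z) ^ 2 + C z * f z + D z) :
    AnalyticAt ℝ f z0 := by
  let P : ℂ × ℂ → ℂ := fun p => A p.1 * p.2 ^ 3 + B p.1 * p.2 ^ 2 + C p.1 * p.2 + D p.1
  obtain ⟨ψ, hψ, hode⟩ : ∃ ψ : ℂ × ℂ → ℂ, AnalyticAt ℂ ψ (z0, f z0) ∧ ∀ᶠ p in 𝓝 (z0, f z0),
      HasDerivAt (fun z => ψ (z, p.2)) (P (p.1, ψ p)) p.1 ∧ ψ (z0, p.2) = p.2 := by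
    obtain ⟨α, hα, hα'⟩ := lift_analytic hA
    obtain ⟨β, hβ, hβ'⟩ := lift_analytic hB
    obtain ⟨γ, hγ, hγ'⟩ := lift_analytic hC
    obtain ⟨κ, hκ, hκ'⟩ := lift_analytic hD
    have hfst : ∀ {X : Type} [NormedAddCommGroup X] [NormedSpace ℂ X] {g : X → X} {x y : X},
        AnalyticAt ℂ g x → AnalyticAt ℂ (fun p : X × X => g p.1) (x, y) := by
      intro X _ _ g x y hg
      exact AnalyticAt.fun_comp (g := g) (f := fun p : X × X => p.1) hg analyticAt_fst
    refine ode (P := P) (N := fun q => α q.1 * q.2 ^ 3 + β q.1 * q.2 ^ 2 + γ q.1 * q.2 + κ q.1)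
      ?_ ?_ ?_
    · exact ((((hfst hA).mul (analyticAt_snd.pow 3)).add ((hfst hB).mul (analyticAt_snd.pow 2))).add
        ((hfst hC).mul analyticAt_snd)).add (hfst hD)
    · exact ((((hfst hα).mul (analyticAt_snd.pow 3)).add ((hfst hβ).mul (analyticAt_snd.pow 2))).add
        ((hfst hγ).mul analyticAt_snd)).add (hfst hκ)
    · have := (hα'.and (hβ'.and (hγ'.and hκ'))).prod_inl_nhds (f z0 • (1 : C(unitInterval, ℂ)))
      filter_upwards [this] with q hq s
      simp [P, hq.1 s, hq.2.1 s, hq.2.2.1 s, hq.2.2.2 s]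
  have hψ0 : ψ (z0, f z0) = f z0 := hode.self_of_nhds.2
  have hψR : AnalyticAt ℝ ψ (z0, f z0) := hψ.restrictScalars
  let H : ℂ × ℂ → ℂ := fun p => ψ p - f p.1
  have hH : ContDiffAt ℝ (⊤ : ℕ∞) H (z0, f z0) :=
    hψR.contDiffAt.sub (ContDiffAt.comp (z0, f z0) (g := f) (f := Prod.fst) hf contDiffAt_fst)
  have hH0 : H (z0, f z0) = 0 := by simp [H, hψ0]
  have hne : ((⊤ : ℕ∞) : ℕ∞ω) ≠ 0 := by simp
  have hode2 : ∀ᶠ c in 𝓝 (f z0), ψ (z0, c) = c := by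
    have h1 : ContinuousAt (fun c : ℂ => (z0, c)) (f z0) := by fun_prop
    filter_upwards [h1.eventually hode] with c hc
    exact hc.2
  have hinv : fderiv ℝ H (z0, f z0) ∘L .inr ℝ ℂ ℂ = .id ℝ _ := by
    have h1 := (hH.differentiableAt hne).hasFDerivAt.comp (f z0)
      (hasFDerivAt_prodMk_right (𝕜 := ℝ) z0 (f z0))
    have h2 : HasFDerivAt (H ∘ fun c : ℂ => (z0, c)) (.id ℝ ℂ) (f z0) := by
      refine ((hasFDerivAt_id (𝕜 := ℝ) (f z0)).sub_const (f z0)).congr_of_eventuallyEq ?_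
      filter_upwards [hode2] with c hc
      simp [H, hc]
    exact h1.unique h2
  have hinv' : (fderiv ℝ H (z0, f z0) ∘L .inr ℝ ℂ ℂ).IsInvertible := by
    rw [hinv]
    exact ⟨ContinuousLinearEquiv.refl ℝ _, rfl⟩
  obtain ⟨F, hF⟩ : ∃ F, F = hH.implicitFunction hne hinv' := ⟨_, rfl⟩
  have hFC : ContDiffAt ℝ (⊤ : ℕ∞) F z0 := by
    rw [hF]; exact hH.contDiffAt_implicitFunction hne hinv'
  have hF0 : F z0 = f z0 := by
    rw [hF]; exact hH.implicitFunction_apply_self hne hinv'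
  have hFE : ∀ᶠ z in 𝓝 z0, f z = ψ (z, F z) := by
    have : ∀ᶠ z in 𝓝 z0, H (z, F z) = H (z0, f z0) := by
      rw [hF]; exact hH.eventually_apply_implicitFunction hne hinv'
    filter_upwards [this] with z hz
    rw [hH0] at hz
    exact (sub_eq_zero.1 hz).symm
  -- the derivative of ψ in the second variable is nonzero nearby
  have hψc : fderiv ℂ ψ (z0, f z0) (0, 1) = 1 := by
    have h1 := (hψ.differentiableAt.hasFDerivAt.comp (f z0)
      (hasFDerivAt_prodMk_right (𝕜 := ℂ) z0 (f z0)))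
    have h2 : HasFDerivAt (ψ ∘ fun c : ℂ => (z0, c)) (.id ℂ ℂ) (f z0) := by
      refine (hasFDerivAt_id (𝕜 := ℂ) (f z0)).congr_of_eventuallyEq ?_
      filter_upwards [hode2] with c hc
      simp [hc]
    have h3 := congrArg (fun L => L (1:ℂ)) (h1.unique h2)
    simpa using h3
  have hψc' : ∀ᶠ p in 𝓝 (z0, f z0), fderiv ℂ ψ p (0, 1) ≠ 0 := by
    have h1 : ContinuousAt (fun p => fderiv ℂ ψ p (0, 1)) (z0, f z0) :=
      hψ.fderiv.continuousAt.clm_apply continuousAt_const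
    exact h1.eventually_ne (by rw [hψc]; exact one_ne_zero)
  have hcurve : Tendsto (fun z => (z, F z)) (𝓝 z0) (𝓝 (z0, f z0)) := by
    have h1 : ContinuousAt (fun z => (z, F z)) z0 := continuousAt_id.prodMk hFC.continuousAt
    have h2 := h1.tendsto
    rw [hF0] at h2
    exact h2
  have hFan : AnalyticAt ℝ F z0 := by
    apply antihol
    have hFd : ∀ᶠ z in 𝓝 z0, DifferentiableAt ℝ F z := by
      have h1 : ContDiffAt ℝ 1 F z0 := hFC.of_le (by exact_mod_cast le_top)
      filter_upwards [h1.eventually (by simp)] with z hz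
      exact hz.differentiableAt one_ne_zero
    filter_upwards [hFd, heq, hFE.eventually_nhds, hcurve.eventually hode,
      hcurve.eventually hψc', hcurve.eventually hψ.eventually_analyticAt]
      with z hd he hfe ho hc han
    refine ⟨hd, ?_⟩
    have hψd := han.differentiableAt.hasFDerivAt
    have h10 : fderiv ℂ ψ (z, F z) (1, 0) = P (z, f z) := by
      have h1 := (hψd.comp z (hasFDerivAt_prodMk_left (𝕜 := ℂ) z (F z))).hasDerivAt
      have h2 := h1.unique ho.1
      rw [hfe.self_of_nhds]
      simpa using h2
    have hsplit : ∀ a b : ℂ, fderiv ℂ ψ (z, F z) (a, b) =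
        a * fderiv ℂ ψ (z, F z) (1, 0) + b * fderiv ℂ ψ (z, F z) (0, 1) := by
      intro a b
      have : ((a, b) : ℂ × ℂ) = a • (1, 0) + b • (0, 1) := by simp
      rw [this, map_add, map_smul, map_smul, smul_eq_mul, smul_eq_mul]
    have hfd : HasFDerivAt f (((fderiv ℂ ψ (z, F z)).restrictScalars ℝ).comp
        ((ContinuousLinearMap.id ℝ ℂ).prod (fderiv ℝ F z))) z := by
      have h1 : HasFDerivAt (fun z => (z, F z)) _ z :=
        (hasFDerivAt_id (𝕜 := ℝ) z).prodMk hd.hasFDerivAt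
      exact ((hψd.restrictScalars ℝ).comp z h1).congr_of_eventuallyEq hfe
    have hfv : ∀ v, fderiv ℝ f z v =
        v * P (z, f z) + fderiv ℝ F z v * fderiv ℂ ψ (z, F z) (0, 1) := by
      intro v
      rw [hfd.fderiv, ← h10, ← hsplit]
      rfl
    have he' : (1 / 2 : ℂ) * (fderiv ℝ f z 1 - Complex.I * fderiv ℝ f z Complex.I) = P (z, f z) :=
      he
    rw [hfv, hfv] at he'
    have h4 : wirtingerZ F z * fderiv ℂ ψ (z, F z) (0, 1) = 0 := by
      simp only [wirtingerZ]
      linear_combination he' + (1 / 2 : ℂ) * P (z, f z) * Complex.I_mul_I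
    exact (mul_eq_zero.1 h4).resolve_right hc
  have hfin : AnalyticAt ℝ (fun z => ψ (z, F z)) z0 := by
    apply AnalyticAt.fun_comp (g := ψ) (f := fun z => (z, F z))
    · rw [hF0]; exact hψR
    · exact analyticAt_id.prod hFan
  refine hfin.congr ?_
  filter_upwards [hFE] with z hz
  exact hz.symm

/-- Every `C^∞`-smooth solution `f` of `f_z = A f³ + B f² + C f + D`, with `A, B, C, D`
holomorphic on an open set `U ⊆ ℂ`, is real-analytic on `U`. -/
theorem smooth_solution_is_real_analytic
    (U : Set ℂ) (hU : IsOpen U)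
    (A B C D : ℂ → ℂ)
    (hA : DifferentiableOn ℂ A U) (hB : DifferentiableOn ℂ B U)
    (hC : DifferentiableOn ℂ C U) (hD : DifferentiableOn ℂ D U)
    (f : ℂ → ℂ) (hf : ContDiffOn ℝ (⊤ : ℕ∞) f U)
    (heq : ∀ z ∈ U, wirtingerZ f z = A z * (f z) ^ 3 + B z * (f z) ^ 2 + C z * f z + D z) :
    AnalyticOnNhd ℝ f U := by
  intro z0 hz0
  have hn := hU.mem_nhds hz0
  refine local_main (hA.analyticAt hn) (hB.analyticAt hn) (hC.analyticAt hn) (hD.analyticAt hn)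
    (hf.contDiffAt hn) ?_
  filter_upwards [hn] with z hz
  exact heq z hz
end

section
/- Let U ⊆ ℂ be an open set and let F : U → ℂ be a C^∞-smooth function such that the Wirtinger derivative F_z is real-analytic on U. Then F is real-analytic on U. -/
open Complex

open scoped Topology

/-- Multilinear form attached to a coefficient family indexed by subsets. -/
noncomputable def monoForm (n : ℕ) (c : Finset (Fin n) → ℂ) :
    ContinuousMultilinearMap ℂ (fun _ : Fin n => ℂ × ℂ) ℂ :=
  ∑ s : Finset (Fin n), c s •
    (ContinuousMultilinearMap.mkPiAlgebra ℂ (Fin n) ℂ).compContinuousLinearMap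
      (fun i => if i ∈ s then ContinuousLinearMap.fst ℂ ℂ ℂ else ContinuousLinearMap.snd ℂ ℂ ℂ)

lemma monoForm_diag (n : ℕ) (c : Finset (Fin n) → ℂ) (u : ℂ × ℂ) :
    monoForm n c (fun _ => u) =
      ∑ s : Finset (Fin n), c s * (u.1 ^ s.card * u.2 ^ (n - s.card)) := by
  simp only [monoForm, _root_.sum_apply, _root_.smul_apply,
    ContinuousMultilinearMap.compContinuousLinearMap_apply,
    ContinuousMultilinearMap.mkPiAlgebra_apply, smul_eq_mul]
  refine Finset.sum_congr rfl fun s _ => ?_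
  congr 1
  have : ∀ i : Fin n, (if i ∈ s then ContinuousLinearMap.fst ℂ ℂ ℂ
      else ContinuousLinearMap.snd ℂ ℂ ℂ) u = if i ∈ s then u.1 else u.2 := by
    intro i; split_ifs <;> rfl
  simp only [this]
  rw [Finset.prod_ite]
  simp only [Finset.prod_const]
  congr 2
  · congr 1; ext i; simp
  · rw [show (Finset.univ.filter fun i => i ∉ s) = sᶜ by ext i; simp, Finset.card_compl,
      Fintype.card_fin]

lemma monoForm_norm (n : ℕ) (c : Finset (Fin n) → ℂ) (M : ℝ) (hM : ∀ s, ‖c s‖ ≤ M) :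
    ‖monoForm n c‖ ≤ 2 ^ n * M := by
  have h1 : ∀ s : Finset (Fin n), ‖c s •
    (ContinuousMultilinearMap.mkPiAlgebra ℂ (Fin n) ℂ).compContinuousLinearMap
      (fun i => if i ∈ s then ContinuousLinearMap.fst ℂ ℂ ℂ
        else ContinuousLinearMap.snd ℂ ℂ ℂ)‖ ≤ M := by
    intro s
    rw [norm_smul]
    have h2 := ContinuousMultilinearMap.norm_compContinuousLinearMap_le
      (ContinuousMultilinearMap.mkPiAlgebra ℂ (Fin n) ℂ)
      (fun i => if i ∈ s then ContinuousLinearMap.fst ℂ ℂ ℂ else ContinuousLinearMap.snd ℂ ℂ ℂ)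
    rw [ContinuousMultilinearMap.norm_mkPiAlgebra, one_mul] at h2
    have h3 : ∏ i : Fin n, ‖(if i ∈ s then ContinuousLinearMap.fst ℂ ℂ ℂ
        else ContinuousLinearMap.snd ℂ ℂ ℂ)‖ ≤ 1 := by
      apply Finset.prod_le_one
      · intros; positivity
      · intro i _
        split_ifs
        · exact ContinuousLinearMap.norm_fst_le ..
        · exact ContinuousLinearMap.norm_snd_le ..
    calc _ ≤ ‖c s‖ * 1 := by gcongr; exact h2.trans h3
      _ ≤ M := by simpa using hM s
  refine (norm_sum_le _ _).trans ((Finset.sum_le_sum fun s _ => h1 s).trans ?_)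
  simp

lemma expand_diag {𝕜 E : Type*} [NontriviallyNormedField 𝕜] [NormedAddCommGroup E]
    [NormedSpace 𝕜 E] [NormedSpace 𝕜 ℂ] (n : ℕ)
    (f : ContinuousMultilinearMap 𝕜 (fun _ : Fin n => E) ℂ) (a b : 𝕜) (v w : E) :
    f (fun _ => a • v + b • w) = ∑ s : Finset (Fin n),
      (a ^ s.card * b ^ (n - s.card)) • f (s.piecewise (fun _ => v) (fun _ => w)) := by
  have h := f.map_add_univ (fun _ => a • v) (fun _ => b • w)
  refine Eq.trans (by rfl) (h.trans ?_)
  refine Finset.sum_congr rfl fun s _ => ?_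
  have h2 := f.map_smul_univ (fun i => if i ∈ s then a else b)
    (s.piecewise (fun _ => v) (fun _ => w))
  rw [Finset.prod_ite] at h2
  simp only [Finset.prod_const] at h2
  rw [show (Finset.univ.filter fun i => i ∉ s) = sᶜ by ext i; simp, Finset.card_compl,
      Fintype.card_fin, show (Finset.univ.filter fun i => i ∈ s) = s by ext i; simp] at h2
  rw [← h2]
  congr 1
  ext i
  by_cases hi : i ∈ s <;> simp [hi]

lemma coeff_norm {𝕜 E : Type*} [NontriviallyNormedField 𝕜] [NormedAddCommGroup E]
    [NormedSpace 𝕜 E] [NormedSpace 𝕜 ℂ] (n : ℕ)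
    (f : ContinuousMultilinearMap 𝕜 (fun _ : Fin n => E) ℂ) (v w : E) (hv : ‖v‖ ≤ 1)
    (hw : ‖w‖ ≤ 1) (s : Finset (Fin n)) :
    ‖f (s.piecewise (fun _ => v) (fun _ => w))‖ ≤ ‖f‖ := by
  refine (f.le_opNorm _).trans ?_
  have : ∏ i, ‖s.piecewise (fun _ => v) (fun _ => w) i‖ ≤ 1 := by
    apply Finset.prod_le_one
    · intros; positivity
    · intro i _
      by_cases hi : i ∈ s <;> simp [hi, hv, hw]
  exact mul_le_of_le_one_right (norm_nonneg _) this

lemma monoSeries_radius {𝕜 E : Type*} [NontriviallyNormedField 𝕜] [NormedAddCommGroup E]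
    [NormedSpace 𝕜 E] [NormedSpace 𝕜 ℂ] (p : FormalMultilinearSeries 𝕜 E ℂ)
    (hp : 0 < p.radius) (c : (n : ℕ) → Finset (Fin n) → ℂ) (hc : ∀ n s, ‖c n s‖ ≤ ‖p n‖) :
    0 < FormalMultilinearSeries.radius
      (fun n => monoForm n (c n) : FormalMultilinearSeries ℂ (ℂ × ℂ) ℂ) := by
  obtain ⟨r, hr0, hr⟩ := ENNReal.lt_iff_exists_nnreal_btwn.1 hp
  obtain ⟨C, hC, h⟩ := p.norm_mul_pow_le_of_lt_radius hr
  have hr0' : 0 < r := by exact_mod_cast hr0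
  have : ((r / 2 : NNReal) : ENNReal) ≤ FormalMultilinearSeries.radius
      (fun n => monoForm n (c n) : FormalMultilinearSeries ℂ (ℂ × ℂ) ℂ) := by
    apply FormalMultilinearSeries.le_radius_of_bound _ C
    intro n
    calc _ ≤ (2 ^ n * ‖p n‖) * ((r / 2 : NNReal) : ℝ) ^ n := by
          gcongr; exact monoForm_norm n _ _ (hc n)
      _ = ‖p n‖ * r ^ n := by
          push_cast; rw [div_pow]; field_simp
      _ ≤ C := h n
  refine lt_of_lt_of_le ?_ this
  exact_mod_cast (by positivity : 0 < r / 2)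

/-- Complexification. -/
lemma exists_complexification (g : ℂ → ℂ) (z₀ : ℂ) (hg : AnalyticAt ℝ g z₀) :
    ∃ k : ℂ × ℂ → ℂ, AnalyticAt ℂ k 0 ∧
      ∀ᶠ h in 𝓝 (0 : ℂ), g (z₀ + h) = k (h, (starRingEnd ℂ) h) := by
  obtain ⟨p, hp⟩ := hg
  let c : (n : ℕ) → Finset (Fin n) → ℂ :=
    fun n s => p n (s.piecewise (fun _ => 1) (fun _ => I))
  let P : FormalMultilinearSeries ℂ (ℂ × ℂ) ℂ := fun n => monoForm n (c n)
  have hP : 0 < P.radius := monoSeries_radius p hp.radius_pos c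
    (fun n s => coeff_norm n (p n) 1 I (by simp) (by simp) s)
  have hPa : AnalyticAt ℂ P.sum 0 := (P.hasFPowerSeriesOnBall hP).analyticAt
  refine ⟨fun u => P.sum ((u.1 + u.2) / 2, (u.1 - u.2) / (2 * I)), ?_, ?_⟩
  · have h1 : AnalyticAt ℂ (fun u : ℂ × ℂ => ((u.1 + u.2) / 2, (u.1 - u.2) / (2 * I))) 0 := by
      refine AnalyticAt.prod ?_ ?_
      · exact (analyticAt_fst.add analyticAt_snd).div_const
      · exact (analyticAt_fst.sub analyticAt_snd).div_const
    exact AnalyticAt.fun_comp (by simpa [← Prod.zero_eq_mk] using hPa) h1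
  · filter_upwards [hp.eventually_hasSum] with h hh
    rw [← hh.tsum_eq]
    have hre : (h + (starRingEnd ℂ) h) / 2 = (h.re : ℂ) := by
      rw [Complex.add_conj]; push_cast; ring
    have him : (h - (starRingEnd ℂ) h) / (2 * I) = (h.im : ℂ) := by
      rw [Complex.sub_conj]; push_cast; field_simp [I_ne_zero]
    simp only [hre, him]
    unfold FormalMultilinearSeries.sum
    refine tsum_congr fun n => ?_
    have h1 := expand_diag n (p n) h.re h.im 1 I
    rw [show h.re • (1 : ℂ) + h.im • I = h by simp [Complex.re_add_im]] at h1
    rw [h1]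
    simp only [P, monoForm_diag]
    refine Finset.sum_congr rfl fun s _ => ?_
    simp only [c, Complex.real_smul]
    push_cast
    ring

/-- Primitive in the first variable. -/
lemma exists_primitive (k : ℂ × ℂ → ℂ) (hk : AnalyticAt ℂ k 0) :
    ∃ K : ℂ × ℂ → ℂ, AnalyticAt ℂ K 0 ∧
      ∀ᶠ u in 𝓝 (0 : ℂ × ℂ), HasDerivAt (fun z => K (z, u.2)) (k u) u.1 := by
  obtain ⟨p, hp⟩ := hk
  let c : (n : ℕ) → Finset (Fin n) → ℂ :=
    fun n s => p n (s.piecewise (fun _ => (1, 0)) (fun _ => (0, 1)))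
  let d : (n : ℕ) → Finset (Fin n) → ℂ := fun n s => c n s / ((s.card : ℂ) + 1)
  have hc : ∀ n s, ‖c n s‖ ≤ ‖p n‖ := fun n s =>
    coeff_norm n (p n) (1, 0) (0, 1) (by simp) (by simp) s
  have hd : ∀ n s, ‖d n s‖ ≤ ‖p n‖ := fun n s => by
    refine le_trans ?_ (hc n s)
    simp only [d, norm_div]
    apply div_le_self (norm_nonneg _)
    have : ((s.card : ℂ) + 1) = ((s.card + 1 : ℕ) : ℂ) := by push_cast; rfl
    rw [this, Complex.norm_natCast]
    push_cast
    linarith [Nat.cast_nonneg (α := ℝ) s.card]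
  let P : FormalMultilinearSeries ℂ (ℂ × ℂ) ℂ := fun n => monoForm n (d n)
  have hP : 0 < P.radius := monoSeries_radius p hp.radius_pos d hd
  have hPa : AnalyticAt ℂ P.sum 0 := (P.hasFPowerSeriesOnBall hP).analyticAt
  refine ⟨fun u => u.1 * P.sum u, analyticAt_fst.mul hPa, ?_⟩
  obtain ⟨r, hr0, hr⟩ := ENNReal.lt_iff_exists_nnreal_btwn.1 hp.radius_pos
  have hr0' : (0 : ℝ) < r := by exact_mod_cast hr0
  filter_upwards [hp.eventually_hasSum, Metric.ball_mem_nhds (0 : ℂ × ℂ) hr0'] with u hu hur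
  rw [zero_add] at hu
  rw [← hu.tsum_eq]
  have hur' : ‖u.1‖ < r ∧ ‖u.2‖ < r := by
    rw [mem_ball_zero_iff, Prod.norm_def] at hur
    exact max_lt_iff.1 hur
  have key := hasDerivAt_tsum_of_isPreconnected (𝕜 := ℂ)
    (g := fun n z => z * P n (fun _ => (z, u.2))) (g' := fun n z => p n (fun _ => (z, u.2)))
    (t := Metric.ball (0 : ℂ) r) (y₀ := 0) (y := u.1)
    (p.summable_norm_mul_pow hr) Metric.isOpen_ball (convex_ball _ _).isPreconnected ?_ ?_
    (by simpa using hr0') (by simpa using summable_zero) (by simpa using hur'.1)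
  · refine key.congr_of_eventuallyEq (Filter.Eventually.of_forall fun z => ?_)
    exact (tsum_mul_left (f := fun n => P n (fun _ => (z, u.2)))).symm
  · intro n z _
    have h1 := expand_diag n (p n) z u.2 (1, 0) (0, 1)
    rw [show z • ((1, 0) : ℂ × ℂ) + u.2 • ((0, 1) : ℂ × ℂ) = (z, u.2) by simp] at h1
    simp only [P, monoForm_diag, Finset.mul_sum]
    rw [h1]
    apply HasDerivAt.fun_sum
    intro s _
    have h2 := ((hasDerivAt_pow (s.card + 1) z).const_mul (d n s)).mul_const (u.2 ^ (n - s.card))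
    have hne : (s.card : ℂ) + 1 ≠ 0 := Nat.cast_add_one_ne_zero s.card
    refine HasDerivAt.congr_of_eventuallyEq (HasDerivAt.congr_deriv h2 (Eq.symm ?_))
      (Filter.Eventually.of_forall fun y => ?_)
    · have hdc : d n s * ((s.card : ℂ) + 1) = c n s := div_mul_cancel₀ _ hne
      change (z ^ s.card * u.2 ^ (n - s.card)) * c n s = _
      rw [← hdc, Nat.add_sub_cancel]
      push_cast
      ring
    · change y * (d n s * (y ^ s.card * u.2 ^ (n - s.card))) = _
      ring
  · intro n z hz
    refine ((p n).le_opNorm _).trans ?_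
    simp only [Finset.prod_const, Finset.card_univ, Fintype.card_fin]
    have : ‖((z, u.2) : ℂ × ℂ)‖ ≤ r := by
      rw [Prod.norm_def]
      exact max_le (by simpa using (mem_ball_zero_iff.1 hz).le) hur'.2.le
    gcongr

lemma analyticAt_real_conj (z : ℂ) : AnalyticAt ℝ (fun z : ℂ => (starRingEnd ℂ) z) z :=
  Complex.conjCLE.toContinuousLinearMap.analyticAt z

lemma exists_wirtinger_primitive (g : ℂ → ℂ) (z₀ : ℂ) (hg : AnalyticAt ℝ g z₀) :
    ∃ G : ℂ → ℂ, AnalyticAt ℝ G z₀ ∧ ∀ᶠ z in 𝓝 z₀, wirtingerZ G z = g z := by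
  obtain ⟨k, hk, hgk⟩ := exists_complexification g z₀ hg
  obtain ⟨K, hK, hKk⟩ := exists_primitive k hk
  let e : ℂ → ℂ × ℂ := fun z => (z - z₀, (starRingEnd ℂ) (z - z₀))
  have he0 : e z₀ = 0 := by simp [e]
  have hsub : Filter.Tendsto (fun z => z - z₀) (𝓝 z₀) (𝓝 0) := by
    have : ContinuousAt (fun z => z - z₀) z₀ := by fun_prop
    simpa [ContinuousAt] using this
  have hea : AnalyticAt ℝ e z₀ := by
    have h1 : AnalyticAt ℝ (fun z : ℂ => z - z₀) z₀ := analyticAt_id.sub analyticAt_const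
    exact h1.prod ((analyticAt_real_conj _).fun_comp h1)
  have hec : Filter.Tendsto e (𝓝 z₀) (𝓝 0) := by
    simpa [ContinuousAt, he0] using hea.continuousAt
  refine ⟨fun z => K (e z), AnalyticAt.fun_comp (by rw [he0]; exact hK.restrictScalars) hea, ?_⟩
  filter_upwards [hsub.eventually hgk, hec.eventually hKk, hec.eventually hK.eventually_analyticAt]
    with z h1 h2 h3
  rw [add_sub_cancel] at h1
  rw [h1]
  have hKd := h3.differentiableAt.hasFDerivAt
  set L := fderiv ℂ K (e z) with hL
  have hL1 : L (1, 0) = k (e z) := by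
    have h4 : HasDerivAt (fun y : ℂ => (y, (e z).2)) ((1 : ℂ), (0 : ℂ)) (e z).1 :=
      (hasDerivAt_id _).prodMk (hasDerivAt_const _ _)
    exact (HasFDerivAt.comp_hasDerivAt (e z).1 (f := fun y : ℂ => (y, (e z).2)) hKd h4).unique h2
  have hed : HasFDerivAt e ((ContinuousLinearMap.id ℝ ℂ).prod
      (Complex.conjCLE.toContinuousLinearMap)) z := by
    have h5 : HasFDerivAt (fun z : ℂ => z - z₀) (ContinuousLinearMap.id ℝ ℂ) z :=
      (hasFDerivAt_id z).sub_const z₀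
    exact h5.prodMk ((Complex.conjCLE.toContinuousLinearMap.hasFDerivAt).comp z h5)
  have hGd := (hKd.restrictScalars ℝ).comp z hed
  have hGd' : fderiv ℝ (fun z => K (e z)) z = _ := hGd.fderiv
  simp only [wirtingerZ, hGd']
  have a1 : L (1, 1) = L (1, 0) + L (0, 1) := by rw [← map_add]; simp
  have a2 : L (I, -I) = I * L (1, 0) - I * L (0, 1) := by
    rw [← smul_eq_mul, ← smul_eq_mul, ← map_smul, ← map_smul, ← map_sub]; simp
  change _ = k (e z)
  rw [← hL1]
  simp [a1, a2]
  linear_combination (1 / 2 * L (0, 1) - 1 / 2 * L (1, 0)) * I_mul_I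

/-- If `F` is `C^∞`-smooth on an open set `U ⊆ ℂ` and its Wirtinger derivative `F_z` is
real-analytic on `U`, then `F` itself is real-analytic on `U` (integration step: locally
`F = ∫ F_z dz + φ(z̄)` with `φ` antiholomorphic). -/
theorem real_analytic_of_wirtingerZ_real_analytic
    (U : Set ℂ) (hU : IsOpen U)
    (F : ℂ → ℂ) (hF : ContDiffOn ℝ (⊤ : ℕ∞) F U)
    (hFz : AnalyticOnNhd ℝ (wirtingerZ F) U) :
    AnalyticOnNhd ℝ F U := by
  intro z₀ hz₀
  obtain ⟨G, hG, hGz⟩ := exists_wirtinger_primitive _ z₀ (hFz z₀ hz₀)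
  have hψ : AnalyticAt ℂ (fun z => (starRingEnd ℂ) (F z - G z)) z₀ := by
    rw [Complex.analyticAt_iff_eventually_differentiableAt]
    filter_upwards [hU.mem_nhds hz₀, hGz, hG.eventually_analyticAt] with z hz h1 h2
    have hFd : DifferentiableAt ℝ F z :=
      (hF.differentiableOn (by simp)).differentiableAt (hU.mem_nhds hz)
    have h3 := (Complex.conjCLE.toContinuousLinearMap.hasFDerivAt).comp z
      (hFd.hasFDerivAt.sub h2.differentiableAt.hasFDerivAt)
    have h4 : HasFDerivAt (fun z => (starRingEnd ℂ) (F z - G z)) _ z := h3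
    rw [differentiableAt_complex_iff_differentiableAt_real]
    refine ⟨h4.differentiableAt, ?_⟩
    rw [h4.fderiv]
    simp only [wirtingerZ] at h1
    have h5 : fderiv ℝ F z 1 - fderiv ℝ G z 1 = I * (fderiv ℝ F z I - fderiv ℝ G z I) := by
      linear_combination -2 * h1
    have h6 := congrArg (starRingEnd ℂ) h5
    simp only [map_sub, map_mul, Complex.conj_I] at h6
    simp
    rw [h6]
    linear_combination ((starRingEnd ℂ) (fderiv ℝ F z I) - (starRingEnd ℂ) (fderiv ℝ G z I)) * I_mul_I
  have h7 := (AnalyticAt.fun_comp (analyticAt_real_conj _) hψ.restrictScalars).add hG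
  refine h7.congr (Filter.Eventually.of_forall fun z => ?_)
  simp
end

section
/- Let U ⊆ ℂ be an open set and let μ : U → ℂ be a C^∞-smooth function satisfying μ_{zz̄z̄} − 3·μ_{zz̄}·μ + 2·μ_z·μ² − μ_z·μ_{z̄} = 0 at every point of U. Then μ is real-analytic on U. -/
open Complex

/-! ### Fourier analysis on circles -/

/-- Polar coordinates. -/
noncomputable def lbC (r θ : ℝ) : ℂ := (r : ℂ) * Complex.exp ((θ : ℂ) * I)

/-- character -/
noncomputable def lbE (n : ℤ) (θ : ℝ) : ℂ := Complex.exp (-((n : ℂ) * (θ : ℂ) * I))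

/-- Fourier coefficient of `f` on the circle of radius `r`. -/
noncomputable def lbF (f : ℂ → ℂ) (r : ℝ) (n : ℤ) : ℂ :=
  ((2 * Real.pi : ℝ) : ℂ)⁻¹ * ∫ θ in (0 : ℝ)..(2 * Real.pi), f (lbC r θ) * lbE n θ

/-- mean square on the circle of radius `r`. -/
noncomputable def lbM (f : ℂ → ℂ) (r : ℝ) : ℝ :=
  (2 * Real.pi)⁻¹ * ∫ θ in (0 : ℝ)..(2 * Real.pi), ‖f (lbC r θ)‖ ^ 2

lemma lbC_cont : Continuous (fun p : ℝ × ℝ => lbC p.1 p.2) := by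
  unfold lbC; fun_prop

lemma lbC_cont' (r : ℝ) : Continuous (lbC r) := by
  unfold lbC; fun_prop

lemma lbE_cont (n : ℤ) : Continuous (lbE n) := by
  unfold lbE; fun_prop

lemma lbE_norm (n : ℤ) (θ : ℝ) : ‖lbE n θ‖ = 1 := by
  unfold lbE
  have : -((n : ℂ) * (θ : ℂ) * I) = ((-(n * θ) : ℝ) : ℂ) * I := by push_cast; ring
  rw [this, Complex.norm_exp_ofReal_mul_I]

lemma lbC_norm {r : ℝ} (hr : 0 ≤ r) (θ : ℝ) : ‖lbC r θ‖ = r := by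
  unfold lbC
  rw [norm_mul, Complex.norm_exp_ofReal_mul_I]
  simp [abs_of_nonneg hr]

lemma lbF_eq (f : ℂ → ℂ) (r : ℝ) (n : ℤ) :
    lbF f r n = fourierCoeffOn Real.two_pi_pos (fun θ => f (lbC r θ)) n := by
  rw [fourierCoeffOn_eq_integral, lbF]
  rw [Complex.real_smul]
  simp only [sub_zero, one_div]
  congr 1
  · push_cast; ring
  · apply intervalIntegral.integral_congr
    intro x _
    simp only [smul_eq_mul]
    rw [mul_comm, fourier_coe_apply]
    congr 1
    unfold lbE
    congr 1
    have : (Real.pi : ℂ) ≠ 0 := by exact_mod_cast Real.pi_ne_zero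
    push_cast
    rw [sub_zero]
    field_simp

lemma lb_parseval {f : ℂ → ℂ} (hf : Continuous f) (r : ℝ) :
    HasSum (fun n => ‖lbF f r n‖ ^ 2) (lbM f r) := by
  have hc : Continuous (fun θ => f (lbC r θ)) := hf.comp (lbC_cont' r)
  have h := hasSum_sq_fourierCoeffOn (f := fun θ => f (lbC r θ)) Real.two_pi_pos (by
    have : MeasureTheory.MemLp (fun θ => f (lbC r θ)) 2
        (MeasureTheory.volume.restrict (Set.Icc 0 (2 * Real.pi))) := by
      obtain ⟨C, hC⟩ := isCompact_Icc.exists_bound_of_continuousOn (s := Set.Icc (0:ℝ) (2 * Real.pi))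
        hc.continuousOn
      refine MeasureTheory.MemLp.of_bound hc.aestronglyMeasurable C ?_
      refine (MeasureTheory.ae_restrict_iff' measurableSet_Icc).2 (Filter.Eventually.of_forall hC)
    exact this.mono_measure (MeasureTheory.Measure.restrict_mono Set.Ioc_subset_Icc_self le_rfl))
  simp only [← lbF_eq, sub_zero, smul_eq_mul] at h
  exact h

lemma lbF_cont {f : ℂ → ℂ} (hf : Continuous f) (n : ℤ) : Continuous (fun r => lbF f r n) := by
  unfold lbF
  refine continuous_const.mul ?_
  apply intervalIntegral.continuous_parametric_intervalIntegral_of_continuous'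
  exact (hf.comp lbC_cont).mul ((lbE_cont n).comp continuous_snd)

lemma lbM_cont {f : ℂ → ℂ} (hf : Continuous f) : Continuous (fun r => lbM f r) := by
  unfold lbM
  refine continuous_const.mul ?_
  apply intervalIntegral.continuous_parametric_intervalIntegral_of_continuous'
  exact ((hf.comp lbC_cont).norm.pow 2)

lemma lbF_int {f : ℂ → ℂ} (hf : Continuous f) (r : ℝ) (n : ℤ) :
    IntervalIntegrable (fun θ => f (lbC r θ) * lbE n θ) MeasureTheory.volume 0 (2 * Real.pi) :=
  ((hf.comp (lbC_cont' r)).mul (lbE_cont n)).intervalIntegrable _ _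

lemma lbF_add {f g : ℂ → ℂ} (hf : Continuous f) (hg : Continuous g) (r : ℝ) (n : ℤ) :
    lbF (fun z => f z + g z) r n = lbF f r n + lbF g r n := by
  unfold lbF
  rw [← mul_add, ← intervalIntegral.integral_add (lbF_int hf r n) (lbF_int hg r n)]
  simp only [add_mul]

lemma lbF_sub {f g : ℂ → ℂ} (hf : Continuous f) (hg : Continuous g) (r : ℝ) (n : ℤ) :
    lbF (fun z => f z - g z) r n = lbF f r n - lbF g r n := by
  unfold lbF
  rw [← mul_sub, ← intervalIntegral.integral_sub (lbF_int hf r n) (lbF_int hg r n)]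
  simp only [sub_mul]

lemma lbF_const_mul (c : ℂ) (f : ℂ → ℂ) (r : ℝ) (n : ℤ) :
    lbF (fun z => c * f z) r n = c * lbF f r n := by
  unfold lbF
  simp only [mul_assoc c]
  rw [intervalIntegral.integral_const_mul]
  ring

lemma lbF_bound {f : ℂ → ℂ} {r K : ℝ} (hr : 0 ≤ r) (hK : ∀ z, ‖z‖ ≤ r → ‖f z‖ ≤ K) (n : ℤ) :
    ‖lbF f r n‖ ≤ K := by
  unfold lbF
  have h := intervalIntegral.norm_integral_le_of_norm_le_const (a := 0) (b := 2 * Real.pi)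
    (f := fun θ => f (lbC r θ) * lbE n θ) (C := K) (by
      intro θ _
      rw [norm_mul, lbE_norm, mul_one]
      exact hK _ (lbC_norm hr θ).le)
  rw [sub_zero, abs_of_pos Real.two_pi_pos] at h
  rw [norm_mul, norm_inv, Complex.norm_real, Real.norm_of_nonneg Real.two_pi_pos.le]
  have := Real.two_pi_pos
  rw [inv_mul_le_iff₀ this]
  linarith

lemma lbM_le_const {f : ℂ → ℂ} (hf : Continuous f) {r K : ℝ} (hr : 0 ≤ r)
    (hK : ∀ z, ‖z‖ ≤ r → ‖f z‖ ^ 2 ≤ K) : lbM f r ≤ K := by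
  unfold lbM
  rw [inv_mul_le_iff₀ Real.two_pi_pos]
  have : ∫ θ in (0 : ℝ)..(2 * Real.pi), ‖f (lbC r θ)‖ ^ 2 ≤ ∫ θ in (0 : ℝ)..(2 * Real.pi), K := by
    apply intervalIntegral.integral_mono Real.two_pi_pos.le
    · exact ((hf.comp (lbC_cont' r)).norm.pow 2).intervalIntegrable _ _
    · exact continuous_const.intervalIntegrable _ _
    · intro θ; exact hK _ (lbC_norm hr θ).le
  simpa using this

lemma lbM_nonneg (f : ℂ → ℂ) (r : ℝ) : 0 ≤ lbM f r := by
  unfold lbM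
  refine mul_nonneg (inv_nonneg.2 Real.two_pi_pos.le) ?_
  exact intervalIntegral.integral_nonneg Real.two_pi_pos.le (fun _ _ => by positivity)

/-- vanishing mean square implies vanishing -/
lemma lbM_eq_zero {f : ℂ → ℂ} {z : ℂ} (hf : Continuous (fun θ => f (lbC ‖z‖ θ))) (h : lbM f ‖z‖ ≤ 0) : f z = 0 := by
  by_contra hz
  have hc : Continuous (fun θ => ‖f (lbC ‖z‖ θ)‖ ^ 2) := hf.norm.pow 2
  obtain ⟨θ, hθ, hθz⟩ : ∃ θ ∈ Set.Icc (0:ℝ) (2 * Real.pi), lbC ‖z‖ θ = z := by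
    have hz' := Complex.norm_mul_exp_arg_mul_I z
    rcases le_or_gt 0 (Complex.arg z) with h0 | h0
    · exact ⟨Complex.arg z, ⟨h0, by linarith [Complex.arg_le_pi z, Real.pi_pos]⟩, hz'⟩
    · refine ⟨Complex.arg z + 2 * Real.pi, ⟨by linarith [Complex.neg_pi_lt_arg z, Real.pi_pos],
        by linarith⟩, ?_⟩
      unfold lbC
      push_cast
      rw [add_mul, Complex.exp_add, Complex.exp_two_pi_mul_I, mul_one, hz']
  have hpos : 0 < ∫ θ in (0 : ℝ)..(2 * Real.pi), ‖f (lbC ‖z‖ θ)‖ ^ 2 := by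
    apply intervalIntegral.integral_pos Real.two_pi_pos hc.continuousOn (fun _ _ => by positivity)
    exact ⟨θ, hθ, by rw [hθz]; positivity⟩
  unfold lbM at h
  have := mul_pos (inv_pos.2 Real.two_pi_pos) hpos
  linarith

lemma lbC_hasDerivAt_theta (r θ : ℝ) : HasDerivAt (lbC r) (I * lbC r θ) θ := by
  unfold lbC
  have h1 : HasDerivAt (fun θ : ℝ => (θ : ℂ) * I) I θ := by
    simpa using (Complex.ofRealCLM.hasDerivAt (x := θ)).mul_const I
  exact ((h1.cexp).const_mul (r : ℂ)).congr_deriv (by ring)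

lemma lbC_hasDerivAt_r (r θ : ℝ) :
    HasDerivAt (fun r => lbC r θ) (Complex.exp ((θ : ℂ) * I)) r := by
  unfold lbC
  simpa using (Complex.ofRealCLM.hasDerivAt (x := r)).mul_const (Complex.exp ((θ : ℂ) * I))

lemma lbE_hasDerivAt (n : ℤ) (θ : ℝ) : HasDerivAt (lbE n) (-((n : ℂ) * I) * lbE n θ) θ := by
  unfold lbE
  have h1 : HasDerivAt (fun θ : ℝ => -((n : ℂ) * (θ : ℂ) * I)) (-((n : ℂ) * I)) θ := by
    have := (((Complex.ofRealCLM.hasDerivAt (x := θ)).const_mul (n : ℂ)).mul_const I).fun_neg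
    simpa using this
  exact h1.cexp.congr_deriv (by ring)

/-- rotation vector field -/
noncomputable def lbT (f : ℂ → ℂ) : ℂ → ℂ := fun z => fderiv ℝ f z (I * z)

lemma lbT_contDiff {f : ℂ → ℂ} (hf : ContDiff ℝ (⊤ : ℕ∞) f) : ContDiff ℝ (⊤ : ℕ∞) (lbT f) := by
  unfold lbT
  have h1 : ContDiff ℝ (⊤ : ℕ∞) (fderiv ℝ f) := hf.fderiv_right (by simp)
  exact h1.clm_apply (contDiff_const.mul contDiff_id)

lemma lbT_cont {f : ℂ → ℂ} (hf : ContDiff ℝ 1 f) : Continuous (lbT f) := by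
  unfold lbT
  have h1 : Continuous (fderiv ℝ f) := hf.continuous_fderiv (by simp)
  exact h1.clm_apply (continuous_const.mul continuous_id)

lemma lbF_rot {f : ℂ → ℂ} (hf : ContDiff ℝ 1 f) (r : ℝ) (n : ℤ) :
    lbF (lbT f) r n = I * n * lbF f r n := by
  have hd : ∀ θ : ℝ, HasDerivAt (fun θ => f (lbC r θ) * lbE n θ)
      (lbT f (lbC r θ) * lbE n θ + f (lbC r θ) * (-((n : ℂ) * I) * lbE n θ)) θ := by
    intro θ
    have h1 : HasFDerivAt f (fderiv ℝ f (lbC r θ)) (lbC r θ) :=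
      ((hf.differentiable (by simp)) _).hasFDerivAt
    exact (h1.comp_hasDerivAt θ (lbC_hasDerivAt_theta r θ)).mul (lbE_hasDerivAt n θ)
  have hi1 := lbF_int (lbT_cont hf) r n
  have hi2 := lbF_int hf.continuous r n
  have hi3 : IntervalIntegrable (fun θ => f (lbC r θ) * (-((n : ℂ) * I) * lbE n θ))
      MeasureTheory.volume 0 (2 * Real.pi) := by
    have := hi2.const_mul (-((n : ℂ) * I))
    refine this.congr ?_
    intro x _
    simp only []
    ring
  have hz := intervalIntegral.integral_eq_sub_of_hasDerivAt (fun θ _ => hd θ) (hi1.add hi3)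
  have hper : f (lbC r (2 * Real.pi)) * lbE n (2 * Real.pi) - f (lbC r 0) * lbE n 0 = 0 := by
    have e1 : lbC r (2 * Real.pi) = lbC r 0 := by
      unfold lbC; push_cast; rw [Complex.exp_two_pi_mul_I]; simp
    have e2 : lbE n (2 * Real.pi) = lbE n 0 := by
      unfold lbE
      have : -((n : ℂ) * ((2 * Real.pi : ℝ) : ℂ) * I) = ((-n : ℤ) : ℂ) * (2 * Real.pi * I) := by
        push_cast; ring
      rw [this, Complex.exp_int_mul_two_pi_mul_I]; simp
    rw [e1, e2, sub_self]
  rw [hper] at hz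
  rw [intervalIntegral.integral_add hi1 hi3] at hz
  have e3 : ∫ θ in (0:ℝ)..(2 * Real.pi), f (lbC r θ) * (-((n : ℂ) * I) * lbE n θ)
      = -((n : ℂ) * I) * ∫ θ in (0:ℝ)..(2 * Real.pi), f (lbC r θ) * lbE n θ := by
    rw [← intervalIntegral.integral_const_mul]
    congr 1; ext θ; ring
  rw [e3] at hz
  unfold lbF
  linear_combination ((2 * Real.pi : ℝ) : ℂ)⁻¹ * hz

lemma wirtingerZbar_cont {f : ℂ → ℂ} (hf : ContDiff ℝ 1 f) : Continuous (wirtingerZbar f) := by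
  unfold wirtingerZbar
  have h1 : Continuous (fderiv ℝ f) := hf.continuous_fderiv (by simp)
  exact continuous_const.mul ((h1.clm_apply continuous_const).add
    (continuous_const.mul (h1.clm_apply continuous_const)))

lemma lb_polar (f : ℂ → ℂ) (z : ℂ) (θ : ℝ) :
    fderiv ℝ f z (Complex.exp ((θ : ℂ) * I))
      = 2 * Complex.exp (-((θ : ℂ) * I)) * wirtingerZbar f z
        - I * fderiv ℝ f z (I * Complex.exp ((θ : ℂ) * I)) := by
  have e1 : Complex.exp ((θ : ℂ) * I) = (Real.cos θ) • (1 : ℂ) + (Real.sin θ) • I := by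
    rw [Complex.exp_mul_I]; simp [Complex.real_smul]
  have e2 : I * Complex.exp ((θ : ℂ) * I) = (-Real.sin θ) • (1 : ℂ) + (Real.cos θ) • I := by
    rw [e1]
    simp only [Complex.real_smul]
    push_cast
    linear_combination (Complex.sin (θ : ℂ)) * Complex.I_mul_I
  have e3 : Complex.exp (-((θ : ℂ) * I)) = Real.cos θ - Real.sin θ * I := by
    rw [← neg_mul, Complex.exp_mul_I]; simp [sub_eq_add_neg]
  rw [e2, e3, e1]
  simp only [map_add, map_smul, wirtingerZbar]
  simp only [Complex.real_smul]
  push_cast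
  linear_combination ((Complex.sin (θ : ℂ)) * fderiv ℝ f z I) * Complex.I_mul_I

lemma lbF_hasDerivAt {f : ℂ → ℂ} (hf : ContDiff ℝ 1 f) {r : ℝ} (hr : r ≠ 0) (n : ℤ) :
    HasDerivAt (fun r => lbF f r n) (n / r * lbF f r n + 2 * lbF (wirtingerZbar f) r (n + 1)) r := by
  have hfd : Continuous (fderiv ℝ f) := hf.continuous_fderiv (by simp)
  let F' : ℝ → ℝ → ℂ := fun r θ => fderiv ℝ f (lbC r θ) (Complex.exp ((θ : ℂ) * I)) * lbE n θ
  have hF'c : Continuous (fun p : ℝ × ℝ => F' p.1 p.2) := by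
    refine Continuous.mul ?_ ((lbE_cont n).comp continuous_snd)
    refine (hfd.comp lbC_cont).clm_apply ?_
    fun_prop
  obtain ⟨C, hC⟩ := (isCompact_Icc (a := r - 1) (b := r + 1) |>.prod
    (isCompact_Icc (a := (0:ℝ)) (b := 2 * Real.pi))).exists_bound_of_continuousOn
    hF'c.continuousOn
  have key := intervalIntegral.hasDerivAt_integral_of_dominated_loc_of_deriv_le
    (μ := MeasureTheory.volume) (a := 0) (b := 2 * Real.pi)
    (F := fun r θ => f (lbC r θ) * lbE n θ) (F' := F') (x₀ := r) (s := Set.Icc (r - 1) (r + 1))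
    (bound := fun _ => C) (Icc_mem_nhds (by linarith) (by linarith))
    (Filter.Eventually.of_forall fun x =>
      ((hf.continuous.comp (lbC_cont' x)).mul (lbE_cont n)).aestronglyMeasurable)
    (lbF_int hf.continuous r n)
    ((hF'c.comp (continuous_const.prodMk continuous_id)).aestronglyMeasurable)
    (Filter.Eventually.of_forall fun t ht x hx => hC (x, t) ⟨hx, by
      rw [Set.uIoc_of_le Real.two_pi_pos.le] at ht; exact ⟨ht.1.le, ht.2⟩⟩)
    (continuous_const.intervalIntegrable _ _)
    (Filter.Eventually.of_forall fun t ht x hx => by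
      have h1 : HasFDerivAt f (fderiv ℝ f (lbC x t)) (lbC x t) :=
        ((hf.differentiable (by simp)) _).hasFDerivAt
      exact (h1.comp_hasDerivAt x (lbC_hasDerivAt_r x t)).mul_const _)
  have h2 := key.2.const_mul (((2 * Real.pi : ℝ) : ℂ)⁻¹)
  unfold lbF at *
  refine h2.congr_deriv ?_
  symm
  have hrot := lbF_rot hf r n
  unfold lbF at hrot
  have hg := lbF_int (wirtingerZbar_cont hf) r (n + 1)
  have ht := lbF_int (lbT_cont hf) r n
  have hrc : (r : ℂ) ≠ 0 := by exact_mod_cast hr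
  have e : ∀ θ, F' r θ = 2 * (wirtingerZbar f (lbC r θ) * lbE (n + 1) θ)
      + (-(I / r)) * (lbT f (lbC r θ) * lbE n θ) := by
    intro θ
    simp only [F']
    rw [lb_polar]
    have e1 : lbE (n + 1) θ = Complex.exp (-((θ : ℂ) * I)) * lbE n θ := by
      unfold lbE; rw [← Complex.exp_add]; congr 1; push_cast; ring
    have e2 : lbT f (lbC r θ) = r * fderiv ℝ f (lbC r θ) (I * Complex.exp ((θ : ℂ) * I)) := by
      unfold lbT
      rw [← Complex.real_smul, ← map_smul]
      congr 1
      unfold lbC; rw [Complex.real_smul]; ring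
    rw [e1, e2]
    field_simp
    ring
  simp_rw [e]
  rw [intervalIntegral.integral_add (hg.const_mul _) (ht.const_mul _),
    intervalIntegral.integral_const_mul, intervalIntegral.integral_const_mul]
  have hI : I * I = -1 := Complex.I_mul_I
  have : ((2 * Real.pi : ℝ) : ℂ)⁻¹ * ((-(I / r)) * ∫ θ in (0:ℝ)..(2 * Real.pi), lbT f (lbC r θ) * lbE n θ)
    = (n / r) * (((2 * Real.pi : ℝ) : ℂ)⁻¹ * ∫ θ in (0:ℝ)..(2 * Real.pi), f (lbC r θ) * lbE n θ) := by
    calc _ = (-(I / r)) * (((2 * Real.pi : ℝ) : ℂ)⁻¹ * ∫ θ in (0:ℝ)..(2 * Real.pi), lbT f (lbC r θ) * lbE n θ) := by ring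
      _ = _ := by
        rw [hrot]
        linear_combination (-(n / r) * (((2 * Real.pi : ℝ) : ℂ)⁻¹ * ∫ θ in (0:ℝ)..(2 * Real.pi), f (lbC r θ) * lbE n θ)) * hI
  rw [mul_add, this]
  ring


lemma lb_y_deriv {f : ℂ → ℂ} (hf : ContDiff ℝ 1 f) {r : ℝ} (hr : r ≠ 0) (n : ℤ) :
    HasDerivAt (fun s : ℝ => (s : ℂ) ^ (-n) * lbF f s n)
      (2 * ((r : ℂ) ^ (-n) * lbF (wirtingerZbar f) r (n + 1))) r := by
  have hrc : (r : ℂ) ≠ 0 := by exact_mod_cast hr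
  have h1 := (hasDerivAt_zpow (-n) (r : ℂ) (Or.inl hrc)).comp_ofReal
  refine (h1.mul (lbF_hasDerivAt hf hr n)).congr_deriv ?_
  rw [zpow_sub_one₀ hrc]
  push_cast
  field_simp
  ring

lemma lb_mode_nonneg {f : ℂ → ℂ} (hf : ContDiff ℝ 1 f) {r R : ℝ} (hr : 0 < r) (hrR : r ≤ R)
    {n : ℤ} (hn : 0 ≤ n) :
    ‖lbF f r n‖ ≤ ‖lbF f R n‖ + 2 * ∫ s in (0:ℝ)..R, ‖lbF (wirtingerZbar f) s (n + 1)‖ := by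
  have hR : 0 < R := hr.trans_le hrR
  have hgc := lbF_cont (wirtingerZbar_cont hf) (n + 1)
  have hgn := hgc.norm
  have hzc : ContinuousOn (fun s : ℝ => (s : ℂ) ^ (-n)) (Set.Icc r R) := by
    intro s hs
    have : (s : ℂ) ≠ 0 := by exact_mod_cast (hr.trans_le hs.1).ne'
    exact ((continuousAt_zpow₀ (s : ℂ) (-n) (Or.inl this)).comp
      Complex.continuous_ofReal.continuousAt).continuousWithinAt
  have hic : ContinuousOn (fun s : ℝ => 2 * ((s : ℂ) ^ (-n) * lbF (wirtingerZbar f) s (n + 1)))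
      (Set.Icc r R) := continuousOn_const.mul (hzc.mul hgc.continuousOn)
  have hftc := intervalIntegral.integral_eq_sub_of_hasDerivAt_of_le hrR
    (f := fun s : ℝ => (s : ℂ) ^ (-n) * lbF f s n)
    (hzc.mul (lbF_cont hf.continuous n).continuousOn)
    (fun s hs => lb_y_deriv hf (hr.trans hs.1).ne' n)
    (hic.intervalIntegrable_of_Icc hrR)
  have hz : ∀ s : ℝ, r ≤ s → ‖(s : ℂ) ^ (-n)‖ ≤ r ^ (-n) := by
    intro s hs
    have hs0 : 0 < s := hr.trans_le hs
    rw [norm_zpow, Complex.norm_real, Real.norm_of_nonneg hs0.le, zpow_neg, zpow_neg]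
    exact inv_anti₀ (zpow_pos hr n) (zpow_le_zpow_left₀ hn hr.le hs)
  have hb1 : ‖∫ s in r..R, 2 * ((s : ℂ) ^ (-n) * lbF (wirtingerZbar f) s (n + 1))‖
      ≤ ∫ s in r..R, (2 * r ^ (-n)) * ‖lbF (wirtingerZbar f) s (n + 1)‖ := by
    apply intervalIntegral.norm_integral_le_of_norm_le hrR
    · refine Filter.Eventually.of_forall fun s hs => ?_
      rw [norm_mul, norm_mul, Complex.norm_ofNat, ← mul_assoc]
      gcongr
      exact hz s hs.1.le
    · exact (continuous_const.mul hgn).intervalIntegrable _ _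
  rw [intervalIntegral.integral_const_mul (2 * r ^ (-n))] at hb1
  have hb2 : ∫ s in r..R, ‖lbF (wirtingerZbar f) s (n + 1)‖
      ≤ ∫ s in (0:ℝ)..R, ‖lbF (wirtingerZbar f) s (n + 1)‖ := by
    apply intervalIntegral.integral_mono_interval hr.le hrR le_rfl
    · exact Filter.Eventually.of_forall fun s => norm_nonneg _
    · exact hgn.intervalIntegrable _ _
  have hp : 0 < r ^ (-n) := zpow_pos hr _
  have e1 : r ^ (-n) * ‖lbF f r n‖ = ‖(r : ℂ) ^ (-n) * lbF f r n‖ := by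
    rw [norm_mul, norm_zpow, Complex.norm_real, Real.norm_of_nonneg hr.le]
  have e2 : (r : ℂ) ^ (-n) * lbF f r n = (R : ℂ) ^ (-n) * lbF f R n -
    ∫ s in r..R, 2 * ((s : ℂ) ^ (-n) * lbF (wirtingerZbar f) s (n + 1)) := by
    rw [hftc]; ring
  have e3 : ‖(R : ℂ) ^ (-n) * lbF f R n‖ ≤ r ^ (-n) * ‖lbF f R n‖ := by
    rw [norm_mul]; gcongr; exact hz R hrR
  refine le_of_mul_le_mul_left ?_ hp
  rw [e1, e2]
  refine (norm_sub_le _ _).trans ?_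
  rw [mul_add]
  refine add_le_add e3 (hb1.trans ?_)
  rw [mul_comm (2 : ℝ), mul_assoc]
  gcongr

lemma lb_mode_neg {f : ℂ → ℂ} (hf : ContDiff ℝ 1 f) {r R : ℝ} (hr : 0 < r) (hrR : r ≤ R)
    {n : ℤ} (hn : n < 0) :
    ‖lbF f r n‖ ≤ 2 * ∫ s in (0:ℝ)..R, ‖lbF (wirtingerZbar f) s (n + 1)‖ := by
  have hR : 0 < R := hr.trans_le hrR
  have hgc := lbF_cont (wirtingerZbar_cont hf) (n + 1)
  have hgn := hgc.norm
  have hzc : Continuous (fun s : ℝ => (s : ℂ) ^ (-n)) := by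
    refine continuous_iff_continuousAt.2 fun s => ?_
    exact ((continuousAt_zpow₀ (s : ℂ) (-n) (Or.inr (by lia))).comp
      Complex.continuous_ofReal.continuousAt)
  have hic : Continuous (fun s : ℝ => 2 * ((s : ℂ) ^ (-n) * lbF (wirtingerZbar f) s (n + 1))) :=
    continuous_const.mul (hzc.mul hgc)
  have hftc := intervalIntegral.integral_eq_sub_of_hasDerivAt_of_le hr.le
    (f := fun s : ℝ => (s : ℂ) ^ (-n) * lbF f s n)
    (hzc.mul (lbF_cont hf.continuous n)).continuousOn
    (fun s hs => lb_y_deriv hf hs.1.ne' n)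
    (hic.intervalIntegrable _ _)
  have hz : ∀ s : ℝ, 0 ≤ s → s ≤ r → ‖(s : ℂ) ^ (-n)‖ ≤ r ^ (-n) := by
    intro s hs0 hs
    rw [norm_zpow, Complex.norm_real, Real.norm_of_nonneg hs0]
    exact (zpow_le_zpow_left₀ (by lia) hs0 hs)
  have hb1 : ‖∫ s in (0:ℝ)..r, 2 * ((s : ℂ) ^ (-n) * lbF (wirtingerZbar f) s (n + 1))‖
      ≤ ∫ s in (0:ℝ)..r, (2 * r ^ (-n)) * ‖lbF (wirtingerZbar f) s (n + 1)‖ := by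
    apply intervalIntegral.norm_integral_le_of_norm_le hr.le
    · refine Filter.Eventually.of_forall fun s hs => ?_
      rw [norm_mul, norm_mul, Complex.norm_ofNat, ← mul_assoc]
      gcongr
      exact hz s hs.1.le hs.2
    · exact (continuous_const.mul hgn).intervalIntegrable _ _
  rw [intervalIntegral.integral_const_mul (2 * r ^ (-n))] at hb1
  have hb2 : ∫ s in (0:ℝ)..r, ‖lbF (wirtingerZbar f) s (n + 1)‖
      ≤ ∫ s in (0:ℝ)..R, ‖lbF (wirtingerZbar f) s (n + 1)‖ := by
    apply intervalIntegral.integral_mono_interval le_rfl hr.le hrR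
    · exact Filter.Eventually.of_forall fun s => norm_nonneg _
    · exact hgn.intervalIntegrable _ _
  have hp : 0 < r ^ (-n) := zpow_pos hr _
  have e1 : r ^ (-n) * ‖lbF f r n‖ = ‖(r : ℂ) ^ (-n) * lbF f r n‖ := by
    rw [norm_mul, norm_zpow, Complex.norm_real, Real.norm_of_nonneg hr.le]
  have e2 : (r : ℂ) ^ (-n) * lbF f r n =
    ∫ s in (0:ℝ)..r, 2 * ((s : ℂ) ^ (-n) * lbF (wirtingerZbar f) s (n + 1)) := by
    rw [hftc]
    rw [Complex.ofReal_zero, zero_zpow _ (by lia)]; ring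
  refine le_of_mul_le_mul_left ?_ hp
  rw [e1, e2]
  refine hb1.trans ?_
  rw [mul_comm (2 : ℝ), mul_assoc]
  gcongr

lemma lb_cs {h : ℝ → ℝ} (hc : Continuous h) {R : ℝ} (hR : 0 < R) :
    (∫ s in (0:ℝ)..R, h s) ^ 2 ≤ R * ∫ s in (0:ℝ)..R, (h s) ^ 2 := by
  set A := ∫ s in (0:ℝ)..R, h s with hA
  have h0 : 0 ≤ ∫ s in (0:ℝ)..R, (h s - A / R) ^ 2 :=
    intervalIntegral.integral_nonneg hR.le (fun _ _ => sq_nonneg _)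
  have e : ∫ s in (0:ℝ)..R, (h s - A / R) ^ 2
      = (∫ s in (0:ℝ)..R, (h s) ^ 2) - A ^ 2 / R := by
    have : ∀ s, (h s - A / R) ^ 2 = (h s ^ 2 - (2 * (A / R)) * h s) + (A / R) ^ 2 := by
      intro s; ring
    simp_rw [this]
    rw [intervalIntegral.integral_add, intervalIntegral.integral_sub,
      intervalIntegral.integral_const_mul, ← hA]
    · simp
      field_simp
      ring
    · exact (hc.pow 2).intervalIntegrable _ _
    · exact (continuous_const.mul hc).intervalIntegrable _ _
    · exact ((hc.pow 2).sub (continuous_const.mul hc)).intervalIntegrable _ _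
    · exact continuous_const.intervalIntegrable _ _
  rw [e] at h0
  have : A ^ 2 / R ≤ ∫ s in (0:ℝ)..R, (h s) ^ 2 := by linarith
  rw [div_le_iff₀ hR] at this
  linarith

lemma lb_energy {f : ℂ → ℂ} (hf : ContDiff ℝ 1 f) {R Y β : ℝ} (hR : 0 < R)
    (hY : ∀ s, 0 < s → s ≤ R → lbM (wirtingerZbar f) s ≤ Y)
    (hβ : ∀ S : Finset ℤ, ∑ n ∈ S, (if 0 ≤ n then ‖lbF f R n‖ ^ 2 else 0) ≤ β)
    {r : ℝ} (hr : 0 < r) (hrR : r ≤ R) : lbM f r ≤ 8 * R ^ 2 * Y + 2 * β := by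
  set g := wirtingerZbar f with hg
  have hgc : Continuous g := wirtingerZbar_cont hf
  have hmode : ∀ n : ℤ, ‖lbF f r n‖ ^ 2 ≤ 2 * (if 0 ≤ n then ‖lbF f R n‖ ^ 2 else 0)
      + 8 * R * ∫ s in (0:ℝ)..R, ‖lbF g s (n + 1)‖ ^ 2 := by
    intro n
    have hcs := lb_cs (lbF_cont hgc (n + 1)).norm hR
    set A := ∫ s in (0:ℝ)..R, ‖lbF g s (n + 1)‖ with hA
    by_cases hn : 0 ≤ n
    · have h1 : ‖lbF f r n‖ ≤ ‖lbF f R n‖ + 2 * A := lb_mode_nonneg hf hr hrR hn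
      rw [if_pos hn]
      have h2 : ‖lbF f r n‖ ^ 2 ≤ (‖lbF f R n‖ + 2 * A) ^ 2 :=
        pow_le_pow_left₀ (norm_nonneg _) h1 2
      nlinarith [sq_nonneg (‖lbF f R n‖ - 2 * A)]
    · have h1 : ‖lbF f r n‖ ≤ 2 * A := lb_mode_neg hf hr hrR (not_le.1 hn)
      rw [if_neg hn]
      have h2 : ‖lbF f r n‖ ^ 2 ≤ (2 * A) ^ 2 :=
        pow_le_pow_left₀ (norm_nonneg _) h1 2
      nlinarith [sq_nonneg A]
  have hI : ∀ n, IntervalIntegrable (fun s => ‖lbF g s n‖ ^ 2) MeasureTheory.volume 0 R :=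
    fun n => ((lbF_cont hgc n).norm.pow 2).intervalIntegrable _ _
  have hbes : ∀ S : Finset ℤ, ∑ n ∈ S, ∫ s in (0:ℝ)..R, ‖lbF g s (n + 1)‖ ^ 2 ≤ R * Y := by
    intro S
    rw [← intervalIntegral.integral_finsetSum (fun n _ => hI (n + 1))]
    have : ∫ s in (0:ℝ)..R, ∑ n ∈ S, ‖lbF g s (n + 1)‖ ^ 2 ≤ ∫ s in (0:ℝ)..R, Y := by
      apply intervalIntegral.integral_mono_on_of_le_Ioo hR.le
      · exact (continuous_finsetSum _ fun n _ =>
          ((lbF_cont hgc (n + 1)).norm.pow 2)).intervalIntegrable _ _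
      · exact continuous_const.intervalIntegrable _ _
      · intro s hs
        have hp := lb_parseval hgc s
        have h1 : ∑ n ∈ S.map (addRightEmbedding (1:ℤ)), ‖lbF g s n‖ ^ 2 ≤ lbM g s :=
          sum_le_hasSum _ (fun _ _ => by positivity) hp
        rw [Finset.sum_map] at h1
        exact h1.trans (hY s hs.1 hs.2.le)
    simpa using this
  refine hasSum_le_of_sum_le (lb_parseval hf.continuous r) fun S => ?_
  calc ∑ n ∈ S, ‖lbF f r n‖ ^ 2 ≤ ∑ n ∈ S, (2 * (if 0 ≤ n then ‖lbF f R n‖ ^ 2 else 0)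
      + 8 * R * ∫ s in (0:ℝ)..R, ‖lbF g s (n + 1)‖ ^ 2) := Finset.sum_le_sum fun n _ => hmode n
    _ = 2 * (∑ n ∈ S, (if 0 ≤ n then ‖lbF f R n‖ ^ 2 else 0))
      + 8 * R * ∑ n ∈ S, ∫ s in (0:ℝ)..R, ‖lbF g s (n + 1)‖ ^ 2 := by
        rw [Finset.sum_add_distrib, Finset.mul_sum, Finset.mul_sum]
    _ ≤ 2 * β + 8 * R * (R * Y) := by
        gcongr
        · exact hβ S
        · exact hbes S
    _ = _ := by ring


/-! ### Polynomials in `z` and `z̄` -/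

/-- polynomials in `z, z̄` -/
abbrev LBP := AddMonoidAlgebra ℂ (ℕ × ℕ)

/-- additive maps from values on monomials -/
noncomputable def lbLift {B : Type} [AddCommMonoid B] (φ : ℕ × ℕ → (ℂ →+ B)) : LBP →+ B :=
  (Finsupp.liftAddHom φ).comp (AddMonoidAlgebra.coeffAddEquiv).toAddMonoidHom

lemma lbLift_single {B : Type} [AddCommMonoid B] (φ : ℕ × ℕ → (ℂ →+ B)) (x : ℕ × ℕ) (c : ℂ) :
    lbLift φ (AddMonoidAlgebra.single x c) = φ x c := by
  exact Finsupp.liftAddHom_apply_single φ x c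

lemma lbP_sum (p : LBP) :
    p = ∑ x ∈ p.coeff.support, AddMonoidAlgebra.single x (p.coeff x) :=
  (AddMonoidAlgebra.sum_coeff_single p).symm

/-- evaluation -/
noncomputable def lbEv (z : ℂ) : LBP →+ ℂ :=
  lbLift (fun x => AddMonoidHom.mulRight (z ^ x.1 * (starRingEnd ℂ z) ^ x.2))

lemma lbEv_single (z : ℂ) (x : ℕ × ℕ) (c : ℂ) :
    lbEv z (AddMonoidAlgebra.single x c) = c * (z ^ x.1 * (starRingEnd ℂ z) ^ x.2) := by
  simp [lbEv, lbLift_single]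

lemma lbEv_mul (z : ℂ) (p q : LBP) : lbEv z (p * q) = lbEv z p * lbEv z q := by
  induction p using AddMonoidAlgebra.induction_linear with
  | zero => simp
  | add f g hf hg => rw [add_mul, map_add, hf, hg, map_add, add_mul]
  | single a b =>
    induction q using AddMonoidAlgebra.induction_linear with
    | zero => simp
    | add f g hf hg => rw [mul_add, map_add, hf, hg, map_add, mul_add]
    | single a' b' =>
      rw [AddMonoidAlgebra.single_mul_single, lbEv_single, lbEv_single, lbEv_single]
      simp only [Prod.fst_add, Prod.snd_add, pow_add]
      ring

/-- weighted `ℓ¹` norm -/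
noncomputable def lbN (R : ℝ) (p : LBP) : ℝ :=
  p.coeff.sum fun x c => ‖c‖ * R ^ (x.1 + x.2)

lemma lbN_of_subset (R : ℝ) (p : LBP) (S : Finset (ℕ × ℕ)) (h : p.coeff.support ⊆ S) :
    lbN R p = ∑ x ∈ S, ‖p.coeff x‖ * R ^ (x.1 + x.2) :=
  Finsupp.sum_of_support_subset _ h _ (by simp)

lemma lbN_zero (R : ℝ) : lbN R 0 = 0 := by simp [lbN]

lemma lbN_single (R : ℝ) (x : ℕ × ℕ) (c : ℂ) :
    lbN R (AddMonoidAlgebra.single x c) = ‖c‖ * R ^ (x.1 + x.2) := by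
  unfold lbN
  rw [AddMonoidAlgebra.coeff_single, Finsupp.sum_single_index]
  simp

lemma lbN_nonneg {R : ℝ} (hR : 0 ≤ R) (p : LBP) : 0 ≤ lbN R p :=
  Finset.sum_nonneg fun _ _ => by positivity

lemma lbN_add {R : ℝ} (hR : 0 ≤ R) (p q : LBP) : lbN R (p + q) ≤ lbN R p + lbN R q := by
  classical
  have h1 := lbN_of_subset R p (p.coeff.support ∪ q.coeff.support) Finset.subset_union_left
  have h2 := lbN_of_subset R q (p.coeff.support ∪ q.coeff.support) Finset.subset_union_right
  have h3 := lbN_of_subset R (p + q) (p.coeff.support ∪ q.coeff.support) Finsupp.support_add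
  rw [h1, h2, h3, ← Finset.sum_add_distrib]
  refine Finset.sum_le_sum fun x _ => ?_
  rw [← add_mul]
  refine mul_le_mul_of_nonneg_right ?_ (by positivity)
  exact norm_add_le _ _

lemma lbN_neg (R : ℝ) (p : LBP) : lbN R (-p) = lbN R p := by
  rw [lbN_of_subset R (-p) p.coeff.support (Finsupp.support_neg _).le,
    lbN_of_subset R p _ subset_rfl]
  refine Finset.sum_congr rfl fun x _ => ?_
  congr 1
  exact norm_neg _

lemma lbN_sub {R : ℝ} (hR : 0 ≤ R) (p q : LBP) : lbN R (p - q) ≤ lbN R p + lbN R q := by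
  rw [sub_eq_add_neg, ← lbN_neg R q]; exact lbN_add hR _ _

lemma lbN_sum {R : ℝ} (hR : 0 ≤ R) {ι : Type} (S : Finset ι) (f : ι → LBP) :
    lbN R (∑ i ∈ S, f i) ≤ ∑ i ∈ S, lbN R (f i) :=
  Finset.le_sum_of_subadditive _ (lbN_zero R).le (lbN_add hR) S f

lemma lbN_map {R : ℝ} (hR : 0 ≤ R) (Φ : LBP →+ LBP) (C : ℝ)
    (h : ∀ x c, lbN R (Φ (AddMonoidAlgebra.single x c)) ≤ C * (‖c‖ * R ^ (x.1 + x.2))) (p : LBP) :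
    lbN R (Φ p) ≤ C * lbN R p := by
  conv_lhs => rw [lbP_sum p, map_sum]
  refine (lbN_sum hR _ _).trans ?_
  rw [lbN_of_subset R p _ subset_rfl, Finset.mul_sum]
  exact Finset.sum_le_sum fun x _ => h x _

lemma lbN_mul {R : ℝ} (hR : 0 ≤ R) (p q : LBP) : lbN R (p * q) ≤ lbN R p * lbN R q := by
  rw [mul_comm (lbN R p)]
  refine lbN_map hR (AddMonoidHom.mulRight q) _ (fun x c => ?_) p
  have := lbN_map hR (AddMonoidHom.mulLeft (AddMonoidAlgebra.single x c)) (‖c‖ * R ^ (x.1 + x.2))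
    (fun x' c' => by
      simp only [AddMonoidHom.coe_mulLeft]
      rw [AddMonoidAlgebra.single_mul_single, lbN_single]
      simp only [Prod.fst_add, Prod.snd_add, pow_add, norm_mul]
      apply le_of_eq; ring) q
  simp only [AddMonoidHom.coe_mulLeft] at this
  simp only [AddMonoidHom.coe_mulRight]
  linarith

lemma lbEv_le {R : ℝ} {z : ℂ} (hz : ‖z‖ ≤ R) (p : LBP) : ‖lbEv z p‖ ≤ lbN R p := by
  conv_lhs => rw [lbP_sum p, map_sum]
  refine (norm_sum_le _ _).trans ?_
  rw [lbN_of_subset R p _ subset_rfl]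
  refine Finset.sum_le_sum fun x _ => ?_
  rw [lbEv_single, norm_mul, norm_mul, norm_pow, norm_pow, RCLike.norm_conj, ← pow_add]
  gcongr

/-- conjugation -/
noncomputable def lbSt : LBP →+ LBP :=
  lbLift (fun x => (AddMonoidAlgebra.singleAddHom (x.2, x.1)).comp (starRingEnd ℂ).toAddMonoidHom)

lemma lbSt_single (x : ℕ × ℕ) (c : ℂ) :
    lbSt (AddMonoidAlgebra.single x c) = AddMonoidAlgebra.single (x.2, x.1) (starRingEnd ℂ c) := by
  rw [lbSt, lbLift_single]; rfl

lemma lbEv_st (z : ℂ) (p : LBP) : lbEv z (lbSt p) = starRingEnd ℂ (lbEv z p) := by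
  induction p using AddMonoidAlgebra.induction_linear with
  | zero => simp
  | add f g hf hg => simp only [map_add, hf, hg]
  | single a b =>
    rw [lbSt_single, lbEv_single, lbEv_single]
    simp only [map_mul, map_pow, Complex.conj_conj]
    ring

lemma lbN_st {R : ℝ} (hR : 0 ≤ R) (p : LBP) : lbN R (lbSt p) ≤ lbN R p := by
  have := lbN_map hR lbSt 1 (fun x c => by
    rw [lbSt_single, lbN_single, RCLike.norm_conj, one_mul, add_comm]) p
  simpa using this

/-- solution operator on a monomial -/
noncomputable def lbS0 (R : ℝ) (x : ℕ × ℕ) : ℂ →+ LBP where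
  toFun c := AddMonoidAlgebra.single (x.1, x.2 + 1) (((x.2 : ℂ) + 1)⁻¹ * c)
    - if x.2 + 1 ≤ x.1 then
        AddMonoidAlgebra.single (x.1 - (x.2 + 1), 0) ((R : ℂ) ^ (2 * (x.2 + 1)) * (((x.2 : ℂ) + 1)⁻¹ * c))
      else 0
  map_zero' := by simp
  map_add' a b := by
    split_ifs
    · simp only [mul_add, AddMonoidAlgebra.single_add]; abel
    · simp only [mul_add, AddMonoidAlgebra.single_add]; abel

/-- solution operator for `∂̄` -/
noncomputable def lbS (R : ℝ) : LBP →+ LBP := lbLift (lbS0 R)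

lemma lbS_single (R : ℝ) (x : ℕ × ℕ) (c : ℂ) :
    lbS R (AddMonoidAlgebra.single x c) =
    AddMonoidAlgebra.single (x.1, x.2 + 1) (((x.2 : ℂ) + 1)⁻¹ * c)
    - if x.2 + 1 ≤ x.1 then
        AddMonoidAlgebra.single (x.1 - (x.2 + 1), 0) ((R : ℂ) ^ (2 * (x.2 + 1)) * (((x.2 : ℂ) + 1)⁻¹ * c))
      else 0 := by
  rw [lbS, lbLift_single]; rfl

lemma lbN_S {R : ℝ} (hR : 0 ≤ R) (p : LBP) : lbN R (lbS R p) ≤ (2 * R) * lbN R p := by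
  refine lbN_map hR (lbS R) (2 * R) (fun x c => ?_) p
  rw [lbS_single]
  refine (lbN_sub hR _ _).trans ?_
  have hk : ‖((x.2 : ℂ) + 1)⁻¹ * c‖ ≤ ‖c‖ := by
    rw [norm_mul, norm_inv]
    have : ‖(x.2 : ℂ) + 1‖ = (x.2 : ℝ) + 1 := by
      have : (x.2 : ℂ) + 1 = (((x.2 : ℝ) + 1 : ℝ) : ℂ) := by push_cast; rfl
      rw [this, Complex.norm_real, Real.norm_of_nonneg (by positivity)]
    rw [this]
    have : ((x.2 : ℝ) + 1)⁻¹ ≤ 1 := inv_le_one_of_one_le₀ (by linarith [Nat.cast_nonneg (α := ℝ) x.2])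
    exact mul_le_of_le_one_left (norm_nonneg _) this
  have h1 : lbN R (AddMonoidAlgebra.single (x.1, x.2 + 1) (((x.2 : ℂ) + 1)⁻¹ * c))
      ≤ R * (‖c‖ * R ^ (x.1 + x.2)) := by
    rw [lbN_single]
    calc _ ≤ ‖c‖ * R ^ (x.1 + (x.2 + 1)) := by gcongr
      _ = _ := by ring
  have h2 : lbN R (if x.2 + 1 ≤ x.1 then
        AddMonoidAlgebra.single (x.1 - (x.2 + 1), 0) ((R : ℂ) ^ (2 * (x.2 + 1)) * (((x.2 : ℂ) + 1)⁻¹ * c))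
      else 0) ≤ R * (‖c‖ * R ^ (x.1 + x.2)) := by
    split_ifs with h
    · rw [lbN_single, norm_mul, norm_pow, Complex.norm_real, Real.norm_of_nonneg hR]
      calc _ ≤ R ^ (2 * (x.2 + 1)) * ‖c‖ * R ^ (x.1 - (x.2 + 1) + 0) := by gcongr
        _ = R ^ (2 * (x.2 + 1) + (x.1 - (x.2 + 1))) * ‖c‖ := by rw [add_zero, pow_add]; ring
        _ = R ^ (1 + (x.1 + x.2)) * ‖c‖ := by congr 2; lia
        _ = _ := by ring
    · rw [lbN_zero]; positivity
  linarith

lemma lb_mono_fderiv (j k : ℕ) (z : ℂ) :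
    HasFDerivAt (𝕜 := ℝ) (fun z : ℂ => z ^ j * (starRingEnd ℂ z) ^ k)
      ((z ^ j) • ((k * (starRingEnd ℂ z) ^ (k - 1)) • (Complex.conjCLE : ℂ →L[ℝ] ℂ))
        + ((starRingEnd ℂ z) ^ k) • ((j * z ^ (j - 1)) • (ContinuousLinearMap.id ℝ ℂ))) z := by
  have h1 : HasFDerivAt (𝕜 := ℝ) (fun z : ℂ => z) (ContinuousLinearMap.id ℝ ℂ) z := hasFDerivAt_id z
  have h2 : HasFDerivAt (𝕜 := ℝ) (fun z : ℂ => starRingEnd ℂ z) (Complex.conjCLE : ℂ →L[ℝ] ℂ) z :=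
    Complex.conjCLE.hasFDerivAt
  have := HasFDerivAt.mul (HasFDerivAt.pow h1 j) (HasFDerivAt.pow h2 k)
  refine HasFDerivAt.congr_fderiv this ?_
  ext <;> simp

lemma lbEv_contDiff (p : LBP) : ContDiff ℝ (⊤ : ℕ∞) (fun z => lbEv z p) := by
  induction p using AddMonoidAlgebra.induction_linear with
  | zero => simpa using contDiff_const
  | add f g hf hg => simpa only [map_add] using hf.add hg
  | single a b =>
    simp only [lbEv_single]
    exact contDiff_const.mul ((contDiff_id.pow _).mul (Complex.conjCLE.contDiff.pow _))

lemma wirtingerZbar_add {f g : ℂ → ℂ} {z : ℂ} (hf : DifferentiableAt ℝ f z)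
    (hg : DifferentiableAt ℝ g z) :
    wirtingerZbar (fun z => f z + g z) z = wirtingerZbar f z + wirtingerZbar g z := by
  unfold wirtingerZbar
  rw [fderiv_fun_add hf hg]
  simp only [add_apply]
  ring

lemma wirtingerZbar_sub {f g : ℂ → ℂ} {z : ℂ} (hf : DifferentiableAt ℝ f z)
    (hg : DifferentiableAt ℝ g z) :
    wirtingerZbar (fun z => f z - g z) z = wirtingerZbar f z - wirtingerZbar g z := by
  unfold wirtingerZbar
  rw [fderiv_fun_sub hf hg]
  simp only [sub_apply]
  ring

lemma lbEv_diff (p : LBP) (z : ℂ) : DifferentiableAt ℝ (fun z => lbEv z p) z :=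
  (lbEv_contDiff p).differentiable (by simp) z

lemma lb_dbar_single (x : ℕ × ℕ) (c z : ℂ) :
    wirtingerZbar (fun z => lbEv z (AddMonoidAlgebra.single x c)) z
      = c * (z ^ x.1 * (x.2 * (starRingEnd ℂ z) ^ (x.2 - 1))) := by
  have h := (lb_mono_fderiv x.1 x.2 z).const_mul c
  have e : (fun z => lbEv z (AddMonoidAlgebra.single x c)) =
      fun z => c * (z ^ x.1 * (starRingEnd ℂ z) ^ x.2) := by
    ext z; exact lbEv_single z x c
  unfold wirtingerZbar
  rw [e, h.fderiv]
  simp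
  linear_combination (1/2 * c * ((starRingEnd ℂ z) ^ x.2 * (x.1 * z ^ (x.1 - 1)) -
    z ^ x.1 * (x.2 * (starRingEnd ℂ z) ^ (x.2 - 1)))) * Complex.I_mul_I

lemma lb_dbar_S (R : ℝ) (p : LBP) (z : ℂ) :
    wirtingerZbar (fun z => lbEv z (lbS R p)) z = lbEv z p := by
  induction p using AddMonoidAlgebra.induction_linear with
  | zero => simp [wirtingerZbar]
  | add f g hf hg =>
    simp only [map_add]
    rw [wirtingerZbar_add (lbEv_diff _ _) (lbEv_diff _ _), hf, hg]
  | single a b =>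
    rw [lbS_single, lbEv_single]
    simp only [map_sub]
    rw [wirtingerZbar_sub (lbEv_diff _ _) (lbEv_diff _ _), lb_dbar_single]
    have h0 : ((a.2 : ℂ) + 1) ≠ 0 := by exact_mod_cast Nat.succ_ne_zero a.2
    have : wirtingerZbar (fun z => lbEv z (if a.2 + 1 ≤ a.1 then
        AddMonoidAlgebra.single (a.1 - (a.2 + 1), 0) ((R : ℂ) ^ (2 * (a.2 + 1)) * (((a.2 : ℂ) + 1)⁻¹ * b))
      else 0)) z = 0 := by
      split_ifs
      · rw [lb_dbar_single]; simp
      · simp [wirtingerZbar]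
    rw [this]
    push_cast
    field_simp
    simp

lemma lb_int_exp (m : ℤ) :
    ∫ θ in (0:ℝ)..(2 * Real.pi), lbE m θ = if m = 0 then ((2 * Real.pi : ℝ) : ℂ) else 0 := by
  split_ifs with h
  · subst h; simp [lbE]
  · have hm : (m : ℂ) ≠ 0 := by exact_mod_cast h
    have hc : (-((m : ℂ) * I)) ≠ 0 := by simp [hm]
    have := integral_exp_mul_complex (a := 0) (b := 2 * Real.pi) hc
    have e : ∀ θ : ℝ, lbE m θ = Complex.exp (-((m : ℂ) * I) * θ) := by
      intro θ; unfold lbE; congr 1; ring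
    simp_rw [e]
    rw [this]
    have e2 : -((m : ℂ) * I) * ((2 * Real.pi : ℝ) : ℂ) = ((-m : ℤ) : ℂ) * (2 * Real.pi * I) := by
      push_cast; ring
    rw [e2, Complex.exp_int_mul_two_pi_mul_I]
    simp

lemma lbF_single (R : ℝ) (x : ℕ × ℕ) (c : ℂ) (n : ℤ) :
    lbF (fun z => lbEv z (AddMonoidAlgebra.single x c)) R n
      = if n = (x.1 : ℤ) - x.2 then c * (R : ℂ) ^ (x.1 + x.2) else 0 := by
  unfold lbF
  have e : ∀ θ : ℝ, lbEv (lbC R θ) (AddMonoidAlgebra.single x c) * lbE n θ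
      = (c * (R : ℂ) ^ (x.1 + x.2)) * lbE (n - (x.1 - x.2)) θ := by
    intro θ
    rw [lbEv_single]
    have hcj : starRingEnd ℂ (lbC R θ) = R * Complex.exp (-(θ * I)) := by
      unfold lbC
      rw [map_mul, Complex.conj_ofReal, ← Complex.exp_conj, map_mul, Complex.conj_ofReal,
        Complex.conj_I, mul_neg]
    rw [hcj]
    unfold lbC lbE
    rw [mul_pow, mul_pow, ← Complex.exp_nat_mul, ← Complex.exp_nat_mul, pow_add]
    have : Complex.exp (-(((n - (x.1 - x.2) : ℤ) : ℂ) * θ * I)) = Complex.exp (x.1 * (θ * I)) *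
        Complex.exp (x.2 * (-(θ * I))) * Complex.exp (-((n : ℂ) * θ * I)) := by
      rw [← Complex.exp_add, ← Complex.exp_add]; congr 1; push_cast; ring
    rw [this]
    ring
  simp_rw [e]
  rw [intervalIntegral.integral_const_mul, lb_int_exp]
  have hpi : ((2 * Real.pi : ℝ) : ℂ) ≠ 0 := by exact_mod_cast Real.two_pi_pos.ne'
  by_cases h : n = (x.1 : ℤ) - x.2
  · rw [if_pos h, if_pos (by lia)]
    field_simp
  · rw [if_neg h, if_neg (by lia)]; simp

lemma lbF_zero (R : ℝ) (n : ℤ) : lbF (fun _ => 0) R n = 0 := by simp [lbF]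

lemma lbEv_cont (p : LBP) : Continuous (fun z => lbEv z p) := (lbEv_contDiff p).continuous

lemma lbF_S {R : ℝ} (p : LBP) {n : ℤ} (hn : 0 ≤ n) :
    lbF (fun z => lbEv z (lbS R p)) R n = 0 := by
  induction p using AddMonoidAlgebra.induction_linear with
  | zero => simp [lbF_zero]
  | add f g hf hg =>
    simp only [map_add]
    rw [lbF_add (lbEv_cont _) (lbEv_cont _), hf, hg, add_zero]
  | single a b =>
    rw [lbS_single]
    simp only [map_sub]
    rw [lbF_sub (lbEv_cont _) (lbEv_cont _), lbF_single]
    split_ifs with h1 h2 h2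
    · rw [lbF_single, if_pos (by push_cast at h1 ⊢; lia)]
      have : (2 * (a.2 + 1)) + (a.1 - (a.2 + 1) + 0) = a.1 + (a.2 + 1) := by lia
      simp only []
      rw [← this, pow_add]; ring
    · exfalso; push_cast at h1; lia
    · rw [lbF_single, if_neg (by push_cast at h1 ⊢; lia)]; simp
    · simp [lbF_zero]

/-- truncated holomorphic part -/
noncomputable def lbH (R : ℝ) (u : ℂ → ℂ) (k : ℕ) : LBP :=
  ∑ n ∈ Finset.range k, AddMonoidAlgebra.single (n, 0) (lbF u R n * ((R : ℂ) ^ n)⁻¹)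

lemma lbH_succ (R : ℝ) (u : ℂ → ℂ) (k : ℕ) : lbH R u (k + 1) - lbH R u k =
    AddMonoidAlgebra.single (k, 0) (lbF u R k * ((R : ℂ) ^ k)⁻¹) := by
  unfold lbH; rw [Finset.sum_range_succ]; abel

lemma lbN_Hterm {R : ℝ} (hR : 0 < R) (u : ℂ → ℂ) (k : ℕ) :
    lbN R (AddMonoidAlgebra.single (k, 0) (lbF u R k * ((R : ℂ) ^ k)⁻¹)) = ‖lbF u R k‖ := by
  rw [lbN_single, norm_mul, norm_inv, norm_pow, Complex.norm_real, Real.norm_of_nonneg hR.le]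
  have : R ^ k ≠ 0 := by positivity
  simp only [add_zero]
  field_simp

lemma lbN_H {R : ℝ} (hR : 0 < R) (u : ℂ → ℂ) (k : ℕ) :
    lbN R (lbH R u k) ≤ ∑ n ∈ Finset.range k, ‖lbF u R n‖ := by
  refine (lbN_sum hR.le _ _).trans (Finset.sum_le_sum fun n _ => ?_)
  rw [lbN_Hterm hR]

lemma lb_dbar_H (R : ℝ) (u : ℂ → ℂ) (k : ℕ) (z : ℂ) :
    wirtingerZbar (fun z => lbEv z (lbH R u k)) z = 0 := by
  induction k with
  | zero => simp [lbH, wirtingerZbar]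
  | succ k ih =>
    have : lbH R u (k + 1) = lbH R u k + AddMonoidAlgebra.single (k, 0) (lbF u R k * ((R : ℂ) ^ k)⁻¹) := by
      rw [← lbH_succ]; abel
    rw [this]
    simp only [map_add]
    rw [wirtingerZbar_add (lbEv_diff _ _) (lbEv_diff _ _), ih, lb_dbar_single]
    simp

lemma lbF_H {R : ℝ} (hR : 0 < R) (u : ℂ → ℂ) (k : ℕ) (n : ℕ) :
    lbF (fun z => lbEv z (lbH R u k)) R n = if n < k then lbF u R n else 0 := by
  induction k with
  | zero => simp [lbH, lbF_zero]
  | succ k ih =>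
    have : lbH R u (k + 1) = lbH R u k + AddMonoidAlgebra.single (k, 0) (lbF u R k * ((R : ℂ) ^ k)⁻¹) := by
      rw [← lbH_succ]; abel
    rw [this]
    simp only [map_add]
    rw [lbF_add (lbEv_cont _) (lbEv_cont _), ih, lbF_single]
    have hRc : (R : ℂ) ^ k ≠ 0 := pow_ne_zero _ (by exact_mod_cast hR.ne')
    rcases lt_trichotomy n k with h | h | h
    · rw [if_pos h, if_neg (by push_cast; lia), if_pos (by lia), add_zero]
    · subst h
      rw [if_neg (by lia), if_pos (by simp), if_pos (by lia)]
      simp only [add_zero, zero_add]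
      field_simp
    · rw [if_neg (by lia), if_neg (by push_cast; lia), if_neg (by lia), add_zero]


/-! ### Convergent series in `z, z̄` are real-analytic -/

noncomputable def lbCmm (N j : ℕ) : ContinuousMultilinearMap ℝ (fun _ : Fin N => ℂ) ℂ :=
  (ContinuousMultilinearMap.mkPiAlgebraFin ℝ N ℂ).compContinuousLinearMap
    (fun i => if (i : ℕ) < j then ContinuousLinearMap.id ℝ ℂ else (Complex.conjCLE : ℂ →L[ℝ] ℂ))

lemma lbCmm_norm (N j : ℕ) : ‖lbCmm N j‖ ≤ 1 := by
  unfold lbCmm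
  refine (ContinuousMultilinearMap.norm_compContinuousLinearMap_le _ _).trans ?_
  rw [ContinuousMultilinearMap.norm_mkPiAlgebraFin, one_mul]
  refine Finset.prod_le_one (fun _ _ => norm_nonneg _) (fun i _ => ?_)
  split_ifs
  · exact ContinuousLinearMap.norm_id_le
  · exact Complex.conjCLE_norm.le

lemma lbCmm_apply (j k : ℕ) (z : ℂ) :
    lbCmm (j + k) j (fun _ => z) = z ^ j * (starRingEnd ℂ z) ^ k := by
  have : ∀ i : Fin (j + k), (if (i : ℕ) < j then ContinuousLinearMap.id ℝ ℂ
      else (Complex.conjCLE : ℂ →L[ℝ] ℂ)) z = if (i : ℕ) < j then z else starRingEnd ℂ z := by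
    intro i; split_ifs <;> simp
  unfold lbCmm
  rw [ContinuousMultilinearMap.compContinuousLinearMap_apply,
    ContinuousMultilinearMap.mkPiAlgebraFin_apply, List.prod_ofFn]
  simp_rw [this]
  rw [Fin.prod_univ_add]
  simp

/-- the power series -/
noncomputable def lbPS (a : ℕ × ℕ → ℂ) : FormalMultilinearSeries ℝ ℂ ℂ :=
  fun N => ∑ x ∈ Finset.HasAntidiagonal.antidiagonal N, a x • lbCmm N x.1

lemma lb_analytic {a : ℕ × ℕ → ℂ} {R : ℝ} (hR : 0 < R)
    (ha : Summable (fun x : ℕ × ℕ => ‖a x‖ * R ^ (x.1 + x.2))) {f : ℂ → ℂ}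
    (hf : ∀ z, ‖z‖ < R → f z = ∑' x : ℕ × ℕ, a x * (z ^ x.1 * (starRingEnd ℂ z) ^ x.2)) :
    AnalyticAt ℝ f 0 := by
  have hb : ∀ N, ‖lbPS a N‖ * R ^ N ≤ ∑' x : ℕ × ℕ, ‖a x‖ * R ^ (x.1 + x.2) := by
    intro N
    calc ‖lbPS a N‖ * R ^ N ≤ (∑ x ∈ Finset.HasAntidiagonal.antidiagonal N, ‖a x‖) * R ^ N := by
          gcongr
          refine (norm_sum_le _ _).trans (Finset.sum_le_sum fun x _ => ?_)
          have h0 : ‖a x • lbCmm N x.1‖ ≤ ‖a x‖ * ‖lbCmm N x.1‖ :=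
            ContinuousMultilinearMap.opNorm_le_bound (by positivity) (fun m => by
              rw [smul_apply, norm_smul, mul_assoc]
              gcongr
              exact ContinuousMultilinearMap.le_opNorm _ _)
          refine h0.trans ?_
          exact mul_le_of_le_one_right (norm_nonneg _) (lbCmm_norm _ _)
      _ = ∑ x ∈ Finset.HasAntidiagonal.antidiagonal N, ‖a x‖ * R ^ (x.1 + x.2) := by
          rw [Finset.sum_mul]
          refine Finset.sum_congr rfl fun x hx => ?_
          rw [Finset.HasAntidiagonal.mem_antidiagonal.1 hx]
      _ ≤ _ := ha.sum_le_tsum _ (fun x _ => by positivity)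
  have hfs : HasFPowerSeriesOnBall f (lbPS a) 0 (ENNReal.ofReal R) := by
    refine ⟨?_, by simpa using hR, ?_⟩
    · have := (lbPS a).le_radius_of_bound (r := ⟨R, hR.le⟩) _ hb
      convert this using 1
      rw [ENNReal.ofReal_eq_coe_nnreal hR.le]
      rfl
    · intro y hy
      have hy' : ‖y‖ < R := by
        rw [Metric.mem_eball, edist_zero_right, ← ofReal_norm] at hy
        exact (ENNReal.ofReal_lt_ofReal_iff hR).1 hy
      rw [zero_add, hf y hy']
      have hs : Summable (fun x : ℕ × ℕ => a x * (y ^ x.1 * (starRingEnd ℂ y) ^ x.2)) := by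
        refine Summable.of_norm_bounded ha fun x => ?_
        rw [norm_mul, norm_mul, norm_pow, norm_pow, RCLike.norm_conj, ← pow_add]
        gcongr
      have h2 := (Finset.HasAntidiagonal.sigmaAntidiagonalEquivProd.hasSum_iff.2 hs.hasSum)
      have h3 := h2.sigma (fun N => hasSum_fintype _)
      have h4 : ∀ N, lbPS a N (fun _ => y) = ∑ c : Finset.HasAntidiagonal.antidiagonal N,
          a c.1 * (y ^ c.1.1 * (starRingEnd ℂ y) ^ c.1.2) := by
        intro N
        rw [Finset.sum_coe_sort (Finset.HasAntidiagonal.antidiagonal N)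
          (fun c : ℕ × ℕ => a c * (y ^ c.1 * (starRingEnd ℂ y) ^ c.2))]
        unfold lbPS
        rw [sum_apply]
        refine Finset.sum_congr rfl fun x hx => ?_
        rw [smul_apply, smul_eq_mul]
        obtain ⟨j, k⟩ := x
        have := Finset.HasAntidiagonal.mem_antidiagonal.1 hx
        subst this
        rw [lbCmm_apply]
      simp_rw [h4]
      exact h3
  exact hfs.analyticAt

lemma lb_seq_summable {δ ε : ℕ → ℝ} (hδ : ∀ k, 0 ≤ δ k) (hε : Summable ε) (hε0 : ∀ k, 0 ≤ ε k)
    (h : ∀ k, δ (k + 1) ≤ δ k / 2 + ε k) : Summable δ := by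
  refine summable_of_sum_range_le (c := 2 * δ 0 + 2 * ∑' k, ε k) hδ (fun n => ?_)
  have h1 : ∀ n, ∑ i ∈ Finset.range n, δ i + 2 * δ n ≤ 2 * δ 0 + 2 * ∑ i ∈ Finset.range n, ε i := by
    intro n
    induction n with
    | zero => simp
    | succ n ih =>
      rw [Finset.sum_range_succ, Finset.sum_range_succ]
      have := h n
      linarith
  have h2 := hε.sum_le_tsum (Finset.range n) (fun i _ => hε0 i)
  have := h1 n
  have := hδ n
  linarith


lemma lbM_mono {ι : Type} [Fintype ι] {f : ℂ → ℂ} {g : ι → ℂ → ℂ} {r c e : ℝ} (hr : 0 ≤ r)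
    (hf : Continuous (fun θ => f (lbC r θ))) (hg : ∀ j, Continuous (g j))
    (h : ∀ z, ‖z‖ = r → ‖f z‖ ^ 2 ≤ c * (∑ j, ‖g j z‖ ^ 2) + e) :
    lbM f r ≤ c * (∑ j, lbM (g j) r) + e := by
  have hgj : ∀ j, Continuous (fun θ => ‖g j (lbC r θ)‖ ^ 2) := fun j =>
    ((hg j).comp (lbC_cont' r)).norm.pow 2
  have h1 : ∫ θ in (0 : ℝ)..(2 * Real.pi), ‖f (lbC r θ)‖ ^ 2 ≤
      ∫ θ in (0 : ℝ)..(2 * Real.pi), (c * (∑ j, ‖g j (lbC r θ)‖ ^ 2) + e) := by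
    apply intervalIntegral.integral_mono Real.two_pi_pos.le
    · exact (hf.norm.pow 2).intervalIntegrable _ _
    · refine Continuous.intervalIntegrable ?_ _ _
      exact ((continuous_finsetSum _ fun j _ => hgj j).const_mul c).add continuous_const
    · intro θ; exact h _ (lbC_norm hr θ)
  rw [intervalIntegral.integral_add, intervalIntegral.integral_const_mul,
    intervalIntegral.integral_finsetSum] at h1
  rotate_left
  · intro j _; exact (hgj j).intervalIntegrable _ _
  · refine Continuous.intervalIntegrable ?_ _ _
    exact (continuous_finsetSum _ fun j _ => hgj j).const_mul c
  · exact continuous_const.intervalIntegrable _ _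
  unfold lbM
  rw [inv_mul_le_iff₀ Real.two_pi_pos, ← Finset.mul_sum]
  refine h1.trans (le_of_eq ?_)
  have := Real.two_pi_pos.ne'
  simp only [intervalIntegral.integral_const, smul_eq_mul]
  field_simp
  ring

lemma lbM_at_zero {f : ℂ → ℂ} (hf : Continuous f) {R X : ℝ} (hR : 0 < R)
    (h : ∀ r, 0 < r → r ≤ R → lbM f r ≤ X) : lbM f 0 ≤ X := by
  have h1 : Filter.Tendsto (fun r => lbM f r) (nhdsWithin 0 (Set.Ioi 0)) (nhds (lbM f 0)) :=
    (lbM_cont hf).continuousAt.tendsto.mono_left nhdsWithin_le_nhds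
  refine le_of_tendsto h1 ?_
  filter_upwards [Ioc_mem_nhdsGT hR] with r hr
  exact h r hr.1 hr.2

lemma lb_limit {R : ℝ} (hR : 0 < R) (D : ℕ → LBP) (hD : Summable (fun k => lbN R (D k))) :
    ∃ a : ℕ × ℕ → ℂ, Summable (fun x : ℕ × ℕ => ‖a x‖ * R ^ (x.1 + x.2)) ∧
      ∀ z, ‖z‖ ≤ R → HasSum (fun k => lbEv z (D k))
        (∑' x : ℕ × ℕ, a x * (z ^ x.1 * (starRingEnd ℂ z) ^ x.2)) := by
  have hN : ∀ k, HasSum (fun x : ℕ × ℕ => ‖(D k).coeff x‖ * R ^ (x.1 + x.2)) (lbN R (D k)) := by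
    intro k
    exact hasSum_sum_of_ne_finset_zero (fun x hx => by
      rw [Finsupp.notMem_support_iff.1 hx]; simp)
  have hG : Summable (fun y : ℕ × (ℕ × ℕ) => ‖(D y.1).coeff y.2‖ * R ^ (y.2.1 + y.2.2)) := by
    refine (summable_prod_of_nonneg (fun y => by positivity)).2 ⟨fun k => (hN k).summable, ?_⟩
    simpa only [(hN _).tsum_eq] using hD
  have hE : ∀ z, ‖z‖ ≤ R → ∀ k x,
      ‖(D k).coeff x * (z ^ x.1 * (starRingEnd ℂ z) ^ x.2)‖ ≤ ‖(D k).coeff x‖ * R ^ (x.1 + x.2) := by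
    intro z hz k x
    rw [norm_mul, norm_mul, norm_pow, norm_pow, RCLike.norm_conj, ← pow_add]
    gcongr
  have hGs : Summable (fun y : (ℕ × ℕ) × ℕ => ‖(D y.2).coeff y.1‖ * R ^ (y.1.1 + y.1.2)) :=
    hG.prod_symm
  have hGs' := (summable_prod_of_nonneg (fun y => by positivity)).1 hGs
  have hx : ∀ x : ℕ × ℕ, Summable (fun k => ‖(D k).coeff x‖) := by
    intro x
    have := (hGs'.1 x).mul_right ((R ^ (x.1 + x.2))⁻¹)
    refine this.congr fun k => ?_
    have : R ^ (x.1 + x.2) ≠ 0 := by positivity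
    simp only
    field_simp
  refine ⟨fun x => ∑' k, (D k).coeff x, ?_, ?_⟩
  · refine Summable.of_nonneg_of_le (fun x => by positivity) (fun x => ?_) hGs'.2
    simp only
    rw [tsum_mul_right]
    gcongr
    exact norm_tsum_le_tsum_norm (hx x)
  · intro z hz
    have hS : Summable (fun y : ℕ × (ℕ × ℕ) =>
        (D y.1).coeff y.2 * (z ^ y.2.1 * (starRingEnd ℂ z) ^ y.2.2)) :=
      Summable.of_norm_bounded hG fun y => hE z hz _ _
    have hev : ∀ k, HasSum (fun x : ℕ × ℕ => (D k).coeff x * (z ^ x.1 * (starRingEnd ℂ z) ^ x.2))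
        (lbEv z (D k)) := by
      intro k
      have : lbEv z (D k) = ∑ x ∈ (D k).coeff.support,
          (D k).coeff x * (z ^ x.1 * (starRingEnd ℂ z) ^ x.2) := by
        conv_lhs => rw [lbP_sum (D k), map_sum]
        exact Finset.sum_congr rfl fun x _ => lbEv_single _ _ _
      rw [this]
      exact hasSum_sum_of_ne_finset_zero (fun x hx => by
        rw [Finsupp.notMem_support_iff.1 hx]; simp)
    have h1 := hS.hasSum.prod_fiberwise hev
    convert h1 using 1
    rw [← (Equiv.prodComm (ℕ × ℕ) ℕ).tsum_eq]
    refine Eq.trans ?_ (hS.prod_symm).tsum_prod.symm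
    refine tsum_congr fun x => ?_
    rw [← tsum_mul_right]
    rfl

lemma lb_identify {R : ℝ} (hR : 0 < R) {u : ℂ → ℂ} (hu : Continuous u) (U : ℕ → LBP)
    (hU0 : U 0 = 0) (hD : Summable (fun k => lbN R (U (k + 1) - U k))) {X : ℕ → ℝ}
    (hX : Filter.Tendsto X Filter.atTop (nhds 0))
    (h : ∀ k r, 0 < r → r ≤ R → lbM (fun z => u z - lbEv z (U k)) r ≤ X k) :
    AnalyticAt ℝ u 0 := by
  obtain ⟨a, ha, hs⟩ := lb_limit hR _ hD
  obtain ⟨v, hv⟩ : ∃ v : ℂ → ℂ, v = fun z => ∑' x : ℕ × ℕ, a x * (z ^ x.1 * (starRingEnd ℂ z) ^ x.2) :=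
    ⟨_, rfl⟩
  replace hs : ∀ z, ‖z‖ ≤ R → HasSum (fun k => lbEv z (U (k + 1) - U k)) (v z) := by
    rw [hv]; exact hs
  set e : ℕ → ℝ := fun n => ∑' k, lbN R (U (k + n + 1) - U (k + n)) with he
  have he0 : Filter.Tendsto e Filter.atTop (nhds 0) :=
    tendsto_sum_nat_add (fun k => lbN R (U (k + 1) - U k))
  have hvU : ∀ n z, ‖z‖ ≤ R → ‖v z - lbEv z (U n)‖ ≤ e n := by
    intro n z hz
    have h1 : HasSum (fun k => lbEv z (U (k + n + 1) - U (k + n))) (v z - lbEv z (U n)) := by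
      have := (hasSum_nat_add_iff' (f := fun k => lbEv z (U (k + 1) - U k)) n).2 (hs z hz)
      have h2 : ∑ i ∈ Finset.range n, lbEv z (U (i + 1) - U i) = lbEv z (U n) := by
        simp_rw [map_sub]
        rw [Finset.sum_range_sub (fun i => lbEv z (U i)), hU0]
        simp
      rw [h2] at this
      exact this
    have hDn : Summable (fun k => lbN R (U (k + n + 1) - U (k + n))) :=
      (summable_nat_add_iff (f := fun k => lbN R (U (k + 1) - U k)) n).2 hD
    exact h1.norm_le_of_bounded hDn.hasSum (fun k => lbEv_le hz (U (k + n + 1) - U (k + n)))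
  have hvc : ContinuousOn v (Metric.closedBall 0 R) := by
    rw [hv]
    refine continuousOn_tsum (u := fun x : ℕ × ℕ => ‖a x‖ * R ^ (x.1 + x.2)) (fun x => ?_) ha ?_
    · exact (continuous_const.mul ((continuous_id.pow _).mul
        (Complex.continuous_conj.pow _))).continuousOn
    · intro x z hz
      rw [mem_closedBall_zero_iff] at hz
      rw [norm_mul, norm_mul, norm_pow, norm_pow, RCLike.norm_conj, ← pow_add]
      gcongr
  refine lb_analytic hR ha (f := u) (fun z hz => ?_)
  have hc : Continuous (fun θ => (fun z => u z - v z) (lbC ‖z‖ θ)) := by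
    refine (hu.comp (lbC_cont' _)).sub (hvc.comp_continuous (lbC_cont' _) fun θ => ?_)
    rw [mem_closedBall_zero_iff, lbC_norm (norm_nonneg _)]
    exact hz.le
  have hcn : ∀ n, Continuous (fun z => u z - lbEv z (U n)) := fun n => hu.sub (lbEv_cont _)
  have h' : ∀ k, lbM (fun z => u z - lbEv z (U k)) ‖z‖ ≤ X k := by
    intro k
    rcases (norm_nonneg z).eq_or_lt with h0 | h0
    · rw [← h0]; exact lbM_at_zero (hcn k) hR (h k)
    · exact h k _ h0 hz.le
  have key : ∀ n, lbM (fun z => u z - v z) ‖z‖ ≤ 2 * X n + 2 * e n ^ 2 := by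
    intro n
    have := lbM_mono (ι := Unit) (f := fun z => u z - v z)
      (g := fun _ z => u z - lbEv z (U n)) (c := 2) (e := 2 * e n ^ 2)
      (norm_nonneg z) hc (fun _ => hcn n) (fun y hy => by
        have h1 := hvU n y (hy.le.trans hz.le)
        have h2 : ‖u y - v y‖ ≤ ‖u y - lbEv y (U n)‖ + ‖v y - lbEv y (U n)‖ := by
          have := norm_sub_le (u y - lbEv y (U n)) (v y - lbEv y (U n))
          simpa using this
        have h3 : ‖u y - v y‖ ≤ ‖u y - lbEv y (U n)‖ + e n := h2.trans (by linarith)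
        have h4 := pow_le_pow_left₀ (norm_nonneg _) h3 2
        simp only [Finset.univ_unique, Finset.sum_const, Finset.card_singleton, one_smul]
        nlinarith [sq_nonneg (‖u y - lbEv y (U n)‖ - e n)])
    simp only [Finset.univ_unique, Finset.sum_const, Finset.card_singleton, one_smul] at this
    have := h' n
    linarith
  have hlim : Filter.Tendsto (fun n => 2 * X n + 2 * e n ^ 2) Filter.atTop (nhds 0) := by
    have := (hX.const_mul 2).add ((he0.pow 2).const_mul 2)
    simpa using this
  have h0 := ge_of_tendsto' hlim key
  have := lbM_eq_zero hc h0
  rw [sub_eq_zero.1 this, hv]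


/-- weights -/
noncomputable def lbc (n : ℕ) : ℝ := 1 / ((n : ℝ) + 1) ^ 2

lemma lbc_nonneg (n : ℕ) : 0 ≤ lbc n := by unfold lbc; positivity

lemma lbc_summable : Summable lbc := by
  have := (summable_nat_add_iff 1).2 (Real.summable_one_div_nat_pow.2 (by norm_num : 1 < 2))
  refine this.congr fun n => ?_
  simp [lbc]

lemma lbc_anti {m n : ℕ} (h : m ≤ n) : lbc n ≤ lbc m := by
  unfold lbc
  have : (m : ℝ) ≤ n := by exact_mod_cast h
  gcongr

lemma lb_bdd {u : ℂ → ℂ} (hu : Continuous u) : ∃ K, 0 ≤ K ∧ ∀ z, ‖z‖ ≤ 1 → ‖u z‖ ≤ K := by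
  obtain ⟨K, hK⟩ := (isCompact_closedBall (0 : ℂ) 1).exists_bound_of_continuousOn hu.continuousOn
  exact ⟨max K 0, le_max_right _ _, fun z hz =>
    (hK z (mem_closedBall_zero_iff.2 hz)).trans (le_max_left _ _)⟩

lemma lb_decay {u : ℂ → ℂ} (hu : ContDiff ℝ (⊤ : ℕ∞) u) : ∃ A, 0 ≤ A ∧
    ∀ R, 0 ≤ R → R ≤ 1 → ∀ n : ℕ, ‖lbF u R n‖ ≤ A * lbc n := by
  obtain ⟨K, hK0, hK⟩ := lb_bdd hu.continuous
  have hT := lbT_contDiff hu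
  obtain ⟨K', hK0', hK'⟩ := lb_bdd (lbT_contDiff hT).continuous
  refine ⟨K + 4 * K', by positivity, fun R hR hR1 n => ?_⟩
  have h1 := lbF_bound hR (fun z hz => hK z (hz.trans hR1)) n
  have h2 := lbF_bound hR (fun z hz => hK' z (hz.trans hR1)) n
  rw [lbF_rot (hT.of_le (by exact_mod_cast le_top)), lbF_rot (hu.of_le (by exact_mod_cast le_top))] at h2
  simp only [norm_mul, Complex.norm_I, one_mul] at h2
  have hn : ‖((n : ℤ) : ℂ)‖ = n := by simp
  rw [hn] at h2
  unfold lbc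
  rw [mul_one_div, le_div_iff₀ (by positivity)]
  rcases Nat.eq_zero_or_pos n with h0 | h0
  · subst h0; simp at h1 ⊢; linarith
  · have hn1 : (1 : ℝ) ≤ n := by exact_mod_cast h0
    have h3 : ((n : ℝ) + 1) ^ 2 ≤ 4 * ((n : ℝ) * n) := by nlinarith
    have h4 := mul_le_mul_of_nonneg_left h3 (norm_nonneg (lbF u R n))
    nlinarith [norm_nonneg (lbF u R n)]

/-- Picard iterates -/
noncomputable def lbU (P : (Fin 3 → LBP) → Fin 3 → LBP) (u : Fin 3 → ℂ → ℂ) (R : ℝ) :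
    ℕ → Fin 3 → LBP
  | 0 => 0
  | k + 1 => fun i => lbH R (u i) (k + 1) + lbS R (P (lbU P u R k) i)

lemma lb_main (P : (Fin 3 → LBP) → Fin 3 → LBP) (Q : (Fin 3 → ℂ) → Fin 3 → ℂ)
    (hPQ : ∀ z p i, lbEv z (P p i) = Q (fun j => lbEv z (p j)) i) (hP0 : P 0 = 0)
    (hPL : ∀ M, ∃ L, 0 ≤ L ∧ ∀ R, 0 ≤ R → ∀ p q : Fin 3 → LBP, (∀ i, lbN R (p i) ≤ M) →
      (∀ i, lbN R (q i) ≤ M) → ∀ i, lbN R (P p i - P q i) ≤ L * ∑ j, lbN R (p j - q j))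
    (u : Fin 3 → ℂ → ℂ) (hu : ∀ i, ContDiff ℝ (⊤ : ℕ∞) (u i)) {ρ : ℝ} (hρ : 0 < ρ)
    (hsys : ∀ z, ‖z‖ ≤ ρ → ∀ i, wirtingerZbar (u i) z = Q (fun j => u j z) i) :
    ∀ i, AnalyticAt ℝ (u i) 0 := by
  -- constants
  obtain ⟨A, hA0, hA⟩ : ∃ A, 0 ≤ A ∧ ∀ i, ∀ R, 0 ≤ R → R ≤ 1 → ∀ n : ℕ,
      ‖lbF (u i) R n‖ ≤ A * lbc n := by
    choose A hA0 hA using fun i => lb_decay (hu i)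
    refine ⟨∑ i, A i, Finset.sum_nonneg fun i _ => hA0 i, fun i R h1 h2 n => ?_⟩
    refine (hA i R h1 h2 n).trans (mul_le_mul_of_nonneg_right ?_ (lbc_nonneg n))
    exact Finset.single_le_sum (fun i _ => hA0 i) (Finset.mem_univ i)
  obtain ⟨K, hK0, hK⟩ : ∃ K, 0 ≤ K ∧ ∀ i z, ‖z‖ ≤ 1 → ‖u i z‖ ≤ K := by
    choose A hA0 hA using fun i => lb_bdd (hu i).continuous
    refine ⟨∑ i, A i, Finset.sum_nonneg fun i _ => hA0 i, fun i z h1 => ?_⟩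
    exact (hA i z h1).trans (Finset.single_le_sum (fun i _ => hA0 i) (Finset.mem_univ i))
  obtain ⟨C, hC⟩ : ∃ C, C = ∑' n, lbc n := ⟨_, rfl⟩
  have hC0 : 0 ≤ C := hC ▸ tsum_nonneg lbc_nonneg
  obtain ⟨M, hM⟩ : ∃ M, M = A * C + 1 + K := ⟨_, rfl⟩
  have hM0 : 0 ≤ M := by rw [hM]; positivity
  have hKM : K ≤ M := by rw [hM]; nlinarith [mul_nonneg hA0 hC0]
  obtain ⟨L, hL0, hL⟩ := hPL M
  obtain ⟨R, hR, hRρ, hR1, hRL⟩ : ∃ R, 0 < R ∧ R ≤ ρ ∧ R ≤ 1 ∧ R * L * (M + 1) ≤ 1 / 12 := by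
    refine ⟨min ρ (min 1 (1 / (12 * (L + 1) * (M + 1)))), ?_, min_le_left _ _,
      (min_le_right _ _).trans (min_le_left _ _), ?_⟩
    · refine lt_min hρ (lt_min one_pos (by positivity))
    · have h1 : min ρ (min 1 (1 / (12 * (L + 1) * (M + 1)))) ≤ 1 / (12 * (L + 1) * (M + 1)) :=
        (min_le_right _ _).trans (min_le_right _ _)
      calc _ ≤ 1 / (12 * (L + 1) * (M + 1)) * (L + 1) * (M + 1) := by gcongr; linarith
        _ = 1 / 12 := by field_simp
  have hRL0 : 0 ≤ R * L := by positivity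
  have hRL1 : R * L ≤ 1 / 12 := by nlinarith
  have hRLM : R * L * M ≤ 1 / 12 := by nlinarith
  have hcs : ∀ S : Finset ℕ, ∑ n ∈ S, lbc n ≤ C := fun S =>
    hC ▸ lbc_summable.sum_le_tsum S (fun n _ => lbc_nonneg n)
  obtain ⟨U, hU⟩ : ∃ U, U = lbU P u R := ⟨_, rfl⟩
  have hU0 : U 0 = 0 := by rw [hU]; rfl
  have hUs : ∀ k i, U (k + 1) i = lbH R (u i) (k + 1) + lbS R (P (U k) i) := by
    rw [hU]; intro k i; rfl
  -- bound
  have hUM : ∀ k i, lbN R (U k i) ≤ M := by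
    intro k
    induction k with
    | zero => intro i; rw [hU0]; simpa [lbN_zero] using hM0
    | succ k ih =>
      intro i
      rw [hUs]
      have h1 : lbN R (lbH R (u i) (k + 1)) ≤ A * C := by
        refine (lbN_H hR _ _).trans ?_
        calc _ ≤ ∑ n ∈ Finset.range (k + 1), A * lbc n :=
              Finset.sum_le_sum fun n _ => hA i R hR.le hR1 n
          _ ≤ A * C := by rw [← Finset.mul_sum]; gcongr; exact hcs _
      have h2 := hL R hR.le (U k) 0 ih (fun i => by simpa [lbN_zero] using hM0) i
      rw [hP0] at h2
      simp only [Pi.zero_apply, sub_zero] at h2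
      have h3 : ∑ j, lbN R (U k j) ≤ 3 * M := by
        refine (Finset.sum_le_sum fun j _ => ih j).trans ?_
        simp
      have h4 := lbN_S hR.le (P (U k) i)
      have h5 := lbN_add hR.le (lbH R (u i) (k + 1)) (lbS R (P (U k) i))
      have h6 : 2 * R * lbN R (P (U k) i) ≤ 2 * R * (L * (3 * M)) := by gcongr; exact h2.trans (by gcongr)
      nlinarith
  -- differences
  have hδ : Summable (fun k => ∑ i, lbN R (U (k + 1) i - U k i)) := by
    refine lb_seq_summable (ε := fun k => 3 * (A * lbc (k + 1))) (fun k => Finset.sum_nonneg fun i _ => lbN_nonneg hR.le _)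
      ?_ (fun k => by have := lbc_nonneg (k + 1); positivity) (fun k => ?_)
    · exact (((summable_nat_add_iff 1).2 lbc_summable).mul_left A).mul_left 3
    · have h1 : ∀ i, lbN R (U (k + 2) i - U (k + 1) i) ≤ A * lbc (k + 1) +
          2 * R * (L * ∑ j, lbN R (U (k + 1) j - U k j)) := by
        intro i
        have e : U (k + 2) i - U (k + 1) i =
            AddMonoidAlgebra.single (k + 1, 0) (lbF (u i) R ((k + 1 : ℕ) : ℤ) * ((R : ℂ) ^ (k + 1))⁻¹)
            + lbS R (P (U (k + 1)) i - P (U k) i) := by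
          rw [hUs (k + 1), hUs k, map_sub, ← lbH_succ]; abel
        rw [e]
        refine (lbN_add hR.le _ _).trans (add_le_add ?_ ?_)
        · rw [lbN_Hterm hR]; exact hA i R hR.le hR1 (k + 1)
        · refine (lbN_S hR.le _).trans ?_
          gcongr
          exact hL R hR.le _ _ (hUM _) (hUM _) i
      have h2 := Finset.sum_le_sum fun i (_ : i ∈ Finset.univ) => h1 i
      simp only [Finset.sum_const, Finset.card_univ, Fintype.card_fin, nsmul_eq_mul] at h2
      have h3 : 0 ≤ ∑ j, lbN R (U (k + 1) j - U k j) := Finset.sum_nonneg fun i _ => lbN_nonneg hR.le _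
      push_cast at h2
      nlinarith
  -- pointwise Lipschitz bound
  have hQ : ∀ a b : Fin 3 → ℂ, (∀ i, ‖a i‖ ≤ M) → (∀ i, ‖b i‖ ≤ M) → ∀ i,
      ‖Q a i - Q b i‖ ≤ L * ∑ j, ‖a j - b j‖ := by
    intro a b ha hb i
    have h1 := hL 1 zero_le_one (fun j => AddMonoidAlgebra.single (0, 0) (a j))
      (fun j => AddMonoidAlgebra.single (0, 0) (b j)) (fun i => by simpa [lbN_single] using ha i)
      (fun i => by simpa [lbN_single] using hb i) i
    have h2 := (lbEv_le (R := 1) (z := 0) (by simp) _).trans h1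
    rw [map_sub, hPQ, hPQ] at h2
    simp only [← AddMonoidAlgebra.single_sub, lbN_single, lbEv_single] at h2
    simpa using h2
  -- energy
  obtain ⟨X, hX0, hXs⟩ : ∃ X : ℕ → ℝ, X 0 = 3 * K ^ 2 ∧
      ∀ k, X (k + 1) = X k / 2 + 6 * (A ^ 2 * C * lbc k) :=
    ⟨fun n => Nat.rec (3 * K ^ 2) (fun k x => x / 2 + 6 * (A ^ 2 * C * lbc k)) n, rfl, fun k => rfl⟩
  have hXnn : ∀ k, 0 ≤ X k := by
    intro k
    induction k with
    | zero => rw [hX0]; positivity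
    | succ k ih => rw [hXs]; have := lbc_nonneg k; positivity
  have hXsum : Summable X := by
    refine lb_seq_summable (ε := fun k => 6 * (A ^ 2 * C * lbc k)) hXnn ?_ ?_ (fun k => (hXs k).le)
    · exact (lbc_summable.mul_left _).mul_left 6
    · intro k; have := lbc_nonneg k; positivity
  have hE : ∀ k r, 0 < r → r ≤ R → ∑ i, lbM (fun z => u i z - lbEv z (U k i)) r ≤ X k := by
    intro k
    induction k with
    | zero =>
      intro r hr hrR
      rw [hU0, hX0]
      have : ∀ i, lbM (fun z => u i z - lbEv z ((0 : Fin 3 → LBP) i)) r ≤ K ^ 2 := by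
        intro i
        refine lbM_le_const ((hu i).continuous.sub (lbEv_cont _)) hr.le (fun z hz => ?_)
        have := hK i z (hz.trans (hrR.trans hR1))
        change ‖u i z - lbEv z 0‖ ^ 2 ≤ K ^ 2
        rw [map_zero, sub_zero]
        gcongr
      refine (Finset.sum_le_sum fun i _ => this i).trans ?_
      simp
    | succ k ih =>
      intro r hr hrR
      have hd : ∀ k i, Continuous (fun z => u i z - lbEv z (U k i)) := fun k i =>
        (hu i).continuous.sub (lbEv_cont _)
      have h1 : ∀ i, lbM (fun z => u i z - lbEv z (U (k + 1) i)) r ≤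
          8 * R ^ 2 * (3 * L ^ 2 * X k) + 2 * (A ^ 2 * C * lbc k) := by
        intro i
        have hcd : ContDiff ℝ 1 (fun z => u i z - lbEv z (U (k + 1) i)) :=
          ((hu i).sub (lbEv_contDiff _)).of_le (by exact_mod_cast le_top)
        refine lb_energy hcd hR ?_ ?_ hr hrR
        · intro s hs hsR
          have h2 := lbM_mono (f := wirtingerZbar (fun z => u i z - lbEv z (U (k + 1) i)))
            (g := fun j z => u j z - lbEv z (U k j)) (r := s) (c := 3 * L ^ 2) (e := 0) hs.le
            ((wirtingerZbar_cont hcd).comp (lbC_cont' s)) (hd k) (fun z hz => by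
              have hdb : wirtingerZbar (fun z => lbEv z (U (k + 1) i)) z =
                  Q (fun j => lbEv z (U k j)) i := by
                rw [hUs]
                simp only [map_add]
                rw [wirtingerZbar_add (lbEv_diff _ _) (lbEv_diff _ _), lb_dbar_H, lb_dbar_S, hPQ,
                  zero_add]
              rw [wirtingerZbar_sub ((hu i).differentiable (by simp) z) (lbEv_diff _ _), hdb,
                hsys z (hz.le.trans (hsR.trans hRρ)) i]
              have h3 := hQ (fun j => u j z) (fun j => lbEv z (U k j))
                (fun j => (hK j z (hz.le.trans (hsR.trans hR1))).trans hKM)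
                (fun j => (lbEv_le (hz.le.trans hsR) _).trans (hUM k j)) i
              have h4 := pow_le_pow_left₀ (norm_nonneg _) h3 2
              have h5 : (∑ j, ‖u j z - lbEv z (U k j)‖) ^ 2 ≤
                  3 * ∑ j, ‖u j z - lbEv z (U k j)‖ ^ 2 := by
                have := sq_sum_le_card_mul_sum_sq (s := (Finset.univ : Finset (Fin 3)))
                  (f := fun j => ‖u j z - lbEv z (U k j)‖)
                simpa using this
              rw [mul_pow] at h4
              have := mul_le_mul_of_nonneg_left h5 (sq_nonneg L)
              linarith)
          refine h2.trans ?_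
          rw [add_zero]
          gcongr
          exact ih s hs hsR
        · intro S
          have h3 : ∀ n : ℤ, (if 0 ≤ n then
              ‖lbF (fun z => u i z - lbEv z (U (k + 1) i)) R n‖ ^ 2 else 0) ≤
              if 0 ≤ n then A ^ 2 * lbc k * lbc n.toNat else 0 := by
            intro n
            split_ifs with hn
            · obtain ⟨m, rfl⟩ := Int.eq_ofNat_of_zero_le hn
              have h4 : lbF (fun z => lbEv z (U (k + 1) i)) R (m : ℤ) =
                  if m < k + 1 then lbF (u i) R m else 0 := by
                rw [hUs]
                simp only [map_add]
                rw [lbF_add (lbEv_cont _) (lbEv_cont _), lbF_S _ hn, lbF_H hR, add_zero]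
              rw [lbF_sub (hu i).continuous (lbEv_cont _), h4]
              have hp := mul_nonneg (mul_nonneg (sq_nonneg A) (lbc_nonneg k)) (lbc_nonneg m)
              simp only [Int.toNat_natCast]
              split_ifs with hm
              · simpa using hp
              · rw [sub_zero]
                have h5 := pow_le_pow_left₀ (norm_nonneg _) (hA i R hR.le hR1 m) 2
                have h6 := lbc_anti (show k ≤ m by lia)
                have h7 := mul_le_mul_of_nonneg_left h6 (mul_nonneg (sq_nonneg A) (lbc_nonneg m))
                refine h5.trans ?_
                nlinarith
            · exact le_rfl
          refine (Finset.sum_le_sum fun n _ => h3 n).trans ?_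
          rw [← Finset.sum_filter]
          have h8 : ∑ n ∈ S.filter (fun n => 0 ≤ n), lbc n.toNat ≤ C := by
            have hinj : Set.InjOn Int.toNat (S.filter (fun n : ℤ => 0 ≤ n) : Set ℤ) := by
              intro a ha b hb hab
              simp at ha hb
              lia
            rw [← Finset.sum_image (f := lbc) hinj]
            exact hcs _
          rw [← Finset.mul_sum]
          have := mul_le_mul_of_nonneg_left h8 (mul_nonneg (sq_nonneg A) (lbc_nonneg k))
          linarith
      refine (Finset.sum_le_sum fun i _ => h1 i).trans ?_
      simp only [Finset.sum_const, Finset.card_univ, Fintype.card_fin, nsmul_eq_mul]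
      rw [hXs]
      have h9 : (R * L) ^ 2 ≤ (1 / 12) ^ 2 := pow_le_pow_left₀ hRL0 hRL1 2
      have h10 := mul_le_mul_of_nonneg_right h9 (hXnn k)
      push_cast
      nlinarith
  intro i
  refine lb_identify hR (hu i).continuous (fun k => U k i) (by rw [hU0]; rfl) ?_
    hXsum.tendsto_atTop_zero (fun k r hr hrR => ?_)
  · refine Summable.of_nonneg_of_le (fun k => lbN_nonneg hR.le _) (fun k => ?_) hδ
    exact Finset.single_le_sum (f := fun i => lbN R (U (k + 1) i - U k i))
      (fun i _ => lbN_nonneg hR.le _) (Finset.mem_univ i)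
  · refine le_trans ?_ (hE k r hr hrR)
    exact Finset.single_le_sum (f := fun i => lbM (fun z => u i z - lbEv z (U k i)) r)
      (fun i _ => lbM_nonneg _ _) (Finset.mem_univ i)


/-- polynomial right-hand side -/
noncomputable def lbPP (p : Fin 3 → LBP) : Fin 3 → LBP :=
  ![lbSt (p 1), p 2 + lbSt (p 0) * p 1, lbSt (p 0) * p 2 + lbSt (p 0) * p 2]

/-- right-hand side -/
noncomputable def lbQQ (a : Fin 3 → ℂ) : Fin 3 → ℂ :=
  ![starRingEnd ℂ (a 1), a 2 + starRingEnd ℂ (a 0) * a 1,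
    starRingEnd ℂ (a 0) * a 2 + starRingEnd ℂ (a 0) * a 2]

lemma lb_bil {R M : ℝ} (hR : 0 ≤ R) {a b a' b' : LBP} (hb : lbN R b ≤ M) (ha' : lbN R a' ≤ M) :
    lbN R (lbSt a * b - lbSt a' * b') ≤ M * (lbN R (a - a') + lbN R (b - b')) := by
  have e : lbSt a * b - lbSt a' * b' = lbSt (a - a') * b + lbSt a' * (b - b') := by
    rw [map_sub]; ring
  rw [e]
  refine (lbN_add hR _ _).trans ?_
  have h1 : lbN R (lbSt (a - a') * b) ≤ lbN R (a - a') * M :=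
    (lbN_mul hR _ _).trans (mul_le_mul (lbN_st hR _) hb (lbN_nonneg hR _) (lbN_nonneg hR _))
  have h2 : lbN R (lbSt a' * (b - b')) ≤ M * lbN R (b - b') :=
    (lbN_mul hR _ _).trans (mul_le_mul_of_nonneg_right ((lbN_st hR _).trans ha') (lbN_nonneg hR _))
  linarith

lemma lbPP_lip (M : ℝ) : ∃ L, 0 ≤ L ∧ ∀ R, 0 ≤ R → ∀ p q : Fin 3 → LBP, (∀ i, lbN R (p i) ≤ M) →
      (∀ i, lbN R (q i) ≤ M) → ∀ i, lbN R (lbPP p i - lbPP q i) ≤ L * ∑ j, lbN R (p j - q j) := by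
  refine ⟨2 * |M| + 1, by positivity, fun R hR p q hp hq i => ?_⟩
  have hM : 0 ≤ M := (lbN_nonneg hR _).trans (hp 0)
  rw [abs_of_nonneg hM, Fin.sum_univ_three]
  have h0 := lbN_nonneg hR (p 0 - q 0)
  have h1 := lbN_nonneg hR (p 1 - q 1)
  have h2 := lbN_nonneg hR (p 2 - q 2)
  have m0 := mul_nonneg hM h0
  have m1 := mul_nonneg hM h1
  have m2 := mul_nonneg hM h2
  have b1 := lb_bil hR (a := p 0) (b' := q 1) (hp 1) (hq 0)
  have b2 := lb_bil hR (a := p 0) (b' := q 2) (hp 2) (hq 0)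
  fin_cases i
  · have := lbN_st hR (p 1 - q 1)
    rw [map_sub] at this
    simp [lbPP]
    nlinarith
  · have := lbN_add hR (p 2 - q 2) (lbSt (p 0) * p 1 - lbSt (q 0) * q 1)
    have e : p 2 + lbSt (p 0) * p 1 - (q 2 + lbSt (q 0) * q 1) =
      (p 2 - q 2) + (lbSt (p 0) * p 1 - lbSt (q 0) * q 1) := by ring
    simp [lbPP]
    rw [e]
    nlinarith
  · have := lbN_add hR (lbSt (p 0) * p 2 - lbSt (q 0) * q 2) (lbSt (p 0) * p 2 - lbSt (q 0) * q 2)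
    have e : lbSt (p 0) * p 2 + lbSt (p 0) * p 2 - (lbSt (q 0) * q 2 + lbSt (q 0) * q 2) =
      (lbSt (p 0) * p 2 - lbSt (q 0) * q 2) + (lbSt (p 0) * p 2 - lbSt (q 0) * q 2) := by ring
    simp [lbPP]
    rw [e]
    nlinarith

lemma wirtingerZ_contDiff {f : ℂ → ℂ} (hf : ContDiff ℝ (⊤ : ℕ∞) f) :
    ContDiff ℝ (⊤ : ℕ∞) (wirtingerZ f) := by
  have h : ContDiff ℝ (⊤ : ℕ∞) (fderiv ℝ f) := hf.fderiv_right (by simp)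
  unfold wirtingerZ
  exact contDiff_const.mul ((h.clm_apply contDiff_const).sub
    (contDiff_const.mul (h.clm_apply contDiff_const)))

lemma wirtingerZbar_contDiff {f : ℂ → ℂ} (hf : ContDiff ℝ (⊤ : ℕ∞) f) :
    ContDiff ℝ (⊤ : ℕ∞) (wirtingerZbar f) := by
  have h : ContDiff ℝ (⊤ : ℕ∞) (fderiv ℝ f) := hf.fderiv_right (by simp)
  unfold wirtingerZbar
  exact contDiff_const.mul ((h.clm_apply contDiff_const).add
    (contDiff_const.mul (h.clm_apply contDiff_const)))

lemma wirtingerZbar_mul {f g : ℂ → ℂ} {z : ℂ} (hf : DifferentiableAt ℝ f z)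
    (hg : DifferentiableAt ℝ g z) :
    wirtingerZbar (fun z => f z * g z) z = wirtingerZbar f z * g z + f z * wirtingerZbar g z := by
  unfold wirtingerZbar
  rw [fderiv_fun_mul hf hg]
  simp only [add_apply, smul_apply, smul_eq_mul]
  ring

lemma wirtingerZbar_conj {f : ℂ → ℂ} {z : ℂ} (hf : DifferentiableAt ℝ f z) :
    wirtingerZbar (fun z => starRingEnd ℂ (f z)) z = starRingEnd ℂ (wirtingerZ f z) := by
  have h : HasFDerivAt (𝕜 := ℝ) (fun z => starRingEnd ℂ (f z))
      ((Complex.conjCLE : ℂ →L[ℝ] ℂ).comp (fderiv ℝ f z)) z :=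
    (Complex.conjCLE : ℂ →L[ℝ] ℂ).hasFDerivAt.comp z hf.hasFDerivAt
  unfold wirtingerZbar wirtingerZ
  rw [h.fderiv]
  simp
  left
  exact (Complex.conj_ofNat 2).symm

lemma wirtingerZ_congr {f g : ℂ → ℂ} {z : ℂ} (h : f =ᶠ[nhds z] g) :
    wirtingerZ f =ᶠ[nhds z] wirtingerZ g := by
  filter_upwards [h.fderiv (𝕜 := ℝ)] with y hy
  unfold wirtingerZ; rw [hy]

lemma wirtingerZbar_congr {f g : ℂ → ℂ} {z : ℂ} (h : f =ᶠ[nhds z] g) :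
    wirtingerZbar f =ᶠ[nhds z] wirtingerZbar g := by
  filter_upwards [h.fderiv (𝕜 := ℝ)] with y hy
  unfold wirtingerZbar; rw [hy]

lemma wirtingerZ_trans (f : ℂ → ℂ) (c : ℂ) :
    wirtingerZ (fun z => f (c + z)) = fun z => wirtingerZ f (c + z) := by
  ext z; unfold wirtingerZ; rw [fderiv_comp_add_left]

lemma wirtingerZbar_trans (f : ℂ → ℂ) (c : ℂ) :
    wirtingerZbar (fun z => f (c + z)) = fun z => wirtingerZbar f (c + z) := by
  ext z; unfold wirtingerZbar; rw [fderiv_comp_add_left]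

/-- the theorem for global smooth functions solving the equation near the origin -/
lemma lb_global {g : ℂ → ℂ} (hg : ContDiff ℝ (⊤ : ℕ∞) g) {ρ : ℝ} (hρ : 0 < ρ)
    (h : ∀ z, ‖z‖ ≤ ρ → wirtingerZbar (wirtingerZbar (wirtingerZ g)) z
        - 3 * wirtingerZbar (wirtingerZ g) z * g z
        + 2 * wirtingerZ g z * (g z) ^ 2
        - wirtingerZ g z * wirtingerZbar g z = 0) : AnalyticAt ℝ g 0 := by
  have hw := wirtingerZ_contDiff hg
  have hw' := wirtingerZbar_contDiff hw
  have hm : ContDiff ℝ (⊤ : ℕ∞) (fun z => starRingEnd ℂ (g z)) := Complex.conjCLE.contDiff.comp hg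
  have hgd : Differentiable ℝ g := hg.differentiable (by simp)
  have hwd : Differentiable ℝ (wirtingerZ g) := hw.differentiable (by simp)
  have hwd' : Differentiable ℝ (wirtingerZbar (wirtingerZ g)) := hw'.differentiable (by simp)
  have := lb_main lbPP lbQQ (fun z p i => by
      fin_cases i <;> simp [lbPP, lbQQ, lbEv_mul, lbEv_st])
    (by ext1 i; fin_cases i <;> simp [lbPP]) lbPP_lip
    ![fun z => starRingEnd ℂ (g z), wirtingerZ g,
      fun z => wirtingerZbar (wirtingerZ g) z - g z * wirtingerZ g z]
    (fun i => by
      fin_cases i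
      · exact hm
      · exact hw
      · exact hw'.sub (hg.mul hw)) hρ (fun z hz i => by
      fin_cases i
      · simp [lbQQ]
        exact wirtingerZbar_conj (hgd z)
      · simp [lbQQ]
      · simp [lbQQ]
        rw [wirtingerZbar_sub (hwd' z) ((hgd z).fun_mul (hwd z)), wirtingerZbar_mul (hgd z) (hwd z)]
        linear_combination h z hz) 0
  have h2 : AnalyticAt ℝ (fun z => starRingEnd ℂ (starRingEnd ℂ (g z))) 0 :=
    (Complex.conjCLE : ℂ →L[ℝ] ℂ).analyticAt _ |>.comp this
  simpa using h2

theorem loboda_solution_is_real_analytic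
    (U : Set ℂ) (hU : IsOpen U)
    (μ : ℂ → ℂ) (hμ : ContDiffOn ℝ (⊤ : ℕ∞) μ U)
    (heq : ∀ z ∈ U,
      wirtingerZbar (wirtingerZbar (wirtingerZ μ)) z
        - 3 * wirtingerZbar (wirtingerZ μ) z * μ z
        + 2 * wirtingerZ μ z * (μ z) ^ 2
        - wirtingerZ μ z * wirtingerZbar μ z = 0) :
    AnalyticOnNhd ℝ μ U := by
  intro z₀ hz₀
  obtain ⟨ε, hε, hεU⟩ := Metric.isOpen_iff.1 hU z₀ hz₀
  have hin : ∀ z : ℂ, ‖z‖ < ε → z₀ + z ∈ U := fun z hz => hεU (by simpa [Metric.mem_ball] using hz)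
  let φ : ContDiffBump (0 : ℂ) := ⟨ε / 4, ε / 2, by positivity, by linarith⟩
  set g : ℂ → ℂ := fun z => (φ z : ℂ) * μ (z₀ + z) with hgdef
  have hφ : ContDiff ℝ (⊤ : ℕ∞) (fun z => (φ z : ℂ)) :=
    Complex.ofRealCLM.contDiff.comp φ.contDiff
  have hg : ContDiff ℝ (⊤ : ℕ∞) g := by
    refine contDiff_iff_contDiffAt.2 fun z => ?_
    by_cases hz : z ∈ tsupport g
    swap
    · exact contDiffAt_const.congr_of_eventuallyEq (notMem_tsupport_iff_eventuallyEq.1 hz)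
    have hz1 : z ∈ tsupport (fun z => (φ z : ℂ)) := tsupport_mul_subset_left hz
    have hz2 : z ∈ tsupport φ := closure_mono (fun y hy => by
      simp only [Function.mem_support] at hy ⊢
      exact_mod_cast hy) hz1
    rw [φ.tsupport_eq, mem_closedBall_zero_iff] at hz2
    have hz3 : ‖z‖ ≤ ε / 2 := hz2
    have hzU : z₀ + z ∈ U := hin z (by linarith)
    refine hφ.contDiffAt.mul ?_
    exact (hμ.contDiffAt (hU.mem_nhds hzU)).comp z (contDiff_const.add contDiff_id).contDiffAt
  have hgμ : ∀ z, ‖z‖ < ε / 4 → g =ᶠ[nhds z] fun z => μ (z₀ + z) := by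
    intro z hz
    have : Metric.ball (0 : ℂ) (ε / 4) ∈ nhds z := Metric.isOpen_ball.mem_nhds (by simpa using hz)
    filter_upwards [this] with y hy
    have : φ y = 1 := φ.one_of_mem_closedBall (Metric.ball_subset_closedBall hy)
    simp [hgdef, this]
  have hga : AnalyticAt ℝ g 0 := by
    refine lb_global hg (ρ := ε / 8) (by positivity) (fun z hz => ?_)
    have e0 := hgμ z (by linarith)
    have e1 := wirtingerZ_congr e0
    have e2 := wirtingerZbar_congr e1
    have e3 := wirtingerZbar_congr e2
    have e4 := wirtingerZbar_congr e0
    rw [e0.eq_of_nhds, e1.eq_of_nhds, e2.eq_of_nhds, e3.eq_of_nhds, e4.eq_of_nhds]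
    simp only [wirtingerZ_trans, wirtingerZbar_trans]
    exact heq _ (hin z (by linarith))
  have h1 : AnalyticAt ℝ (fun z => μ (z₀ + z)) 0 := hga.congr (hgμ 0 (by simpa using hε))
  have h2 : AnalyticAt ℝ (fun z : ℂ => z - z₀) z₀ := analyticAt_id.sub analyticAt_const
  have h3 : AnalyticAt ℝ (fun z => μ (z₀ + (z - z₀))) z₀ :=
    AnalyticAt.fun_comp (g := fun z => μ (z₀ + z)) (by simpa using h1) h2
  simpa using h3
end
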